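/- For general lines L_1,…,L_6 in P^3 (i.e., there exists a nonzero polynomial P in the 48 coordinates of spanning vectors a_1,b_1,…,a_6,b_6 ∈ ℂ^4 such that whenever P does not vanish, each pair a_i,b_i is linearly independent, the subspaces L_i = span{a_i,b_i} pairwise intersect only in 0, and the following holds): writing I^{(m)} = ⋂_{i=1}^6 I(L_i)^m and α(J) for the least degree d such that the ideal J contains a nonzero homogeneous polynomial of degree d, the Waldschmidt constant satisfies inf_{m ≥ 1} α(I^{(m)})/m = 72/19. -/

import Mathlib

section Frozen
open MvPolynomial

noncomputable section

abbrev C4 : Type := Fin 4 → ℂ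
abbrev R3 : Type := MvPolynomial (Fin 4) ℂ

/-- The homogeneous ideal of the line in `P^3` corresponding to a linear subspace
`L ⊆ ℂ^4`: all polynomials vanishing identically on `L`. -/
def lineIdeal (L : Submodule ℂ C4) : Ideal R3 where
  carrier := {F | ∀ v ∈ L, eval v F = 0}
  add_mem' := by
    intro a b ha hb v hv
    simp [ha v hv, hb v hv]
  zero_mem' := by
    intro v hv
    simp
  smul_mem' := by
    intro c F hF v hv
    simp [smul_eq_mul, hF v hv]

/-- The initial degree `α(J)` of an ideal `J`: the least `d` such that `J`
contains a nonzero homogeneous polynomial of degree `d`. -/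
def alphaDeg (J : Ideal R3) : ℕ :=
  sInf {d | ∃ F ∈ J, F ≠ 0 ∧ MvPolynomial.IsHomogeneous F d}

/-- A property `Q` holds for `s` *general* lines in `P^3`: there is a nonzero
polynomial `P` in the `8s` coordinates of spanning vectors such that whenever
`P` does not vanish, each pair of vectors is linearly independent, the spanned
planes are pairwise disjoint, and `Q` holds for these lines. -/
def GeneralLines (s : ℕ) (Q : (Fin s → Submodule ℂ C4) → Prop) : Prop :=
  ∃ P : MvPolynomial (Fin s × Fin 2 × Fin 4) ℂ, P ≠ 0 ∧
    ∀ v : Fin s → Fin 2 → C4,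
      MvPolynomial.eval (fun p => v p.1 p.2.1 p.2.2) P ≠ 0 →
      (∀ i, LinearIndependent ℂ ![v i 0, v i 1]) ∧
      (∀ i j, i ≠ j →
        Submodule.span ℂ {v i 0, v i 1} ⊓ Submodule.span ℂ {v j 0, v j 1} = ⊥) ∧
      Q (fun i => Submodule.span ℂ {v i 0, v i 1})

end
end Frozen

/-- Kronecker packing of a coefficient list. -/
def pk : List ℕ → ℕ
| [] => 0
| a::l => a + 1048576 * pk l
def dotP : List (List ℕ) → List (List ℕ) → ℕ
| l::ls, m::ms => pk l * pk m + dotP ls ms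
| _, _ => 0
def sm : List ℕ → ℕ
| [] => 0
| a::l => a + sm l
def dotS : List (List ℕ) → List (List ℕ) → ℕ
| l::ls, m::ms => sm l * sm m + dotS ls ms
| _, _ => 0
/-- The base `2^20` digits of `s` are congruent mod 31 to the given list. -/
def dgU : ℕ → ℕ → List ℕ → Bool
| 0, s, [] => Nat.beq s 0
| 0, _, _::_ => false
| n+1, s, [] => Nat.beq (s % 1048576 % 31) 0 && dgU n (s / 1048576) []
| n+1, s, a::l => Nat.beq (s % 1048576 % 31) a && dgU n (s / 1048576) l
/-- Check that a sum of products of coefficient lists is a given list modulo 31. -/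
def chkI (ls ms : List (List ℕ)) (u : List ℕ) : Bool :=
  Nat.blt (dotS ls ms) 1048576 && dgU 60 (dotP ls ms) u

section packing
open Polynomial

noncomputable def polyN : List ℕ → ℕ[X]
| [] => 0
| a::l => C a + X * polyN l
noncomputable def toP (l : List ℕ) : (ZMod 31)[X] := (polyN l).map (Nat.castRingHom (ZMod 31))
noncomputable def dotN : List (List ℕ) → List (List ℕ) → ℕ[X]
| l::ls, m::ms => polyN l * polyN m + dotN ls ms
| _, _ => 0
noncomputable def dotK : List (List ℕ) → List (List ℕ) → (ZMod 31)[X]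
| l::ls, m::ms => toP l * toP m + dotK ls ms
| _, _ => 0

theorem toP_cons (a : ℕ) (l : List ℕ) : toP (a :: l) = C (a : ZMod 31) + X * toP l := by
  simp [toP, polyN]
theorem toP_nil : toP [] = 0 := by simp [toP, polyN]

theorem coeff_toP (l : List ℕ) (n : ℕ) : (toP l).coeff n = (l.getD n 0 : ℕ) := by
  induction l generalizing n with
  | nil => simp [toP_nil]
  | cons a l ih => cases n <;> simp [toP_cons, ih]

theorem eval_pk (l : List ℕ) : (polyN l).eval 1048576 = pk l := by
  induction l with
  | nil => simp [polyN, pk]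
  | cons a l ih => simp [polyN, pk, ih]
theorem eval_sm (l : List ℕ) : (polyN l).eval 1 = sm l := by
  induction l with
  | nil => simp [polyN, sm]
  | cons a l ih => simp [polyN, sm, ih]
theorem eval_dotP : ∀ ls ms : List (List ℕ), (dotN ls ms).eval 1048576 = dotP ls ms
  | l::ls, m::ms => by simp [dotN, dotP, eval_pk, eval_dotP ls ms]
  | [], _ => by simp [dotN, dotP]
  | _::_, [] => by simp [dotN, dotP]
theorem eval_dotS : ∀ ls ms : List (List ℕ), (dotN ls ms).eval 1 = dotS ls ms
  | l::ls, m::ms => by simp [dotN, dotS, eval_sm, eval_dotS ls ms]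
  | [], _ => by simp [dotN, dotS]
  | _::_, [] => by simp [dotN, dotS]
theorem map_dotN : ∀ ls ms : List (List ℕ),
    (dotN ls ms).map (Nat.castRingHom (ZMod 31)) = dotK ls ms
  | l::ls, m::ms => by simp [dotN, dotK, toP, map_dotN ls ms]
  | [], _ => by simp [dotN, dotK]
  | _::_, [] => by simp [dotN, dotK]

theorem coeff_le_eval_one (F : ℕ[X]) (k : ℕ) : F.coeff k ≤ F.eval 1 := by
  rw [eval_eq_sum, Polynomial.sum]
  by_cases hk : k ∈ F.support
  · simpa using Finset.single_le_sum (f := fun i => F.coeff i) (fun _ _ => Nat.zero_le _) hk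
  · simp [notMem_support_iff.1 hk]

theorem eval_split (F : ℕ[X]) (b : ℕ) : F.eval b = F.coeff 0 + b * F.divX.eval b := by
  conv_lhs => rw [← divX_mul_X_add F]
  simp; ring

theorem dgU_sound : ∀ (n : ℕ) (F : ℕ[X]) (u : List ℕ), (∀ k, F.coeff k < 1048576) →
    dgU n (F.eval 1048576) u = true → F.map (Nat.castRingHom (ZMod 31)) = toP u
  | 0, F, [], hF, h => by
    have h0 : F.eval 1048576 = 0 := by simpa [dgU] using h
    have : F = 0 := by
      ext k
      rw [eval_eq_sum, Polynomial.sum, Finset.sum_eq_zero_iff] at h0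
      by_cases hk : k ∈ F.support
      · simpa using h0 k hk
      · simpa using hk
    simp [this, toP_nil]
  | 0, F, _::_, hF, h => by simp [dgU] at h
  | n+1, F, u, hF, h => by
    have e1 : F.eval 1048576 % 1048576 = F.coeff 0 := by
      rw [eval_split, Nat.add_mul_mod_self_left, Nat.mod_eq_of_lt (hF 0)]
    have e2 : F.eval 1048576 / 1048576 = F.divX.eval 1048576 := by
      rw [eval_split, Nat.add_mul_div_left _ _ (by norm_num), Nat.div_eq_of_lt (hF 0), zero_add]
    have key : ∀ a l, Nat.beq (F.coeff 0 % 31) a = true → 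
        dgU n (F.divX.eval 1048576) l = true → F.map (Nat.castRingHom (ZMod 31)) = toP (a::l) := by
      intro a l ha hl
      have h1 := dgU_sound n F.divX l (fun k => by rw [coeff_divX]; exact hF _) hl
      conv_lhs => rw [← divX_mul_X_add F]
      rw [Polynomial.map_add, Polynomial.map_mul, h1, toP_cons, ← Nat.eq_of_beq_eq_true ha]
      simp; ring
    cases u with
    | nil => 
      simp only [dgU, e1, e2, Bool.and_eq_true] at h
      have := key 0 [] h.1 h.2
      simpa [toP_cons, toP_nil] using this
    | cons a l =>
      simp only [dgU, e1, e2, Bool.and_eq_true] at h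
      exact key a l h.1 h.2

theorem chkI_sound {ls ms : List (List ℕ)} {u : List ℕ} (h : chkI ls ms u = true) :
    dotK ls ms = toP u := by
  simp only [chkI, Bool.and_eq_true] at h
  have h1 : dotS ls ms < 1048576 := by simpa using h.1
  rw [← map_dotN]
  refine dgU_sound 60 _ _ (fun k => ?_) ?_
  · exact lt_of_le_of_lt (coeff_le_eval_one _ _) (by rw [eval_dotS]; exact h1)
  · rw [eval_dotP]; exact h.2
end packing

/-- Negatives of the six contact polynomials modulo 31. -/
def hnD : List (List ℕ) := [[18,25,2,18,12,14,11,14,14,27,15,11,30],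
  [17,25,7,6,27,10,10,14,0,9,8,8,30],
  [18,3,18,18,5,5,6,2,9,15,27,25,30],
  [12,1,22,13,22,19,10,16,9,12,24,29,30],
  [28,29,8,3,25,17,10,7,24,4,28,18,30],
  [18,19,14,9,4,19,6,17,16,27,4,7,30]]
/-- The six contact polynomials modulo 31. -/
def hD : List (List ℕ) := [[13,6,29,13,19,17,20,17,17,4,16,20,1],
  [14,6,24,25,4,21,21,17,0,22,23,23,1],
  [13,28,13,13,26,26,25,29,22,16,4,6,1],
  [19,30,9,18,9,12,21,15,22,19,7,2,1],
  [3,2,23,28,6,14,21,24,7,27,3,13,1],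
  [13,12,17,22,27,12,25,14,15,4,27,24,1]]
/-- The reference curve modulo 31. -/
def gD : List (List ℕ) := [[2,7,26,3,16,21,20,3,14,22,6,23,19,28,13,20,21,0,6,1],
  [14,10,24,18,19,29,2,2,2,30,22,2,27,29,17,22,19,28,30,23],
  [9,21,14,16,8,11,30,6,4,6,2,21,12,23,27,9,28,30,3,21],
  [27,20,2,9,14,16,28,23,6,23,9,0,4,16,10,28,20,14,23,10]]
/-- The reference lines modulo 31. -/
def mD : List (List (List ℕ)) := [[[28,9], [2,10]],
  [[9,20], [2,1]],
  [[18,14], [15,26]],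
  [[3,27], [22,26]],
  [[9,9], [19,15]],
  [[7,23], [8,8]]]
/-- Cofactors of the contact polynomials. -/
def eD : List (List (List ℕ)) := [[[30,26,27,6,14,25,29,9], [9,23,26,15,15,10,2,19]],
  [[4,16,7,10,8,17,20,28], [18,14,13,2,1,4,12,29]],
  [[8,18,17,21,1,25,9,30], [22,22,5,14,14,10,12,18]],
  [[28,16,7,29,24,27,22,8], [30,10,8,9,18,24,1,5]],
  [[22,1,29,22,9,13,6,9], [26,1,16,15,19,17,23,28]],
  [[22,0,27,17,10,3,19,16], [9,20,26,0,20,8,2,20]]]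
/-- Bezout coefficients for the cofactors. -/
def fD : List (List (List ℕ)) := [[[16,3,22,21,0,4,0], [26,22,28,30,5,3,0]],
  [[17,21,28,6,6,14,12], [29,30,0,26,19,22,13]],
  [[2,19,25,5,13,20,4], [12,2,17,22,2,7,14]],
  [[23,25,6,17,11,11,7], [23,27,5,27,14,27,26]],
  [[7,0,8,30,23,27,27], [12,10,17,25,16,12,19]],
  [[11,15,21,30,3,22,17], [18,6,26,20,12,20,5]]]
/-- Bezout coefficients for the first two coordinates. -/
def bD : List (List ℕ) := [[11,24,10,27,21,22,27,7,10,24,26,21,11,29,7,9,8,0,20],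
  [14,1,30,16,8,25,15,20,15,17,21,6,26,30,17,2,13,5,18]]
/-- Multipliers of the tangent map at the reference curve modulo 31. -/
def cfD : List (List (List ℕ)) := [[[18,24,11,6,16,7,19,14], [3,28,1,30,17,13,7,21], [9,23,26,15,15,10,2,19], [1,5,4,25,17,6,2,22]],
  [[11,8,23,27,27,25,13,20], [30,19,12,6,6,9,27,1], [18,14,13,2,1,4,12,29], [27,15,24,21,23,14,11,3]],
  [[26,11,24,11,10,15,3,3], [2,14,26,26,2,4,23,14], [22,22,5,14,14,10,12,18], [23,13,14,10,30,6,22,1]],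
  [[15,30,10,12,5,6,2,15], [6,10,6,29,11,19,23,5], [30,10,8,9,18,24,1,5], [3,15,24,2,7,4,9,23]],
  [[26,0,24,1,3,26,2,15], [22,27,7,14,22,27,25,6], [26,1,16,15,19,17,23,28], [9,30,2,9,22,18,25,22]],
  [[9,15,5,19,28,13,20,11], [11,26,8,12,13,22,12,30], [9,20,26,0,20,8,2,20], [9,0,4,14,21,28,12,15]]]
/-- Right inverse of the tangent map modulo 31. -/
def rD : List (List (List ℕ)) := [[[0,20,7,16,17,12,10,29,26,2,11,25,4,14,11,11,26,12,22,0], [0,7,17,20,23,10,22,2,6,4,14,15,25,30,13,17,11,28,26,21], [0,3,19,16,17,2,5,24,7,4,19,27,28,5,23,15,23,21,8,24], [0,16,29,27,30,25,5,4,26,0,19,14,5,25,29,4,13,0,0,0]],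
  [[0,21,28,26,0,2,3,16,21,4,17,21,19,25,15,13,28,1,21,0], [0,30,17,19,19,21,30,21,6,6,7,8,2,20,14,10,26,17,1,4], [0,18,12,19,15,2,1,30,17,15,5,7,16,30,23,17,3,9,18,18], [0,28,3,20,26,19,18,0,13,28,20,10,19,10,3,22,13,0,0,0]],
  [[0,25,29,13,22,12,22,18,16,6,13,30,21,13,8,28,26,29,19,0], [0,19,21,29,17,28,26,15,11,16,25,29,15,11,4,8,10,5,11,22], [0,11,9,19,30,30,30,16,5,2,21,20,15,15,13,30,28,24,18,23], [0,1,5,30,0,14,17,23,7,27,9,11,5,3,13,3,8,0,0,0]],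
  [[0,19,20,9,11,7,5,11,16,28,12,2,7,29,2,10,30,16,25,0], [0,5,21,15,23,0,8,15,30,26,5,27,10,13,20,9,2,27,17,8], [0,25,16,3,28,8,18,18,0,25,11,2,27,28,25,24,14,7,30,8], [0,30,12,18,30,19,29,28,20,30,11,10,27,24,13,5,13,0,0,0]],
  [[0,10,9,1,12,15,21,15,29,6,21,29,23,15,28,29,22,26,6,0], [0,19,2,13,21,16,23,26,25,0,3,11,19,10,23,25,22,4,11,17], [0,1,1,5,26,14,21,5,4,4,2,20,1,21,5,3,22,12,21,22], [0,7,17,22,7,19,12,13,22,10,27,1,26,4,9,19,13,0,0,0]],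
  [[0,10,12,29,15,29,27,17,21,14,5,9,5,1,19,13,20,24,4,0], [0,15,27,14,14,23,3,6,21,26,1,26,9,6,29,22,16,28,21,11], [0,12,10,26,27,5,12,8,14,5,19,14,26,8,13,9,14,30,15,4], [0,25,10,16,24,16,23,27,10,16,24,1,0,17,20,16,25,0,0,0]],
  [[0,25,11,1,17,28,2,6,4,7,27,2,12,5,25,13,15,14,3,0], [0,6,5,18,8,28,29,1,6,8,1,24,18,16,7,26,15,5,6,21], [0,23,22,2,27,10,0,14,3,1,7,8,21,27,22,27,6,2,28,8], [0,9,19,30,30,7,15,11,25,3,5,15,15,4,2,20,22,0,0,0]],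
  [[0,12,30,30,25,21,2,24,17,21,1,4,15,28,8,15,8,3,29,0], [0,19,25,1,6,8,8,16,14,19,13,12,12,28,30,4,2,11,11,13], [0,7,3,5,0,6,19,0,23,28,2,5,19,12,24,5,12,24,0,18], [0,13,12,7,7,19,7,11,6,26,4,9,21,22,29,21,0,0,0,0]],
  [[0,22,1,5,3,25,23,23,23,8,20,25,13,21,5,14,26,17,13,0], [0,20,29,4,17,4,16,5,27,22,9,25,28,6,23,28,13,25,30,26], [0,26,6,7,5,15,23,16,30,12,14,22,5,15,6,24,10,19,5,12], [0,12,16,27,5,16,28,25,8,20,24,24,2,28,15,1,26,0,0,0]],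
  [[0,6,18,19,7,25,14,29,13,9,26,0,0,5,11,11,22,14,18,0], [0,18,8,17,27,23,25,24,6,20,29,30,23,20,24,17,21,24,14,5], [0,12,19,8,7,19,0,25,17,2,10,17,5,17,6,17,8,9,16,28], [0,27,25,26,24,16,8,25,23,26,5,5,5,22,0,30,12,0,0,0]],
  [[0,5,20,10,20,0,20,19,22,21,6,17,22,29,13,2,14,22,3,0], [0,10,12,2,4,15,7,13,3,7,19,16,9,3,9,15,6,8,27,3], [0,25,15,25,21,7,17,3,26,19,20,9,1,25,5,6,20,18,21,15], [0,19,26,0,3,8,1,2,4,30,21,30,6,8,3,18,14,0,0,0]],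
  [[0,4,27,12,3,30,8,25,30,24,1,14,0,5,13,28,13,21,23,0], [0,25,13,27,19,6,1,13,26,14,26,8,13,9,26,23,26,1,16,17], [0,8,6,8,30,28,10,6,1,26,27,17,23,15,3,23,26,9,0,21], [0,30,4,5,6,15,1,10,7,2,25,18,14,18,1,29,7,0,0,0]],
  [[0,28,21,16,12,24,4,3,4,28,21,18,13,0,1,4,11,18,5,0], [0,8,8,15,20,15,16,29,0,22,20,16,25,24,20,20,26,3,26,25], [0,19,12,4,24,11,21,13,12,26,22,17,15,21,25,23,20,14,12,17], [0,6,3,24,7,17,19,12,1,19,18,14,8,22,3,13,7,0,0,0]],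
  [[0,12,25,8,14,11,19,4,0,16,21,14,18,5,19,23,28,23,11,0], [0,3,15,8,14,7,25,8,21,25,29,20,14,5,22,17,6,13,13,17], [0,1,27,14,12,15,19,20,23,28,23,11,10,7,23,13,4,21,12,5], [0,29,5,20,1,28,11,29,8,0,3,6,19,13,26,11,25,0,0,0]],
  [[0,8,19,5,2,18,11,7,17,6,5,3,3,19,5,15,20,20,30,0], [0,15,3,16,9,9,17,12,1,22,7,26,26,14,23,27,12,21,11,21], [0,21,19,14,5,6,5,0,5,29,19,19,14,25,24,0,5,14,30,9], [0,26,10,3,21,21,22,30,8,30,1,24,5,14,15,9,3,0,0,0]],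
  [[0,12,0,24,28,20,18,4,21,17,17,15,18,14,20,28,4,6,16,0], [0,0,19,20,4,25,16,26,19,16,20,28,19,2,2,10,2,10,21,5], [0,25,8,13,21,16,21,27,5,7,20,15,11,30,15,18,29,8,28,0], [0,28,11,20,1,17,24,22,4,26,24,15,28,6,23,6,16,0,0,0]],
  [[0,2,10,14,0,4,19,9,30,27,15,13,14,2,27,21,9,28,1,0], [0,8,1,27,25,1,29,29,22,17,2,12,5,20,21,14,30,9,19,26], [0,4,5,7,7,1,21,7,9,5,14,6,8,20,24,21,27,4,12,18], [0,26,19,21,30,14,4,1,29,23,11,27,13,14,9,9,29,0,0,0]],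
  [[0,10,27,26,8,4,17,24,12,20,24,12,23,20,10,13,21,19,18,0], [0,15,21,6,5,14,2,3,19,16,15,10,5,8,7,21,25,8,8,18], [0,14,1,23,2,1,28,30,11,23,21,28,23,19,16,30,23,3,26,23], [0,9,17,0,5,27,28,22,20,3,2,27,22,9,5,29,4,0,0,0]],
  [[0,15,10,7,24,3,28,30,26,19,1,2,3,8,11,29,18,30,6,0], [0,16,25,13,15,29,11,17,15,11,9,20,29,4,3,23,18,8,22,0], [0,27,7,1,30,28,9,20,27,1,23,5,11,24,26,14,2,25,12,23], [0,17,21,18,14,7,15,14,4,1,3,27,5,24,0,4,17,0,0,0]],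
  [[0,16,7,2,30,4,24,0,14,17,16,0,12,5,7,2,20,24,29,0], [0,29,29,11,11,1,19,13,25,23,7,30,6,27,7,29,24,27,4,30], [0,6,10,29,29,15,13,1,26,17,21,25,27,23,28,0,26,24,23,23], [0,11,11,18,20,10,26,25,18,19,22,8,30,18,1,5,1,0,0,0]],
  [[0,9,0,21,9,20,2,8,28,24,22,20,16,23,10,26,27,5,24,0], [0,26,9,6,7,2,22,21,30,27,26,6,15,11,13,3,2,17,14,17], [0,2,20,0,13,28,29,13,8,9,3,1,3,15,29,28,30,14,18,9], [0,15,5,13,11,15,30,23,26,7,26,10,14,29,29,22,23,0,0,0]],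
  [[0,22,17,15,16,16,30,1,20,28,15,6,26,7,0,25,25,8,28,0], [0,0,10,21,1,15,4,20,24,7,28,24,17,23,25,4,0,25,10,29], [0,8,16,0,14,7,3,7,14,1,16,29,10,24,17,11,10,4,14,22], [0,26,5,7,26,7,10,20,26,6,18,1,4,12,15,12,18,0,0,0]],
  [[0,0,6,21,14,19,29,16,5,29,12,0,2,19,7,14,9,6,5,0], [0,1,12,3,28,16,4,9,5,19,12,8,20,0,27,5,23,22,8,27], [0,21,7,19,3,5,11,0,13,4,17,13,0,17,25,25,26,3,16,28], [0,0,9,8,22,20,26,13,18,13,6,0,17,28,1,18,16,0,0,0]],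
  [[0,15,19,23,19,30,10,17,18,24,15,8,11,25,16,9,17,18,26,0], [0,21,26,8,18,30,23,0,20,25,22,12,0,19,10,14,26,24,29,4], [0,9,12,6,9,23,13,18,0,30,8,5,12,0,29,9,8,2,14,18], [0,21,9,30,18,20,13,18,12,29,2,0,12,19,15,6,12,0,0,0]],
  [[0,17,18,4,15,5,17,15,8,4,2,2,3,24,12,2,1,1,16,0], [0,23,15,29,1,2,6,7,10,3,8,5,30,5,10,0,24,26,13,28], [0,28,4,10,11,28,16,15,22,30,7,4,11,1,25,3,1,27,6,15], [0,15,11,16,14,27,0,24,18,24,18,13,17,24,16,7,23,0,0,0]],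
  [[0,21,15,2,6,9,17,28,9,26,15,6,9,5,25,5,9,21,0,0], [0,15,19,8,24,22,3,4,22,28,20,22,2,8,0,22,28,19,15,29], [0,27,29,13,13,0,24,14,8,10,8,21,21,16,15,19,11,3,0,28], [0,18,22,12,30,2,5,29,12,22,17,28,27,12,28,24,16,0,0,0]],
  [[0,26,17,21,10,5,3,23,28,8,8,0,7,15,1,6,29,28,9,0], [0,20,3,15,14,8,30,20,1,14,25,8,30,17,5,5,9,13,6,25], [0,4,5,21,14,13,1,25,5,13,8,2,19,14,20,13,26,3,28,10], [0,6,11,2,10,7,17,25,1,5,19,24,6,27,1,22,27,0,0,0]],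
  [[0,9,2,23,2,8,3,10,30,27,27,8,18,28,17,8,18,2,6,0], [0,26,19,1,30,7,17,22,23,20,30,5,11,10,28,28,14,24,30,17], [0,21,21,14,4,7,9,23,7,5,6,24,29,16,1,6,21,4,13,28], [0,19,7,24,30,28,3,30,9,18,12,1,9,10,6,6,11,0,0,0]],
  [[0,25,17,4,25,22,6,9,10,20,1,6,21,20,9,14,28,4,23,0], [0,7,3,29,13,5,23,22,8,13,7,0,14,3,7,30,8,5,28,26], [0,14,8,2,15,7,25,30,22,15,20,23,29,17,9,15,28,7,4,16], [0,21,23,3,10,13,27,9,12,30,21,28,28,11,5,0,17,0,0,0]],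
  [[0,0,6,21,24,14,7,22,14,16,19,5,26,9,15,10,28,17,12,0], [0,10,28,23,30,1,10,19,15,19,11,23,25,1,5,5,30,30,12,3], [0,19,22,5,26,16,5,18,6,28,11,23,20,26,30,23,24,15,30,14], [0,24,22,7,2,20,5,17,16,9,21,16,19,21,8,18,22,0,0,0]],
  [[0,20,16,16,30,19,8,29,7,12,19,9,12,7,9,4,1,27,8,0], [0,14,14,21,7,6,11,17,29,17,16,29,10,2,0,6,10,17,23,12], [0,16,1,21,8,25,15,16,25,21,17,27,19,4,21,6,22,23,14,25], [0,22,1,28,7,28,22,21,3,24,7,0,20,2,3,29,7,0,0,0]],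
  [[0,27,30,28,8,25,16,24,3,3,18,14,7,13,20,19,20,23,8,0], [0,23,6,15,10,14,5,6,11,7,7,10,1,30,1,20,19,30,20,27], [0,13,13,24,17,4,15,7,5,11,13,24,7,25,13,5,5,24,12,13], [0,15,21,29,10,7,2,1,16,5,25,11,18,9,22,14,19,0,0,0]],
  [[0,28,12,24,17,26,14,27,26,22,2,30,30,24,18,7,29,9,10,0], [0,29,9,15,29,19,2,24,6,21,27,28,2,3,9,25,23,19,16,29], [0,3,17,10,27,16,29,3,5,26,0,25,4,4,10,21,28,30,0,16], [0,12,16,13,4,7,29,23,8,16,24,20,23,12,23,22,23,0,0,0]],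
  [[0,7,23,15,30,11,7,28,4,9,25,4,10,14,28,14,18,28,0,0], [0,14,6,16,2,17,29,6,28,9,9,7,6,29,13,14,24,23,11,15], [0,13,5,6,0,3,3,28,20,5,6,12,4,29,24,9,17,4,29,24], [0,3,16,4,6,5,25,15,29,1,26,21,14,17,20,23,30,0,0,0]],
  [[0,10,21,8,3,25,27,19,27,1,25,19,22,1,12,14,7,18,22,0], [0,16,16,19,10,23,18,12,16,10,5,27,21,20,28,23,11,22,9,26], [0,11,6,30,5,19,17,3,28,3,19,9,20,16,21,3,26,3,29,6], [0,5,27,8,19,11,23,11,13,3,20,5,3,27,9,11,19,0,0,0]],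
  [[0,8,14,0,1,21,24,7,22,17,27,10,2,17,3,17,1,1,25,0], [0,9,4,19,21,17,15,29,18,2,3,5,20,14,7,8,1,13,29,6], [0,3,6,10,23,7,10,17,24,8,7,15,17,10,9,9,6,4,28,23], [0,8,2,22,26,9,11,27,24,3,6,12,0,5,21,25,18,0,0,0]],
  [[0,5,10,24,8,6,8,8,28,18,7,7,26,8,21,25,3,19,22,0], [0,5,5,3,16,6,24,22,13,3,22,20,27,5,24,23,24,22,22,21], [0,8,24,29,27,6,1,7,14,10,8,7,30,13,15,0,25,29,14,14], [0,5,3,22,25,18,5,23,1,11,30,2,5,17,12,30,14,0,0,0]],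
  [[0,24,10,8,20,15,14,21,16,22,3,1,0,26,1,11,9,6,29,0], [0,3,13,19,26,6,13,27,11,17,22,9,17,8,6,19,14,28,30,24], [0,15,19,16,18,4,25,9,22,8,30,6,20,17,1,16,6,11,17,7], [0,6,7,3,13,6,9,0,7,20,30,17,26,1,30,17,0,0,0,0]],
  [[0,19,19,26,1,24,27,29,2,10,22,19,25,16,3,1,24,6,15,0], [0,14,27,16,6,28,4,5,21,12,21,11,24,14,12,2,19,21,21,25], [0,19,1,14,14,11,24,24,25,7,3,2,21,21,15,8,1,26,8,28], [0,27,19,25,21,18,20,10,28,21,24,16,5,16,19,6,30,0,0,0]],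
  [[0,30,29,4,4,5,21,6,21,25,24,13,5,5,24,27,23,12,21,0], [0,30,17,0,14,17,12,18,28,3,13,4,15,24,25,10,23,27,17,18], [0,1,26,23,26,23,19,28,3,9,28,27,18,27,18,6,17,30,20,19], [0,18,29,3,26,22,1,14,18,22,28,25,23,29,5,17,10,0,0,0]],
  [[0,22,18,19,16,29,15,21,2,23,3,17,12,18,30,5,24,1,21,0], [0,5,20,29,29,3,7,14,24,2,26,26,22,18,26,24,4,17,9,5], [0,6,17,3,29,19,12,3,16,1,15,26,25,6,30,4,3,4,23,9], [0,25,5,4,3,2,4,18,2,22,14,0,4,26,24,5,26,0,0,0]],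
  [[0,16,0,11,30,30,0,18,2,21,10,16,16,20,11,18,3,18,17,0], [0,0,17,19,5,18,6,12,6,2,9,17,22,3,19,13,20,10,10,26], [0,3,12,2,8,10,30,26,22,27,5,3,1,0,4,29,22,16,10,5], [0,3,26,25,25,30,9,11,14,11,6,22,7,15,17,6,17,0,0,0]],
  [[0,10,16,1,25,19,23,6,4,25,29,28,19,3,15,4,23,4,17,0], [0,18,26,0,4,27,21,19,1,23,11,12,9,10,11,1,7,29,30,30], [0,14,17,11,20,1,17,21,21,11,18,6,23,27,18,6,0,25,6,26], [0,15,17,2,23,15,24,13,0,19,9,13,2,18,24,24,7,0,0,0]],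
  [[0,28,14,1,4,10,18,25,5,19,1,8,24,29,13,10,0,28,0,0], [0,4,7,18,0,17,12,14,22,24,17,10,22,3,15,20,22,22,10,1], [0,16,24,4,28,26,19,4,27,29,12,24,6,13,2,1,24,3,11,18], [0,28,1,8,2,30,13,4,30,9,0,12,7,10,12,5,21,0,0,0]],
  [[0,25,5,7,7,11,15,7,15,6,28,7,26,12,14,28,16,22,20,0], [0,13,13,6,5,21,1,3,28,25,29,28,17,29,20,24,12,21,27,30], [0,3,3,29,21,15,16,6,4,24,17,9,12,4,2,26,12,7,11,21], [0,29,17,20,17,19,1,24,13,7,17,13,17,0,12,17,9,0,0,0]],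
  [[0,7,29,19,20,3,22,2,21,14,25,8,9,20,7,6,2,4,15,0], [0,8,27,6,12,2,0,13,10,6,20,25,28,28,17,6,14,28,8,18], [0,13,24,27,7,14,30,1,19,30,22,6,28,14,13,2,4,2,29,11], [0,10,23,1,24,0,17,10,12,25,19,25,19,26,17,7,6,0,0,0]],
  [[0,29,26,30,22,17,28,12,28,14,27,12,9,22,16,14,26,30,6,0], [0,28,27,21,28,22,30,7,14,17,28,6,1,25,13,12,6,17,27,17], [0,29,6,27,14,23,2,18,1,16,20,2,22,22,6,18,11,2,20,24], [0,17,12,18,5,25,28,22,30,22,18,7,25,11,7,12,9,0,0,0]],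
  [[0,24,12,7,2,21,2,8,29,14,13,12,25,0,23,12,10,29,11,0], [0,30,11,2,2,25,16,12,27,13,25,30,26,17,13,4,5,26,0,15], [0,22,21,2,22,29,2,26,18,1,5,20,13,18,27,25,27,8,15,2], [0,27,22,29,5,25,17,23,9,2,18,25,25,2,20,18,29,0,0,0]],
  [[0,21,30,28,10,4,7,3,3,8,7,12,14,12,30,6,13,25,25,0], [0,17,26,5,5,14,22,26,23,15,8,30,8,23,4,23,9,17,14,9], [0,0,27,6,14,15,26,4,13,0,15,0,1,27,28,7,20,18,12,3], [0,11,15,5,16,15,15,26,16,25,1,3,27,1,17,10,14,0,0,0]],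
  [[0,15,17,13,28,13,6,18,21,22,20,18,24,6,2,19,26,24,24,0], [0,14,17,30,26,10,21,17,10,21,8,30,15,15,3,0,18,2,8,29], [0,18,26,18,7,22,29,30,3,6,22,0,1,24,23,11,26,27,25,7], [0,17,28,21,12,9,24,15,14,19,9,10,0,19,22,23,9,0,0,0]],
  [[0,28,18,2,28,14,9,13,29,13,16,0,13,3,3,1,13,14,21,0], [0,22,15,19,16,18,2,1,18,3,9,20,7,24,29,21,27,12,18,19], [0,2,28,10,21,26,27,2,17,18,5,29,3,22,10,30,30,12,29,26], [0,21,8,22,14,30,3,23,8,8,18,5,4,1,17,20,9,0,0,0]],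
  [[0,2,28,0,16,26,16,23,14,27,17,16,12,24,26,3,11,26,7,0], [0,23,30,1,0,4,2,30,2,28,7,27,11,23,22,18,15,14,30,7], [0,9,5,2,26,30,28,0,5,20,4,22,30,22,26,14,30,9,4,16], [0,25,8,5,20,17,18,22,9,17,17,1,9,5,21,17,12,0,0,0]],
  [[0,12,12,15,28,2,29,13,19,15,3,28,29,4,26,27,22,27,6,0], [0,17,29,24,27,12,16,8,17,14,20,24,20,13,28,26,19,27,3,28], [0,28,17,15,6,3,21,23,9,23,12,11,7,22,5,12,13,4,16,16], [0,27,21,17,11,22,1,29,20,17,15,3,6,12,19,25,17,0,0,0]],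
  [[0,29,8,18,23,28,10,23,8,3,11,22,11,13,15,0,18,22,25,0], [0,25,4,29,2,13,27,11,27,30,13,28,30,8,4,18,14,20,8,4], [0,28,19,30,5,16,24,4,10,2,23,22,19,8,19,20,28,25,8,6], [0,0,7,13,8,26,1,8,22,21,15,29,7,13,20,5,18,0,0,0]],
  [[0,8,30,17,3,14,13,20,10,19,23,23,24,8,6,7,0,25,10,0], [0,13,7,20,24,13,26,14,20,2,4,27,14,1,29,23,1,20,23,30], [0,14,29,29,11,18,11,7,24,3,29,8,14,0,23,12,5,26,26,27], [0,11,2,19,9,20,25,9,6,16,9,29,29,1,24,23,26,0,0,0]],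
  [[0,26,3,10,22,21,1,29,2,12,18,26,26,14,12,24,2,7,22,0], [0,17,17,20,29,30,22,22,18,18,5,21,18,26,24,28,18,28,0,25], [0,21,10,21,16,30,29,24,29,8,17,17,18,9,20,28,15,20,23,24], [0,26,13,23,21,13,20,28,11,22,9,27,14,7,20,2,21,0,0,0]],
  [[0,25,15,26,14,18,26,7,9,28,24,5,16,16,30,16,11,13,27,0], [0,26,26,3,24,28,23,29,7,26,1,21,20,26,4,30,28,26,0,3], [0,7,14,4,19,5,2,23,29,27,18,19,6,7,10,30,6,25,12,6], [0,13,7,4,22,19,12,29,10,0,24,25,6,11,28,5,30,0,0,0]],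
  [[0,22,16,22,6,19,29,4,14,7,11,9,5,26,4,21,6,6,21,0], [0,26,12,18,6,22,28,26,12,30,22,28,0,1,6,20,10,0,20,26], [0,15,14,24,7,15,15,6,15,18,11,3,30,23,9,9,9,15,16,9], [0,10,0,23,11,28,12,5,19,1,26,30,12,26,2,11,23,0,0,0]],
  [[0,19,12,3,28,15,10,19,20,28,21,4,10,3,29,4,0,11,12,0], [0,16,13,10,3,0,10,9,25,8,12,6,9,23,23,4,22,4,29,1], [0,17,8,22,25,15,26,19,27,6,5,12,19,21,2,17,22,21,27,24], [0,8,2,13,22,2,20,18,1,14,7,11,0,6,18,8,24,0,0,0]],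
  [[0,24,11,8,14,23,4,16,7,29,14,23,18,17,3,5,28,11,10,0], [0,9,13,7,11,6,8,11,25,0,21,2,16,26,5,28,1,29,0,18], [0,8,16,14,0,27,18,28,13,6,23,11,10,25,0,16,18,26,27,19], [0,29,16,18,1,4,3,12,22,14,18,12,29,30,9,29,10,0,0,0]],
  [[0,2,3,11,20,16,13,10,10,14,29,19,1,5,24,26,8,0,2,0], [0,25,15,11,1,8,14,8,23,3,10,14,11,24,11,20,4,24,29,1], [0,21,29,9,1,24,15,3,14,5,13,25,24,19,5,10,28,3,18,15], [0,0,3,5,24,12,9,21,8,23,23,0,24,1,21,11,28,0,0,0]],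
  [[0,20,24,24,0,23,7,24,14,9,10,30,22,2,13,9,26,13,11,0], [0,28,1,30,24,6,18,23,18,8,29,27,9,6,24,7,15,4,0,0], [0,18,4,17,18,21,8,18,19,24,3,3,5,5,16,0,12,24,23,22], [0,11,7,8,16,6,12,28,3,4,17,17,4,21,12,15,1,0,0,0]],
  [[0,16,8,26,28,7,4,15,13,10,17,10,28,21,17,14,2,10,29,0], [0,10,18,15,8,14,10,26,28,8,27,15,20,27,24,9,15,23,5,1], [0,28,22,15,8,12,7,5,3,10,23,21,6,17,5,7,21,2,8,12], [0,24,28,25,6,13,12,29,2,25,3,25,24,17,21,15,19,0,0,0]],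
  [[0,30,26,26,3,18,17,11,17,12,18,26,13,26,24,15,7,24,9,0], [0,18,5,1,14,18,20,17,19,18,6,5,22,12,9,19,8,21,23,12], [0,29,2,7,6,27,12,17,26,25,16,6,6,12,23,5,17,20,30,11], [0,20,8,20,6,17,9,17,13,28,7,4,8,4,26,5,23,0,0,0]],
  [[0,25,25,17,21,14,0,25,3,11,4,6,25,20,17,23,18,7,23,0], [0,3,25,16,16,5,15,30,12,30,3,21,3,27,30,0,19,20,10,22], [0,24,1,20,23,7,21,1,18,20,25,20,25,16,30,20,14,3,17,19], [0,6,14,11,14,9,3,30,19,7,11,6,1,28,18,30,24,0,0,0]],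
  [[0,13,11,7,26,8,17,27,20,7,7,11,20,1,25,7,14,7,21,0], [0,12,21,5,4,23,24,23,24,17,16,2,29,25,26,11,29,24,12,3], [0,11,9,26,22,3,4,7,12,7,14,17,25,20,26,8,19,27,17,14], [0,21,21,20,5,13,8,22,3,27,8,10,3,21,18,8,0,0,0,0]],
  [[0,7,20,12,8,11,7,22,17,12,10,24,29,1,2,12,25,6,9,0], [0,7,27,0,20,13,4,8,8,30,16,9,20,7,12,15,9,1,21,7], [0,2,19,0,16,12,24,20,5,29,6,15,2,18,24,19,18,1,4,1], [0,12,5,18,9,8,18,27,4,10,4,18,10,0,4,13,22,0,0,0]],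
  [[0,20,22,27,17,0,12,25,20,12,12,3,5,3,30,10,9,30,21,0], [0,13,19,27,26,3,17,28,5,9,28,20,20,2,4,16,21,5,6,12], [0,17,13,12,1,5,2,15,23,21,17,26,8,26,17,11,7,20,20,8], [0,18,9,21,21,6,0,22,11,8,21,26,3,30,3,10,29,0,0,0]],
  [[0,17,21,12,14,27,18,22,24,30,3,25,20,26,28,3,3,22,18,0], [0,11,8,28,24,24,27,4,23,20,23,24,20,12,18,2,22,17,20,11], [0,26,3,5,5,12,13,17,25,4,19,7,10,8,17,20,9,16,4,23], [0,12,14,29,18,28,14,0,26,16,19,11,25,28,30,17,4,0,0,0]],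
  [[0,26,16,21,23,6,18,13,9,18,20,29,0,15,13,11,15,3,11,0], [0,17,27,7,30,0,19,1,20,25,30,19,7,7,27,8,8,24,7,27], [0,21,7,21,28,18,3,15,23,0,6,8,11,27,21,0,24,3,17,20], [0,6,12,22,3,10,21,19,27,22,24,15,28,16,29,8,24,0,0,0]],
  [[0,15,2,1,20,8,29,25,0,11,8,15,5,23,5,28,11,13,10,0], [0,14,3,7,15,4,27,10,15,6,9,11,0,22,15,25,5,29,12,7], [0,3,3,11,16,28,13,0,15,21,22,18,0,29,9,26,20,9,20,0], [0,10,29,10,11,16,22,5,24,22,15,3,22,17,11,15,18,0,0,0]],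
  [[0,6,13,14,9,1,23,7,24,10,13,21,4,14,30,2,25,17,27,0], [0,6,1,27,15,26,16,28,24,2,8,12,3,4,0,10,27,25,26,26], [0,8,23,5,1,20,16,0,7,23,25,29,14,30,15,8,15,0,13,12], [0,16,12,16,10,13,4,12,2,1,23,17,8,20,15,21,0,0,0,0]],
  [[1,28,21,30,3,18,6,0,20,27,27,25,23,18,18,18,4,24,2,0], [0,29,6,30,29,13,21,19,25,14,23,4,17,2,18,2,13,5,4,28], [0,23,24,27,0,5,16,16,30,16,13,0,16,24,7,13,25,3,3,18], [0,14,0,8,8,24,29,9,24,5,29,7,8,27,18,10,12,0,0,0]],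
  [[0,21,28,30,11,2,22,0,4,10,0,30,20,26,4,23,18,27,29,0], [1,20,14,13,8,22,17,5,6,24,20,3,8,0,21,13,13,8,23,5], [0,30,19,3,28,12,27,14,29,7,3,19,1,18,13,28,10,29,20,13], [0,24,27,6,13,4,10,8,29,13,1,23,28,29,6,6,0,0,0,0]],
  [[0,13,21,0,7,2,16,12,15,15,17,22,12,15,30,7,13,3,15,0], [0,7,30,13,21,25,26,2,29,5,4,10,18,12,1,18,27,18,13,22], [1,0,14,0,13,7,3,7,7,27,13,11,18,11,16,23,11,11,13,19], [0,1,21,27,5,14,10,1,29,23,5,10,19,4,22,25,8,0,0,0]],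
  [[0,6,30,9,23,6,15,23,19,2,19,20,23,21,25,10,5,19,19,0], [0,18,10,5,17,10,29,18,6,26,15,19,9,19,2,1,9,15,23,13], [0,24,8,23,22,1,30,7,2,13,17,22,2,5,29,17,15,6,27,6], [1,28,27,20,13,5,3,22,1,7,29,17,4,4,0,29,2,0,0,0]],
  [[0,17,29,14,24,23,12,7,20,5,13,28,21,14,4,15,17,13,7,1], [0,22,8,19,4,22,24,24,24,18,29,21,10,22,26,3,7,28,15,1], [0,27,10,20,4,5,18,10,12,18,6,13,1,19,20,17,27,24,5,8], [0,7,28,17,21,28,10,12,14,7,18,16,22,22,24,9,2,0,0,0]]]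
/-- Quotients for the right inverse. -/
def qD : List (List (List ℕ)) := [[[19,0,0,22,25,14,22,3,15,30,7,18,2,1,29], [0,30,11,10,14,19,25,22,9,7,13,29,16,4,4], [0,22,10,16,26,3,8,20,23,16,28,16,2,27,13], [0,22,8,13,1,25,20,18,28,14,9,8,12,30,8], [0,30,21,4,26,29,2,13,26,25,12,2,23,0,23], [0,21,8,17,5,6,8,2,11,27,12,21,5,14,25]],
  [[0,10,9,18,14,22,28,13,16,23,1,6,30,13,23], [0,14,26,18,23,8,2,28,13,11,23,9,12,19,30], [0,5,27,22,18,8,3,22,12,16,25,9,3,10,8], [0,23,3,16,5,10,3,17,21,18,24,2,17,21,17], [0,22,9,14,17,1,9,6,28,7,5,1,19,24,1], [0,5,6,7,8,12,17,9,16,13,21,12,1,4,15]],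
  [[0,30,23,24,5,26,28,6,21,25,1,10,25,16,0], [0,10,4,1,17,22,29,30,20,27,6,30,18,10,7], [0,28,29,8,8,26,27,6,5,2,2,9,19,23,9], [0,9,26,26,26,29,5,22,0,10,6,1,10,13,8], [0,10,15,16,16,5,26,15,30,3,9,18,7,30,1], [0,25,20,30,5,19,29,11,27,15,15,11,21,28,4]],
  [[0,28,14,10,17,13,8,25,30,0,27,22,12,2,10], [0,16,24,2,17,12,12,2,3,6,29,2,27,23,23], [0,3,0,10,10,20,27,17,21,12,11,13,1,0,8], [0,20,1,0,20,7,29,27,29,18,16,29,1,22,18], [0,12,0,22,0,19,20,17,18,1,13,25,13,25,24], [0,3,28,8,22,2,27,7,1,30,30,2,19,19,28]],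
  [[0,29,1,2,9,20,21,24,21,21,3,12,23,9,0], [0,8,20,15,25,25,11,22,2,3,21,7,30,7,4], [0,6,8,28,30,13,27,14,6,29,7,18,21,5,14], [0,28,29,20,15,18,28,1,5,10,8,26,6,25,9], [0,18,20,23,15,9,15,7,15,0,23,30,8,29,5], [0,19,11,0,3,10,17,15,13,14,22,4,16,26,20]],
  [[0,18,18,19,21,11,21,2,12,13,30,24,23,28,28], [0,4,12,9,3,15,22,10,12,13,8,0,8,6,3], [0,1,28,17,20,20,22,13,24,5,22,14,13,17,9], [0,29,23,11,30,30,9,24,0,14,30,28,25,6,13], [0,14,13,20,25,10,20,27,7,6,11,25,11,23,23], [0,19,4,15,0,19,14,15,20,4,4,24,0,16,7]],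
  [[0,24,6,10,10,6,9,12,22,21,12,3,3,8,4], [0,13,12,27,24,0,15,30,5,21,26,28,25,0,5], [0,8,16,9,6,21,7,5,10,29,7,25,5,5,4], [0,30,7,0,11,16,9,12,4,16,3,0,29,13,21], [0,22,0,3,5,6,17,3,13,3,11,18,5,0,9], [0,4,15,16,11,2,15,18,28,29,19,30,26,30,15]],
  [[0,3,3,10,20,7,1,22,15,23,13,1,6,27,26], [0,20,3,20,14,0,10,0,4,1,9,29,0,13,8], [0,26,30,15,28,28,16,5,1,11,23,30,20,14,10], [0,9,0,8,15,25,20,26,26,12,4,16,30,1,0], [0,2,22,28,15,7,9,30,28,28,19,6,22,29,24], [0,12,18,21,1,0,24,30,25,15,30,25,6,15,6]],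
  [[0,23,6,27,21,2,17,13,0,16,20,2,20,17,30], [0,6,7,11,9,7,7,1,29,10,22,30,12,26,2], [0,5,23,1,30,11,0,17,30,10,1,20,15,12,22], [0,3,22,30,29,29,17,0,25,20,30,15,6,11,4], [0,20,7,22,17,29,19,9,8,22,28,7,15,5,27], [0,6,2,1,28,0,1,23,0,19,26,8,6,1,28]],
  [[0,30,26,15,2,13,1,4,9,6,2,14,29,12,17], [0,20,18,29,11,16,1,2,19,14,25,20,18,2,11], [0,28,13,8,27,22,3,28,0,0,0,11,16,25,16], [0,1,19,24,17,24,30,28,19,16,15,23,19,16,10], [0,28,14,0,16,27,22,30,8,1,12,8,19,10,8], [0,13,18,29,14,23,23,1,2,19,27,13,22,10,28]],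
  [[0,28,24,30,9,28,25,12,25,4,14,10,8,20,7], [0,10,20,20,18,2,10,1,13,8,2,29,8,28,4], [0,4,14,14,13,21,13,13,27,25,15,14,21,10,2], [0,30,25,21,0,2,22,15,1,29,10,8,21,3,28], [0,8,29,24,13,9,7,14,10,17,15,11,23,16,4], [0,9,1,9,10,8,23,25,28,19,13,16,24,29,18]],
  [[0,12,7,12,30,6,15,25,22,14,6,3,17,21,12], [0,23,7,20,15,27,0,8,10,17,10,27,15,26,6], [0,26,10,18,11,12,18,21,12,8,28,20,15,30,27], [0,17,12,25,14,24,25,14,26,15,4,8,13,23,4], [0,26,15,24,16,22,29,15,29,7,4,4,10,5,8], [0,24,17,11,0,15,29,22,8,14,12,3,25,18,0]],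
  [[0,28,5,15,26,24,1,1,3,24,7,14,10,27,11], [11,4,29,10,8,26,20,28,26,23,13,19,28,10,22], [0,7,5,30,22,15,30,22,21,8,24,15,18,11,5], [0,5,22,4,1,12,4,1,24,3,6,21,10,3,24], [0,19,4,10,10,2,12,12,26,3,26,11,16,17,6], [0,22,15,17,7,2,26,2,26,6,2,12,7,18,5]],
  [[0,25,18,7,5,30,15,4,24,24,27,9,13,21,18], [0,11,6,28,17,12,14,2,8,5,25,2,6,9,7], [0,25,16,12,9,6,6,5,6,26,17,21,10,30,18], [0,28,4,2,29,4,15,20,2,4,27,22,23,1,17], [0,15,15,10,22,13,16,17,7,7,20,29,27,19,25], [0,3,4,22,20,11,14,24,9,29,24,6,11,27,21]],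
  [[0,12,8,3,6,14,11,10,3,26,11,0,2,27,23], [0,27,1,26,6,4,15,22,24,14,2,29,2,10,3], [0,14,21,22,17,4,13,30,28,23,4,2,13,3,22], [0,1,23,28,4,8,19,7,26,16,11,25,22,10,26], [0,26,22,15,15,17,1,23,8,10,3,19,6,26,6], [0,15,10,24,15,7,22,21,29,9,3,13,17,8,4]],
  [[0,17,30,15,7,15,2,5,7,7,7,15,20,0,12], [0,7,27,4,4,28,28,13,21,15,3,4,30,26,5], [0,30,16,15,25,6,10,21,23,23,15,29,19,14,8], [0,24,22,29,21,3,13,6,12,8,4,8,8,23,25], [0,12,26,30,1,10,15,13,10,13,27,13,4,17,30], [0,14,9,5,7,13,20,13,24,14,9,22,7,27,26]],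
  [[0,7,18,6,18,6,24,5,16,21,5,29,4,25,20], [0,12,1,0,7,25,18,8,27,20,11,22,4,16,21], [0,27,9,28,19,12,2,15,28,10,17,9,27,23,6], [0,8,12,18,28,25,7,8,0,29,20,12,2,5,3], [0,13,23,13,7,0,10,29,2,15,19,28,22,17,9], [0,17,26,20,24,5,3,16,29,27,2,3,3,4,24]],
  [[0,11,18,14,5,12,8,1,26,21,6,25,5,7,9], [0,20,13,11,0,9,25,21,1,10,21,3,8,17,3], [0,19,10,24,15,5,22,30,26,20,25,1,28,25,15], [0,28,18,1,5,0,11,6,16,28,26,20,10,2,19], [0,4,3,30,24,17,12,7,28,12,11,2,9,30,8], [0,26,26,28,2,22,17,11,20,20,2,20,21,5,8]],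
  [[0,23,27,12,22,24,10,30,7,18,0,6,8,16,3], [0,25,3,12,21,28,2,22,7,17,11,26,4,26,16], [0,20,27,4,21,28,5,26,23,29,29,6,1,8,11], [0,10,17,22,24,15,23,1,18,15,21,11,11,22,22], [0,26,7,0,12,27,17,28,21,0,0,12,30,0,24], [0,21,14,7,1,18,1,25,26,4,5,7,18,16,26]],
  [[0,10,0,28,0,11,25,23,27,19,27,10,25,24,13], [0,4,29,6,25,16,11,18,27,19,12,6,30,8,15], [0,16,10,6,8,18,25,8,22,1,12,8,17,22,28], [0,2,8,23,15,7,11,14,23,11,27,27,6,9,17], [0,23,17,19,10,0,17,12,19,20,12,5,28,9,18], [0,14,7,1,0,28,9,20,4,20,28,8,29,6,27]],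
  [[0,21,17,4,0,22,22,0,10,19,7,6,10,4,1], [0,19,12,6,8,25,10,3,24,13,20,21,12,25,30], [0,9,0,5,25,22,20,9,15,24,14,6,25,24,28], [0,29,9,7,16,24,9,23,19,1,3,19,12,9,6], [0,21,5,30,19,10,26,25,21,29,12,0,10,16,13], [0,9,1,26,8,18,9,18,3,24,15,20,8,20,8]],
  [[0,7,13,23,19,24,20,6,11,22,16,12,24,12,4], [0,29,8,6,7,3,22,0,15,8,21,24,2,12,16], [0,1,13,12,7,20,1,25,3,13,23,10,10,5,27], [0,8,3,25,8,2,8,6,27,8,9,29,2,6,7], [0,28,19,25,27,22,7,19,4,0,30,18,10,17,15], [0,3,22,22,20,18,27,27,25,0,8,7,13,3,8]],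
  [[0,10,6,6,25,17,12,7,17,14,28,17,12,11,14], [0,7,23,29,7,22,30,22,3,9,16,16,6,10,2], [0,19,23,0,3,15,26,15,27,0,28,24,9,17,14], [0,9,20,3,19,26,0,19,24,1,7,11,27,15,27], [0,24,21,3,2,16,1,11,13,17,18,8,15,8,16], [0,13,0,22,7,12,19,25,2,3,27,3,1,14,6]],
  [[0,12,23,19,20,26,26,7,19,15,10,26,23,6,23], [0,7,14,25,2,19,21,0,5,4,28,14,2,0,30], [0,26,27,19,8,22,6,18,22,2,22,2,22,4,8], [0,5,2,22,7,21,13,12,12,3,3,20,5,30,17], [0,22,16,15,18,22,19,21,19,26,4,13,27,0,1], [0,6,10,23,11,30,2,21,26,25,26,14,5,13,15]],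
  [[0,16,13,25,14,13,7,2,4,4,0,9,8,24,5], [0,8,28,1,27,1,8,22,4,17,27,11,28,1,29], [19,30,30,26,6,20,24,20,1,20,4,10,29,11,11], [0,2,29,29,4,20,20,4,23,18,29,17,23,6,29], [0,25,22,27,20,8,16,13,2,0,29,22,3,25,30], [0,30,14,5,1,28,18,23,17,12,18,1,0,11,24]],
  [[0,24,9,23,22,13,15,9,28,27,3,7,4,12,25], [0,14,10,19,16,1,2,25,17,7,25,0,0,19,4], [0,24,19,17,13,2,12,6,11,10,4,14,26,0,11], [0,26,27,16,25,24,18,6,21,3,29,28,1,14,6], [0,22,28,22,17,15,7,23,17,16,19,25,11,10,28], [0,25,20,8,15,13,4,2,12,19,14,26,2,14,4]],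
  [[0,20,22,10,3,18,20,11,18,14,26,1,26,9,2], [0,18,8,19,24,3,25,23,27,2,19,13,0,4,5], [0,20,4,9,11,28,17,7,8,11,19,15,15,21,3], [0,8,29,22,16,8,2,26,19,22,1,9,24,13,20], [0,1,11,26,6,9,12,26,25,3,1,5,24,2,27], [0,18,11,1,13,2,9,30,27,6,4,20,19,28,20]],
  [[0,13,26,11,25,21,25,12,18,25,9,4,9,3,21], [0,29,6,24,7,24,3,19,21,0,15,22,19,18,23], [0,22,7,20,28,5,22,22,7,6,28,5,19,16,29], [0,27,14,23,27,17,29,28,5,27,3,12,5,26,8], [0,22,1,23,24,26,16,15,3,28,7,13,26,12,18], [0,13,17,12,21,30,23,7,27,0,28,11,1,17,16]],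
  [[0,7,27,5,4,18,1,16,2,21,6,13,2,10,13], [0,9,29,20,28,8,21,6,17,17,27,4,4,24,25], [0,7,23,2,2,23,5,13,17,0,26,30,23,15,1], [0,18,22,6,12,6,4,18,17,17,15,22,2,17,24], [0,8,22,8,22,16,16,2,25,7,18,27,0,22,15], [0,26,7,17,6,27,24,18,15,4,30,14,15,10,15]],
  [[0,3,16,8,5,30,3,24,12,15,8,22,0,8,19], [0,8,22,11,2,19,26,29,8,9,20,17,15,24,6], [0,7,6,20,17,21,4,12,0,12,27,27,3,23,15], [0,19,25,17,20,14,4,13,22,25,15,27,2,24,23], [0,0,3,10,24,21,27,17,10,23,0,30,20,3,7], [0,12,13,27,6,10,4,1,30,20,2,24,13,26,29]],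
  [[0,27,15,26,16,13,0,7,20,3,11,19,12,2,14], [0,29,17,21,18,18,5,7,1,20,13,2,24,10,24], [0,8,18,16,2,30,30,23,17,10,15,25,7,8,29], [0,0,15,4,4,15,9,25,14,2,12,0,8,19,30], [0,26,29,25,16,3,27,23,5,29,29,6,5,14,28], [0,21,21,26,28,8,21,9,28,27,30,24,26,18,23]],
  [[0,29,30,6,6,9,10,11,26,6,23,15,6,9,8], [0,1,25,21,12,28,0,26,23,2,23,26,5,26,1], [0,25,3,3,16,16,14,10,22,10,4,6,11,12,23], [0,27,28,0,7,28,18,2,10,19,13,0,27,18,14], [0,23,30,25,8,16,27,19,6,25,20,13,14,13,30], [0,17,14,29,30,1,2,24,15,13,14,6,25,26,16]],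
  [[0,27,5,12,13,24,9,1,5,15,30,10,3,28,14], [0,27,6,17,11,17,14,4,20,0,16,25,15,20,28], [0,20,16,0,15,4,11,13,19,14,13,24,18,18,12], [0,2,3,17,4,25,8,13,5,0,13,10,8,29,8], [0,11,27,15,18,9,29,2,1,12,2,13,28,11,2], [0,9,30,21,15,14,1,4,27,11,2,6,26,0,12]],
  [[0,15,10,26,6,20,15,21,1,10,2,11,9,23,27], [0,27,25,20,17,28,15,7,24,9,23,3,27,10,29], [0,22,6,7,5,29,20,29,8,25,8,2,26,30,22], [0,13,18,27,28,25,16,21,10,3,8,22,6,24,9], [0,6,26,14,2,15,29,24,12,11,5,20,21,21,18], [0,23,6,1,15,13,25,21,6,8,20,6,22,22,0]],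
  [[0,16,1,28,14,25,9,4,19,8,16,12,9,8,9], [0,15,4,14,10,7,27,20,22,8,0,2,28,6,14], [0,7,15,17,4,22,22,21,9,14,12,24,3,9,7], [0,5,19,18,25,1,24,11,0,18,29,20,11,29,5], [0,25,14,19,25,23,0,13,6,8,24,9,24,4,14], [0,22,10,22,18,9,11,10,25,11,14,2,19,28,1]],
  [[0,23,16,28,9,3,26,20,23,23,3,21,17,22,5], [0,5,2,6,9,25,9,20,28,23,5,20,9,2,22], [0,8,26,6,1,21,29,6,15,27,20,8,17,23,2], [0,7,20,10,5,16,0,28,27,12,21,10,23,4,21], [0,20,6,20,0,26,12,23,16,29,27,24,24,23,29], [0,16,19,24,14,22,29,19,28,13,27,5,22,10,20]],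
  [[0,14,9,8,15,14,12,29,8,0,9,22,10,29,25], [0,8,15,18,11,15,13,11,20,18,27,8,7,28,24], [0,26,15,25,16,8,26,2,10,7,10,10,5,16,19], [13,18,14,5,27,20,2,10,12,5,2,29,13,6,20], [0,30,15,23,3,22,1,9,23,3,14,12,20,20,22], [0,0,15,0,20,18,8,30,14,0,3,29,25,20,11]],
  [[0,9,13,19,27,15,4,12,23,8,1,17,24,23,17], [0,3,23,15,28,7,7,15,25,7,25,29,18,24,10], [0,1,12,27,4,20,14,23,4,10,17,8,2,10,28], [0,20,0,11,9,24,19,20,27,19,7,28,22,20,0], [0,6,1,11,13,20,22,22,24,20,3,9,21,5,30], [0,17,15,13,22,20,12,13,3,25,7,9,4,7,23]],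
  [[0,9,11,25,5,16,29,24,20,17,0,18,28,13,3], [0,24,21,1,7,5,23,27,11,18,7,20,1,14,0], [0,8,17,7,4,27,19,19,18,9,23,8,9,21,17], [0,8,27,4,3,6,1,5,17,8,26,25,27,9,17], [0,17,3,28,17,16,26,3,20,15,18,7,17,25,4], [0,2,27,30,8,19,4,3,4,16,7,15,7,3,8]],
  [[0,10,0,15,2,12,24,12,23,4,21,3,27,24,26], [0,22,18,15,28,12,13,19,6,30,3,16,30,21,11], [0,29,23,22,20,24,16,20,22,1,23,26,18,2,5], [0,18,1,8,9,3,3,9,23,6,10,4,8,5,30], [0,26,26,20,21,8,25,15,17,5,12,27,17,23,20], [0,14,27,20,3,21,17,19,16,6,10,20,23,23,21]],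
  [[0,21,13,27,15,27,27,18,13,21,25,23,28,10,28], [0,2,18,18,17,0,15,13,11,25,5,1,14,26,18], [0,30,14,28,25,2,4,10,6,13,22,5,27,23,15], [0,3,27,3,25,2,15,14,7,0,19,5,8,25,8], [0,3,16,27,8,20,29,28,18,20,25,12,12,4,3], [0,29,10,11,12,16,17,29,27,6,2,1,18,1,20]],
  [[0,3,25,0,6,3,5,14,27,2,3,16,6,7,21], [0,20,18,18,26,29,19,14,12,10,16,1,24,11,16], [0,9,2,29,22,14,27,27,30,29,13,14,29,10,20], [0,26,28,8,13,25,16,11,28,19,9,13,23,28,0], [0,29,29,18,12,30,2,5,17,28,16,7,24,23,17], [0,20,0,15,30,23,26,3,28,6,30,17,30,8,12]],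
  [[0,5,17,26,14,9,11,21,3,19,12,25,26,30,8], [0,7,3,14,23,16,14,30,10,12,30,13,12,2,9], [0,11,28,16,5,29,30,26,30,0,23,9,4,4,20], [0,25,26,17,8,19,14,29,28,6,28,10,11,2,1], [0,13,9,11,22,25,20,7,16,13,9,14,9,5,9], [0,16,6,1,27,14,13,18,25,16,25,20,28,27,25]],
  [[0,10,18,17,18,24,11,11,10,4,21,0,1,22,22], [0,21,22,21,1,15,26,16,29,7,13,13,15,13,27], [0,14,29,18,4,0,28,30,26,2,5,6,7,6,28], [0,9,3,11,7,25,9,25,17,16,11,25,9,18,2], [0,9,17,0,7,25,7,23,10,2,10,0,1,5,14], [0,27,30,13,24,29,9,8,0,23,27,25,4,12,18]],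
  [[0,30,9,12,11,21,28,2,20,24,30,12,10,10,6], [0,1,10,11,27,15,5,18,29,1,20,28,22,7,19], [0,13,24,15,22,19,20,3,18,14,26,27,27,14,23], [0,25,6,9,11,9,19,26,26,15,21,10,10,9,7], [0,22,20,23,3,17,30,12,9,4,13,28,14,17,24], [0,29,30,9,9,23,23,28,19,17,21,11,7,11,18]],
  [[0,7,16,17,1,4,7,15,23,20,24,29,11,1,29], [0,21,26,25,18,10,3,11,5,17,6,1,6,30,27], [0,12,2,15,30,26,16,13,26,0,30,7,3,13,16], [0,22,16,20,18,25,2,23,10,8,20,0,8,18,21], [0,14,15,30,20,7,20,2,20,3,2,27,19,7,13], [0,18,29,22,29,10,14,14,22,12,12,20,18,2,16]],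
  [[0,6,4,5,28,3,11,1,12,21,2,23,1,4,7], [0,20,23,24,22,14,27,2,30,24,29,23,30,17,0], [0,27,19,18,16,26,5,0,17,25,23,9,28,19,19], [0,28,12,11,25,24,9,10,30,20,8,15,2,20,19], [0,15,3,8,15,6,6,20,30,25,10,30,0,4,30], [0,16,20,22,30,22,15,5,16,5,23,22,27,26,29]],
  [[0,5,22,11,23,1,19,1,16,18,19,3,11,29,12], [0,24,27,30,29,27,15,0,20,1,5,26,11,25,11], [0,16,18,21,12,20,28,29,19,23,13,23,16,2,29], [0,25,20,1,21,27,12,16,24,5,17,6,11,14,23], [0,28,21,13,0,22,24,16,25,26,12,3,7,7,22], [0,2,24,25,19,0,10,15,26,4,7,30,6,5,25]],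
  [[0,10,16,9,14,14,20,24,2,29,8,26,30,20,29], [0,21,28,26,10,0,15,1,21,17,6,6,8,18,3], [0,14,22,8,29,24,30,21,30,1,24,15,20,22,25], [0,9,27,18,9,0,28,5,2,1,4,19,1,6,29], [10,23,12,5,24,28,23,15,26,20,0,24,7,8,14], [0,27,5,15,2,5,24,2,9,15,9,10,15,11,20]],
  [[0,2,7,6,1,3,7,14,26,1,12,17,28,27,29], [0,18,25,11,13,25,16,29,20,8,23,8,14,30,15], [0,14,25,30,3,0,12,14,26,9,8,0,29,22,5], [0,18,18,10,29,24,1,15,4,20,7,23,0,2,25], [0,26,29,22,6,26,18,15,21,29,11,12,4,5,29], [0,25,30,0,30,8,3,24,8,29,8,18,21,4,18]],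
  [[0,23,3,5,11,28,3,21,14,13,11,19,8,9,25], [0,17,8,29,6,4,17,7,25,5,27,7,17,11,29], [0,26,25,29,18,28,28,9,21,8,13,7,28,3,21], [0,29,17,16,22,24,5,13,25,24,10,26,29,5,8], [0,9,5,7,6,15,24,19,4,7,10,8,1,11,5], [0,11,12,14,19,12,1,18,28,19,6,7,23,23,5]],
  [[0,21,2,21,22,1,10,4,10,11,21,24,24,18,17], [0,11,21,7,20,25,3,2,25,22,9,23,13,2,6], [0,5,8,2,21,14,23,1,16,9,29,13,14,7,14], [0,27,15,7,20,4,9,9,1,4,15,25,16,5,22], [0,29,20,21,21,9,23,7,18,4,20,19,18,26,25], [0,11,8,22,27,6,22,11,23,27,10,0,2,16,3]],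
  [[0,11,12,30,28,22,18,17,8,27,3,24,14,13,24], [0,21,28,16,3,6,30,4,21,5,7,16,12,15,27], [0,24,12,19,12,18,0,6,18,15,0,4,21,18,29], [0,16,1,12,25,30,0,12,3,30,6,24,29,2,3], [0,15,9,9,3,8,1,23,29,30,12,7,9,2,27], [0,25,3,4,15,12,13,8,11,12,22,27,5,5,13]],
  [[0,20,16,10,11,21,0,15,26,28,26,25,20,5,12], [0,26,5,10,16,1,30,21,30,4,11,24,17,19,23], [0,21,17,28,30,19,13,13,21,2,6,9,2,7,9], [0,13,7,18,7,4,21,20,16,30,24,7,9,19,19], [0,16,12,4,16,12,12,23,2,5,7,24,27,1,6], [0,1,19,10,29,25,6,14,11,22,21,20,22,28,23]],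
  [[0,27,13,14,20,23,0,18,13,17,13,0,17,4,27], [0,18,27,9,4,12,23,23,27,15,21,4,19,28,7], [0,23,29,7,27,28,13,22,17,23,12,3,15,25,7], [0,0,8,23,14,23,12,14,19,26,2,28,1,15,6], [0,9,9,11,27,11,9,9,29,7,4,1,0,15,6], [0,10,17,21,25,3,27,2,17,0,19,17,24,3,14]],
  [[0,4,10,2,14,9,0,29,21,14,6,29,25,10,20], [0,10,2,4,21,20,12,4,9,9,14,14,12,26,8], [0,5,18,5,23,20,16,11,18,14,14,18,7,30,7], [0,24,4,27,2,14,18,23,27,15,29,3,4,27,28], [0,21,21,22,24,30,25,18,19,25,0,5,29,21,16], [0,22,13,20,15,9,23,1,10,26,8,5,3,19,21]],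
  [[0,25,21,5,16,2,21,5,7,15,3,22,18,13,22], [0,12,16,17,13,0,21,14,29,21,20,18,30,8,22], [0,3,16,10,24,3,26,30,28,26,26,14,5,3,26], [0,28,27,26,16,18,28,9,18,8,28,0,29,16,14], [0,11,16,29,30,0,20,3,0,26,8,15,12,24,0], [0,15,15,15,6,5,15,9,8,19,19,12,28,9,24]],
  [[0,19,5,11,12,1,16,10,23,19,1,18,27,22,4], [0,23,27,23,17,12,8,20,20,23,24,29,29,11,8], [0,10,25,28,6,2,15,9,27,27,24,15,25,10,30], [0,28,21,11,16,16,3,26,19,15,14,6,28,8,20], [0,4,23,8,29,16,2,28,27,30,21,26,15,1,5], [0,14,4,29,13,3,25,13,26,16,8,1,19,17,30]],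
  [[0,9,7,30,23,28,2,29,28,16,11,4,8,20,12], [0,9,26,29,28,18,9,28,28,2,22,12,19,30,15], [0,19,15,12,5,27,20,17,16,10,1,5,20,20,12], [0,9,4,1,30,16,26,8,13,15,5,3,28,9,1], [0,9,23,29,8,7,7,9,29,12,6,30,13,3,27], [0,13,18,2,16,2,25,27,15,10,9,13,19,26,14]],
  [[0,24,25,23,18,22,14,6,0,3,23,16,2,18,26], [0,18,19,17,1,4,21,21,6,15,12,19,5,18,11], [0,26,22,12,19,30,23,20,29,5,12,24,5,12,5], [0,8,21,1,0,17,22,1,7,23,22,29,7,7,30], [0,17,6,6,5,4,2,16,10,30,26,9,12,14,20], [0,26,8,7,20,27,25,21,5,27,1,23,20,28,21]],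
  [[0,4,23,12,10,24,19,9,12,3,24,27,8,11,27], [0,29,26,18,9,0,9,23,23,19,7,17,14,8,2], [0,10,29,22,30,22,17,2,19,4,8,10,20,10,5], [0,10,16,24,26,18,3,28,16,3,13,16,16,19,18], [0,21,15,25,7,8,25,3,19,16,18,7,13,4,23], [19,10,4,9,1,6,17,9,22,8,14,2,25,8,20]],
  [[0,26,15,26,12,8,8,21,0,7,29,8,23,25,15], [0,16,19,9,18,30,18,12,30,23,22,2,5,24,18], [0,6,7,21,28,2,13,29,4,6,27,18,7,9,24], [0,14,25,19,12,3,27,28,25,14,9,22,5,20,17], [0,20,16,28,10,27,15,17,21,21,26,6,22,3,27], [0,17,16,8,23,19,27,29,28,1,4,24,19,16,6]],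
  [[0,29,17,29,14,18,2,1,15,10,1,28,21,23,1], [0,10,0,18,10,11,9,29,7,7,23,1,2,29,8], [0,28,5,29,29,28,14,23,25,8,19,15,30,18,13], [0,23,4,13,8,5,1,24,0,10,5,29,25,2,3], [0,10,13,12,9,4,27,12,6,3,20,5,18,16,1], [0,15,30,18,27,8,22,24,25,5,26,3,26,13,22]],
  [[0,22,20,19,8,17,20,7,3,16,17,30,30,1,27], [0,14,20,23,30,3,14,19,27,10,22,28,17,23,21], [0,28,7,26,18,7,3,25,8,30,4,11,26,0,25], [0,0,10,2,12,9,22,28,2,30,26,24,8,23,22], [0,11,27,0,15,15,27,18,12,0,4,19,25,12,8], [0,27,5,1,18,29,10,29,29,7,14,8,15,4,22]],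
  [[0,19,2,22,6,28,16,17,9,16,21,19,14,25,17], [0,22,8,30,26,0,20,23,14,29,25,14,7,14,15], [0,23,4,30,19,8,13,1,4,6,10,5,27,15,30], [0,22,29,10,2,8,1,8,17,3,15,21,2,6,19], [0,10,12,16,26,17,10,19,23,15,7,4,30,25,13], [0,12,7,28,29,4,27,16,3,20,6,26,0,12,17]],
  [[0,30,8,11,6,28,26,9,28,26,10,9,16,11,19], [0,2,27,7,30,11,18,1,16,17,0,16,30,13,6], [0,24,6,19,16,5,7,0,3,6,27,12,9,2,15], [0,7,9,16,17,21,7,26,20,2,4,13,26,1,23], [0,18,18,23,26,19,24,23,26,20,11,12,14,22,7], [0,27,8,17,30,8,17,0,11,17,2,19,13,20,29]],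
  [[0,16,19,11,1,6,9,21,18,28,12,18,9,9,11], [0,13,2,16,24,10,2,6,14,1,2,3,28,0,5], [0,23,12,2,7,11,23,14,6,25,16,10,1,25,23], [0,3,12,23,0,27,19,4,8,27,13,0,15,1,9], [0,0,1,0,12,22,5,1,16,10,8,12,16,2,8], [0,30,15,10,15,1,0,17,19,16,14,12,15,25,13]],
  [[0,20,18,23,7,0,2,18,14,25,29,16,2,12,1], [0,16,0,9,24,17,7,4,23,26,28,23,7,30,27], [0,12,27,16,17,26,22,16,11,28,25,6,2,30,2], [0,30,22,15,8,4,30,17,4,5,19,12,26,2,7], [0,5,25,7,20,22,25,15,20,4,26,2,14,27,17], [0,30,13,23,11,20,14,20,8,14,3,27,13,23,24]],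
  [[0,14,26,23,12,21,28,28,10,18,22,24,23,4,17], [0,16,6,21,16,17,16,30,14,16,5,18,30,14,27], [0,27,28,20,27,25,6,22,26,19,23,19,13,7,10], [0,6,12,29,30,12,14,0,19,28,9,25,7,16,15], [0,14,0,27,26,28,23,29,20,26,30,15,3,12,28], [0,14,4,21,20,24,0,17,3,15,8,7,1,14,15]],
  [[0,12,12,10,13,18,20,11,11,11,19,23,28,17,17], [0,29,16,0,20,18,2,4,2,20,7,15,28,4,18], [0,3,23,11,16,1,22,0,7,13,18,4,7,1,25], [0,29,28,4,17,18,10,5,11,18,4,15,25,22,18], [0,23,18,30,23,30,23,10,24,15,29,2,2,27,9], [0,1,28,18,24,14,20,17,20,22,12,6,27,19,1]],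
  [[0,3,9,19,11,1,13,3,26,21,27,10,10,20,23], [0,14,30,13,2,8,17,1,17,29,30,21,18,14,7], [0,12,23,1,25,25,3,19,16,6,5,0,3,7,5], [0,3,15,18,23,21,12,18,23,28,8,11,4,29,4], [0,20,25,23,9,1,5,25,29,13,27,4,27,8,11], [0,5,7,4,19,27,29,15,22,26,22,2,9,6,24]],
  [[0,26,3,14,11,10,29,16,11,27,16,24,27,2,30], [0,10,20,0,14,29,3,5,28,19,18,9,6,7,2], [0,19,3,2,0,2,29,22,20,1,25,28,24,18,22], [0,12,12,13,6,0,12,4,9,13,0,3,15,24,4], [0,17,13,7,0,26,17,21,18,22,25,21,0,12,27], [0,2,11,23,2,7,0,10,20,16,0,26,23,9,28]],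
  [[30,29,11,22,18,0,23,20,1,25,22,5,7,29,0], [3,16,17,10,6,4,8,7,29,22,2,22,14,16,23], [2,11,3,11,10,0,27,29,9,30,1,1,8,28,3], [22,4,20,11,16,17,22,8,3,11,15,17,1,19,13], [19,2,1,18,11,12,12,18,13,2,14,28,17,18,21], [15,2,24,14,10,18,24,3,16,23,2,28,2,15,22]],
  [[5,18,27,4,14,29,27,8,6,24,25,2,4,25,11], [11,8,27,20,7,9,23,12,6,20,23,23,15,4,10], [24,9,20,15,2,6,23,20,2,0,17,28,1,22,25], [15,15,19,29,6,23,13,9,26,23,6,21,26,9,28], [28,0,13,28,29,29,17,18,19,27,30,6,13,0,22], [8,11,8,14,17,13,0,21,0,27,27,30,12,25,7]],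
  [[15,5,22,25,14,1,4,9,22,8,21,25,11,24,17], [19,20,13,5,24,23,24,4,26,26,9,1,10,20,15], [16,8,25,21,18,0,4,8,16,14,14,6,18,23,30], [13,22,5,19,5,18,25,27,30,21,19,24,23,5,19], [19,10,6,2,4,5,23,21,13,4,30,4,17,28,13], [15,20,7,6,18,26,25,17,27,0,28,16,29,27,17]],
  [[12,7,8,16,10,2,24,1,0,18,24,15,17,11,15], [13,24,10,27,10,24,26,10,5,19,10,3,28,5,1], [28,17,26,1,18,29,25,30,16,12,9,7,6,23,11], [23,27,6,29,13,20,1,28,20,6,23,5,30,30,2], [3,19,10,21,17,18,29,24,14,15,3,16,20,25,29], [15,1,1,29,15,26,18,8,15,30,18,20,19,0,14]],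
  [[0,24,19,5,9,8,28,21,22,30,24,16,10,3,1], [0,29,9,2,4,13,1,15,3,29,6,16,29,11,5], [0,12,7,15,6,20,25,8,26,28,11,26,7,4,6], [0,7,3,5,22,10,26,9,19,23,0,7,8,25,29], [0,16,3,8,7,29,18,7,11,3,4,24,22,27,28], [0,11,17,5,12,19,19,0,5,21,17,22,3,5,15]]]

set_option maxRecDepth 100000
/-- `2 × 2` reference line matrix entries. -/
def mR (i r c : ℕ) : ℕ := ((mD.getD i []).getD r []).getD c 0
def unitL (i j : ℕ) : List ℕ := (List.range 12).map fun k => if 12 * i + k = j then 1 else 0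

theorem chk_tangent : ((List.range 77).all fun j => (List.range 6).all fun i =>
    chkI (hnD.getD i [] :: cfD.getD i []) ((qD.getD j []).getD i [] :: rD.getD j [])
      (unitL i j)) = true := by decide +kernel

theorem chk_len : ((List.range 77).all fun j =>
    (Nat.beq (rD.getD j []).length 4) && (List.range 4).all fun c =>
    (Nat.beq ((rD.getD j []).getD c []).length 20) &&
    (Nat.beq (((rD.getD j []).getD c []).getD 0 0) (if 72 + c = j then 1 else 0))) = true := by
  decide +kernel

theorem chk_lead : ((List.range 77).all fun j =>
    (Nat.beq (((rD.getD j []).getD 0 []).getD 19 0) (if j = 76 then 1 else 0))) = true := by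
  decide +kernel

/-- The four multipliers are the ones given by the cofactors and the lines. -/
theorem chk_cf : ((List.range 6).all fun i =>
    let e0 := (eD.getD i []).getD 0 []
    let e1 := (eD.getD i []).getD 1 []
    let c := cfD.getD i []
    (Nat.beq c.length 4) &&
    chkI [c.getD 0 [], e1, e0] [[1], [mR i 0 0], [30 * mR i 0 1]] [] &&
    chkI [c.getD 1 [], e1, e0] [[1], [mR i 1 0], [30 * mR i 1 1]] [] &&
    chkI [c.getD 2 [], e1] [[1], [30]] [] &&
    chkI [c.getD 3 [], e0] [[1], [1]] []) = true := by
  decide +kernel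

theorem chk_ref : ((List.range 6).all fun i => (List.range 2).all fun k =>
    chkI [gD.getD (2 + k) [], gD.getD 0 [], gD.getD 1 [], hnD.getD i []]
      [[1], [30 * mR i 0 k], [30 * mR i 1 k], (eD.getD i []).getD k []] []) = true := by
  decide +kernel

theorem chk_hn : ((List.range 6).all fun i =>
    chkI [hD.getD i [], hnD.getD i []] [[1], [1]] [] && 
    Nat.beq (hD.getD i []).length 13 && Nat.beq ((hD.getD i []).getD 12 0) 1) = true := by
  decide +kernel

theorem chk_fe : ((List.range 6).all fun i =>
    chkI [(fD.getD i []).getD 0 [], (fD.getD i []).getD 1 []]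
      [(eD.getD i []).getD 0 [], (eD.getD i []).getD 1 []] [1] &&
    (List.range 2).all fun k => Nat.beq ((eD.getD i []).getD k []).length 8) = true := by
  decide +kernel

theorem chk_bez : (chkI [bD.getD 0 [], bD.getD 1 []] [gD.getD 0 [], gD.getD 1 []] [1] &&
    Nat.beq ((gD.getD 0 []).getD 19 0) 1 && 
    (List.range 4).all fun c => Nat.beq (gD.getD c []).length 20) = true := by
  decide +kernel
attribute [irreducible] rD qD hnD hD gD mD eD fD bD cfD

section surj
open Polynomial

instance fact31 : Fact (Nat.Prime 31) := ⟨by norm_num⟩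

/-- Residual linear forms of a curve with respect to the line `y = x m`. -/
noncomputable def DD {A : Type*} [CommRing A] (m : Fin 2 → Fin 2 → A) (δ : Fin 4 → A[X])
    (k : Fin 2) : A[X] :=
  δ (![2, 3] k) - C (m 0 k) * δ 0 - C (m 1 k) * δ 1

noncomputable def mZ (i : Fin 6) (r c : Fin 2) : ZMod 31 := (mR i r c : ZMod 31)
noncomputable def hR (i : Fin 6) : (ZMod 31)[X] := toP (hD.getD i [])
noncomputable def eR (i : Fin 6) (k : Fin 2) : (ZMod 31)[X] := toP ((eD.getD i []).getD k [])
noncomputable def fR (i : Fin 6) (k : Fin 2) : (ZMod 31)[X] := toP ((fD.getD i []).getD k [])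
noncomputable def gR (c : Fin 4) : (ZMod 31)[X] := toP (gD.getD c [])

/-- Columns of the right inverse. -/
noncomputable def colP (j : ℕ) (c : Fin 4) : (ZMod 31)[X] := toP ((rD.getD j []).getD c [])

theorem c31 : (30 : ZMod 31) = -1 := by decide

theorem degree_toP_lt (l : List ℕ) (n : ℕ) (h : l.length ≤ n) : (toP l).degree < n := by
  rw [degree_lt_iff_coeff_zero]
  intro m hm
  rw [coeff_toP, List.getD_eq_default _ _ (by omega)]; simp

theorem toP_one (a : ℕ) : toP [a] = C (a : ZMod 31) := by simp [toP_cons, toP_nil]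

theorem eq4 (l : List (List ℕ)) (h : l.length = 4) :
    l = [l.getD 0 [], l.getD 1 [], l.getD 2 [], l.getD 3 []] := by
  match l, h with
  | [a, b, c, d], _ => rfl

theorem hn_eq (i : Fin 6) : toP (hnD.getD i []) = - hR i := by
  have h := chk_hn
  rw [List.all_eq_true] at h
  have h := h i (by simp)
  simp only [Bool.and_eq_true] at h
  have h1 := chkI_sound h.1.1
  simp only [dotK, toP_one, toP_nil, Nat.cast_one, C_1] at h1
  simp only [hR]
  linear_combination h1

theorem hR_monic (i : Fin 6) : (hR i).Monic ∧ (hR i).natDegree = 12 := by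
  have h := chk_hn
  rw [List.all_eq_true] at h
  have h := h i (by simp)
  simp only [Bool.and_eq_true] at h
  have h1 := Nat.eq_of_beq_eq_true h.1.2
  have h2 := Nat.eq_of_beq_eq_true h.2
  have hc : (hR i).coeff 12 = 1 := by rw [hR, coeff_toP, h2]; simp
  have hd : (hR i).natDegree = 12 := by
    apply natDegree_eq_of_le_of_coeff_ne_zero
    · have := degree_toP_lt (hD.getD i []) 13 (by rw [h1])
      exact natDegree_le_iff_degree_le.2 (Order.le_of_lt_succ (by exact_mod_cast this))
    · rw [hc]; exact one_ne_zero
  exact ⟨by rw [Monic, leadingCoeff, hd, hc], hd⟩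

theorem cf_eq (i : Fin 6) (δ : Fin 4 → (ZMod 31)[X]) :
    toP ((cfD.getD i []).getD 0 []) * δ 0 + toP ((cfD.getD i []).getD 1 []) * δ 1 +
    toP ((cfD.getD i []).getD 2 []) * δ 2 + toP ((cfD.getD i []).getD 3 []) * δ 3
    = eR i 1 * DD (mZ i) δ 0 - eR i 0 * DD (mZ i) δ 1 := by
  have h := chk_cf
  rw [List.all_eq_true] at h
  have h := h i (by simp)
  simp only [Bool.and_eq_true] at h
  obtain ⟨⟨⟨⟨-, h0⟩, h1⟩, h2⟩, h3⟩ := h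
  have h0 := chkI_sound h0
  have h1 := chkI_sound h1
  have h2 := chkI_sound h2
  have h3 := chkI_sound h3
  simp only [dotK, toP_one, toP_nil, Nat.cast_mul, Nat.cast_ofNat, c31, C_mul, C_neg, C_1,
    Nat.cast_one] at h0 h1 h2 h3
  simp only [eR, DD, mZ, Fin.isValue, Fin.val_zero, Fin.val_one, Matrix.cons_val_zero,
    Matrix.cons_val_one]
  linear_combination (δ 0) * h0 + (δ 1) * h1 + (δ 2) * h2 + (δ 3) * h3

theorem col_eq (i : Fin 6) (j : ℕ) (hj : j < 77) :
    hR i ∣ eR i 1 * DD (mZ i) (colP j) 0 -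
      eR i 0 * DD (mZ i) (colP j) 1 - toP (unitL i j) := by
  have h := chk_tangent
  rw [List.all_eq_true] at h
  have h := h j (by simpa using hj)
  rw [List.all_eq_true] at h
  have h := h i (by simp)
  have h := chkI_sound h
  have hl := chk_len
  rw [List.all_eq_true] at hl
  have hl := hl j (by simpa using hj)
  simp only [Bool.and_eq_true] at hl
  have hl := Nat.eq_of_beq_eq_true hl.1
  have hl' := chk_cf
  rw [List.all_eq_true] at hl'
  have hl' := hl' i (by simp)
  simp only [Bool.and_eq_true] at hl'
  have hl' := Nat.eq_of_beq_eq_true hl'.1.1.1.1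
  rw [eq4 _ hl, eq4 _ hl'] at h
  simp only [dotK, hn_eq] at h
  rw [← cf_eq]
  simp only [colP, Fin.val_zero, Fin.val_one, Fin.val_two, show ((3 : Fin 4) : ℕ) = 3 from rfl]
  refine ⟨toP ((qD.getD j []).getD i []), ?_⟩
  linear_combination h

theorem col_coeff (j : ℕ) (hj : j < 77) (c : Fin 4) :
    (colP j c).degree < 20 ∧
    (colP j c).coeff 0 = if 72 + (c : ℕ) = j then 1 else 0 := by
  have hl := chk_len
  rw [List.all_eq_true] at hl
  have hl := hl j (by simpa using hj)
  simp only [Bool.and_eq_true] at hl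
  have hl := hl.2
  rw [List.all_eq_true] at hl
  have hl := hl c (by simp)
  simp only [Bool.and_eq_true] at hl
  have h1 := Nat.eq_of_beq_eq_true hl.1
  have h2 := Nat.eq_of_beq_eq_true hl.2
  refine ⟨degree_toP_lt _ 20 (by rw [h1]), ?_⟩
  rw [colP, coeff_toP]
  simp only [Fin.val_zero, h2]; split_ifs <;> simp

theorem col_lead (j : ℕ) (hj : j < 77) :
    (colP j 0).coeff 19 = if j = 76 then 1 else 0 := by
  have hl := chk_lead
  rw [List.all_eq_true] at hl
  have hl := hl j (by simpa using hj)
  have h2 := Nat.eq_of_beq_eq_true hl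
  rw [colP, coeff_toP]
  simp only [Fin.val_zero, h2]; split_ifs <;> simp

theorem coeff_unitL (i j m : ℕ) :
    (toP (unitL i j)).coeff m = if m < 12 ∧ 12 * i + m = j then 1 else 0 := by
  rw [coeff_toP, unitL]
  by_cases hm : m < 12
  · rw [List.getD_eq_getElem _ _ (by simpa using hm)]
    simp [hm]
  · rw [List.getD_eq_default _ _ (by simpa using hm)]
    simp [hm]

theorem psi_surj (ρ : Fin 6 → (ZMod 31)[X]) (y : Fin 4 → ZMod 31) (c : ZMod 31) :
    ∃ δ : Fin 4 → (ZMod 31)[X], (∀ a, (δ a).degree < 20) ∧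
      (∀ i, hR i ∣ eR i 1 * DD (mZ i) δ 0 - eR i 0 * DD (mZ i) δ 1 - ρ i) ∧
      (∀ a, (δ a).coeff 0 = y a) ∧ (δ 0).coeff 19 = c := by
  classical
  let t : ℕ → ZMod 31 := fun j =>
    if h : j < 72 then (ρ ⟨j / 12, by omega⟩ %ₘ hR ⟨j / 12, by omega⟩).coeff (j % 12)
    else if h : j < 76 then y ⟨j - 72, by omega⟩ else c
  let δ : Fin 4 → (ZMod 31)[X] := fun a =>
    ∑ j ∈ Finset.range 77, C (t j) * colP j a
  have hDD : ∀ i k, DD (mZ i) δ k =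
      ∑ j ∈ Finset.range 77, C (t j) * DD (mZ i) (colP j) k := by
    intro i k
    simp only [DD, δ, Finset.mul_sum]
    rw [← Finset.sum_sub_distrib, ← Finset.sum_sub_distrib]
    exact Finset.sum_congr rfl fun j _ => by ring
  refine ⟨δ, ?_, ?_, ?_, ?_⟩
  · intro a
    have : δ a ∈ degreeLT (ZMod 31) 20 := by
      refine Submodule.sum_mem _ fun j hj => ?_
      rw [← smul_eq_C_mul]
      exact Submodule.smul_mem _ _ (mem_degreeLT.2 (col_coeff j (by simpa using hj) a).1)
    exact mem_degreeLT.1 this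
  · intro i
    have h1 : hR i ∣ ρ i - ρ i %ₘ hR i := by
      refine ⟨ρ i /ₘ hR i, ?_⟩
      have := modByMonic_add_div (ρ i) (hR i)
      linear_combination -this
    have h2 : ρ i %ₘ hR i = ∑ j ∈ Finset.range 77, C (t j) * toP (unitL i j) := by
      ext m
      simp only [finsetSum_coeff, coeff_C_mul, coeff_unitL]
      by_cases hm : m < 12
      · rw [Finset.sum_eq_single (12 * (i : ℕ) + m)]
        · have : 12 * (i : ℕ) + m < 72 := by omega
          simp only [hm, true_and, if_true, mul_one, t, this, dif_pos]
          have e1 : (12 * (i : ℕ) + m) / 12 = i := by omega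
          have e2 : (12 * (i : ℕ) + m) % 12 = m := by omega
          simp only [e1, e2]
        · intro b _ hb
          rw [if_neg (by tauto), mul_zero]
        · intro h; exfalso; apply h; simp; omega
      · rw [Finset.sum_eq_zero (by intro x _; rw [if_neg (by tauto), mul_zero])]
        apply coeff_eq_zero_of_degree_lt
        have := degree_modByMonic_lt (ρ i) (hR_monic i).1
        rw [degree_eq_natDegree (hR_monic i).1.ne_zero, (hR_monic i).2] at this
        refine lt_of_lt_of_le this (by exact_mod_cast not_lt.1 hm)
    have h3 : hR i ∣ eR i 1 * DD (mZ i) δ 0 - eR i 0 * DD (mZ i) δ 1 - ρ i %ₘ hR i := by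
      rw [h2, hDD, hDD, Finset.mul_sum, Finset.mul_sum, ← Finset.sum_sub_distrib,
        ← Finset.sum_sub_distrib]
      refine Finset.dvd_sum fun j hj => ?_
      have := (col_eq i j (by simpa using hj)).mul_left (C (t j))
      convert this using 1; ring
    have := dvd_sub h3 h1
    convert this using 1; ring
  · intro a
    simp only [δ, finsetSum_coeff, coeff_C_mul]
    rw [Finset.sum_eq_single (72 + (a : ℕ))]
    · rw [(col_coeff _ (by omega) a).2, if_pos rfl, mul_one]
      have h1 : ¬ (72 + (a : ℕ) < 72) := by omega
      have h2 : (72 + (a : ℕ) < 76) := by omega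
      simp [t, h2]
    · intro b hb hne
      rw [(col_coeff b (by simpa using hb) a).2, if_neg (Ne.symm hne), mul_zero]
    · intro h; exfalso; apply h; simp; omega
  · simp only [δ, finsetSum_coeff, coeff_C_mul]
    rw [Finset.sum_eq_single 76]
    · have := col_lead 76 (by omega)
      rw [this]; simp [t]
    · intro b hb hne
      have := col_lead b (by simpa using hb)
      rw [this, if_neg hne, mul_zero]
    · intro h; exfalso; apply h; simp
end surj

section newton
open Polynomial

theorem DD_add {A : Type*} [CommRing A] (m : Fin 2 → Fin 2 → A) (δ ε : Fin 4 → A[X]) (a : A[X])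
    (k : Fin 2) : DD m (fun c => δ c + a * ε c) k = DD m δ k + a * DD m ε k := by
  simp only [DD]; ring

theorem DD_map {A B : Type*} [CommRing A] [CommRing B] (f : A →+* B) (m : Fin 2 → Fin 2 → A)
    (δ : Fin 4 → A[X]) (k : Fin 2) :
    (DD m δ k).map f = DD (fun r c => f (m r c)) (fun c => (δ c).map f) k := by
  simp [DD]

theorem DD_degree {A : Type*} [CommRing A] (m : Fin 2 → Fin 2 → A) (δ : Fin 4 → A[X]) (n : ℕ)
    (h : ∀ c, (δ c).degree < n) (k : Fin 2) : (DD m δ k).degree < n := by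
  have h' : ∀ c, δ c ∈ degreeLT A n := fun c => mem_degreeLT.2 (h c)
  apply mem_degreeLT.1
  simp only [DD, ← smul_eq_C_mul]
  exact Submodule.sub_mem _ (Submodule.sub_mem _ (h' _) (Submodule.smul_mem _ _ (h' _)))
    (Submodule.smul_mem _ _ (h' _))

theorem fe_eq (i : Fin 6) : fR i 0 * eR i 0 + fR i 1 * eR i 1 = 1 := by
  have h := chk_fe
  rw [List.all_eq_true] at h
  have h := h i (by simp)
  simp only [Bool.and_eq_true] at h
  have h1 := chkI_sound h.1
  simp only [dotK, toP_one, Nat.cast_one, C_1] at h1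
  simp only [fR, eR]
  exact (by rw [← h1, add_zero]; rfl)

theorem eR_degree (i : Fin 6) (k : Fin 2) : (eR i k).degree < 8 := by
  have h := chk_fe
  rw [List.all_eq_true] at h
  have h := h i (by simp)
  simp only [Bool.and_eq_true] at h
  have h := h.2
  rw [List.all_eq_true] at h
  have h := Nat.eq_of_beq_eq_true (h k (List.mem_range.2 k.2))
  exact degree_toP_lt _ 8 h.le

theorem gR_degree (c : Fin 4) : (gR c).degree < 20 := by
  have h := chk_bez
  simp only [Bool.and_eq_true] at h
  have h := h.2
  rw [List.all_eq_true] at h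
  have h := Nat.eq_of_beq_eq_true (h c (by simp))
  exact degree_toP_lt _ 20 h.le

theorem gR_lead : (gR 0).coeff 19 = 1 := by
  have h := chk_bez
  simp only [Bool.and_eq_true] at h
  have h := Nat.eq_of_beq_eq_true h.1.2
  simp only [gR, coeff_toP, Fin.val_zero, h, Nat.cast_one]

theorem gR_coprime : IsCoprime (gR 0) (gR 1) := by
  have h := chk_bez
  simp only [Bool.and_eq_true] at h
  have h1 := chkI_sound h.1.1
  simp only [dotK, toP_one, Nat.cast_one, C_1] at h1
  exact ⟨_, _, by rw [← h1, add_zero]; rfl⟩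

theorem ref_eq (i : Fin 6) (k : Fin 2) : DD (mZ i) gR k = hR i * eR i k := by
  have h := chk_ref
  rw [List.all_eq_true] at h
  have h := h i (by simp)
  rw [List.all_eq_true] at h
  have h := chkI_sound (h k (List.mem_range.2 k.2))
  simp only [dotK, toP_one, toP_nil, Nat.cast_mul, Nat.cast_ofNat, c31, C_mul, C_neg, C_1,
    Nat.cast_one, hn_eq] at h
  have h2 : gR (![2, 3] k) = toP (gD.getD (2 + (k : ℕ)) []) := by
    fin_cases k <;> rfl
  simp only [DD, mZ, h2]
  simp only [gR, eR, Fin.val_zero, Fin.val_one]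
  linear_combination h

theorem tangent_surj (r : Fin 6 → Fin 2 → (ZMod 31)[X]) (hr : ∀ i k, (r i k).degree < 20)
    (y : Fin 4 → ZMod 31) (c : ZMod 31) :
    ∃ (δ : Fin 4 → (ZMod 31)[X]) (η : Fin 6 → (ZMod 31)[X]) (ε : Fin 6 → Fin 2 → (ZMod 31)[X]),
      (∀ a, (δ a).degree < 20) ∧ (∀ i, (η i).degree < 12) ∧ (∀ i k, (ε i k).degree < 8) ∧
      (∀ i k, DD (mZ i) δ k - η i * eR i k - hR i * ε i k = r i k) ∧
      (∀ a, (δ a).coeff 0 = y a) ∧ (δ 0).coeff 19 = c := by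
  obtain ⟨δ, h1, h2, h3, h4⟩ := psi_surj (fun i => eR i 1 * r i 0 - eR i 0 * r i 1) y c
  let s : Fin 6 → Fin 2 → (ZMod 31)[X] := fun i k => DD (mZ i) δ k - r i k
  let η : Fin 6 → (ZMod 31)[X] := fun i => (fR i 0 * s i 0 + fR i 1 * s i 1) %ₘ hR i
  let ε : Fin 6 → Fin 2 → (ZMod 31)[X] := fun i k => (s i k - η i * eR i k) /ₘ hR i
  have hdeg : ∀ i, (hR i).degree = 12 := fun i => by
    rw [degree_eq_natDegree (hR_monic i).1.ne_zero, (hR_monic i).2]; rfl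
  have hη : ∀ i, (η i).degree < 12 := fun i => by
    have := degree_modByMonic_lt (fR i 0 * s i 0 + fR i 1 * s i 1) (hR_monic i).1
    rwa [hdeg] at this
  have hs : ∀ i k, (s i k).degree < 20 := fun i k =>
    lt_of_le_of_lt (degree_sub_le _ _) (max_lt (DD_degree _ _ 20 h1 k) (hr i k))
  have hsη : ∀ i k, (s i k - η i * eR i k).degree < 20 := fun i k => by
    refine lt_of_le_of_lt (degree_sub_le _ _) (max_lt (hs i k) ?_)
    rw [degree_mul]
    have a1 := hη i
    have a2 := eR_degree i k
    rcases eq_or_ne (η i) 0 with h0 | h0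
    · rw [h0, degree_zero, WithBot.bot_add]; exact WithBot.bot_lt_coe 20
    rcases eq_or_ne (eR i k) 0 with h0' | h0'
    · rw [h0', degree_zero, WithBot.add_bot]; exact WithBot.bot_lt_coe 20
    rw [degree_eq_natDegree h0] at a1 ⊢
    rw [degree_eq_natDegree h0'] at a2 ⊢
    norm_cast at a1 a2 ⊢
    omega
  have hdiv : ∀ i k, hR i ∣ s i k - η i * eR i k := by
    intro i k
    obtain ⟨w, hw⟩ := h2 i
    have hm := modByMonic_add_div (fR i 0 * s i 0 + fR i 1 * s i 1) (hR i)
    have hfe := fe_eq i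
    change η i + _ = _ at hm
    have hw' : eR i 1 * s i 0 - eR i 0 * s i 1 = hR i * w := by
      rw [← hw]; simp only [s]; ring
    fin_cases k
    · refine ⟨(fR i 0 * s i 0 + fR i 1 * s i 1) /ₘ hR i * eR i 0 + fR i 1 * w, ?_⟩
      simp only [Fin.zero_eta, Fin.isValue]
      linear_combination (-eR i 0) * hm - s i 0 * hfe + fR i 1 * hw'
    · refine ⟨(fR i 0 * s i 0 + fR i 1 * s i 1) /ₘ hR i * eR i 1 - fR i 0 * w, ?_⟩
      simp only [Fin.mk_one, Fin.isValue]
      linear_combination (-eR i 1) * hm - s i 1 * hfe - fR i 0 * hw'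
  refine ⟨δ, η, ε, h1, hη, ?_, ?_, h3, h4⟩
  · intro i k
    rcases eq_or_ne (ε i k) 0 with h0 | h0
    · rw [h0, degree_zero]; exact WithBot.bot_lt_coe 8
    · have e1 : hR i * ε i k = s i k - η i * eR i k := by
        obtain ⟨w, hw⟩ := hdiv i k
        simp only [ε]; rw [hw, mul_divByMonic_cancel_left _ (hR_monic i).1]
      have := hsη i k
      rw [← e1, degree_mul, hdeg, degree_eq_natDegree h0] at this
      rw [degree_eq_natDegree h0]
      have h12 : ((12 : ℕ) : WithBot ℕ) + ((ε i k).natDegree : WithBot ℕ) < ((20 : ℕ) : WithBot ℕ) :=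
        this
      norm_cast at h12
      have : (ε i k).natDegree < 8 := by omega
      exact_mod_cast this
  · intro i k
    have e1 : hR i * ε i k = s i k - η i * eR i k := by
      obtain ⟨w, hw⟩ := hdiv i k
      simp only [ε]; rw [hw, mul_divByMonic_cancel_left _ (hR_monic i).1]
    rw [e1]; simp only [s]; ring

/-- Reduction modulo 31. -/
abbrev rd : ℤ →+* ZMod 31 := Int.castRingHom (ZMod 31)

theorem rd_surj : Function.Surjective rd := ZMod.intCast_surjective

theorem lift_poly (q : (ZMod 31)[X]) : ∃ Q : ℤ[X], Q.map rd = q ∧ Q.degree = q.degree :=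
  exists_degree_eq_of_mem_lifts (mem_lifts_of_surjective rd_surj q)

theorem dvd_of_map_zero (f : ℤ[X]) (h : f.map rd = 0) : C 31 ∣ f := by
  rw [C_dvd_iff_dvd_coeff]
  intro i
  have : ((f.coeff i : ℤ) : ZMod 31) = 0 := by
    have := congrArg (fun p => p.coeff i) h
    simpa using this
  exact (ZMod.intCast_zmod_eq_zero_iff_dvd _ 31).1 this

structure ApproxSol (m : Fin 6 → Fin 2 → Fin 2 → ℤ) (y : Fin 4 → ℤ) (n : ℕ) where
  γ : Fin 4 → ℤ[X]
  h : Fin 6 → ℤ[X]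
  e : Fin 6 → Fin 2 → ℤ[X]
  γd : ∀ c, (γ c).degree < 20
  hm : ∀ i, (h i).Monic
  hd : ∀ i, (h i).natDegree = 12
  ed : ∀ i k, (e i k).degree < 8
  γr : ∀ c, (γ c).map rd = gR c
  hr : ∀ i, (h i).map rd = hR i
  er : ∀ i k, (e i k).map rd = eR i k
  eqn : ∀ i k, C (31 ^ n) ∣ DD (m i) γ k - h i * e i k
  ini : ∀ c, 31 ^ n ∣ (γ c).coeff 0 - y c
  lead : 31 ^ n ∣ (γ 0).coeff 19 - 1

theorem approx (m : Fin 6 → Fin 2 → Fin 2 → ℤ) (y : Fin 4 → ℤ)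
    (hm : ∀ i r c, (m i r c : ZMod 31) = mZ i r c) (hy : ∀ c, (y c : ZMod 31) = (gR c).coeff 0)
    (n : ℕ) : Nonempty (ApproxSol m y (n + 1)) := by
  have hmz : ∀ i, (fun r c => rd (m i r c)) = mZ i := fun i => by
    funext r c; exact hm i r c
  induction n with
  | zero =>
    choose γ hγ hγd using fun c => lift_poly (gR c)
    choose e he hed using fun (i : Fin 6) (k : Fin 2) => lift_poly (eR i k)
    have : ∀ i, ∃ Q : ℤ[X], Q.map rd = hR i ∧ Q.natDegree = (hR i).natDegree ∧ Q.Monic := fun i =>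
      lifts_and_natDegree_eq_and_monic (mem_lifts_of_surjective rd_surj _) (hR_monic i).1
    choose h hh hhd hhm using this
    refine ⟨⟨γ, h, e, fun c => by rw [hγd]; exact gR_degree c, hhm,
      fun i => by rw [hhd, (hR_monic i).2], fun i k => by rw [hed]; exact eR_degree i k,
      hγ, hh, he, ?_, ?_, ?_⟩⟩
    · intro i k
      simp only [zero_add, pow_one]
      apply dvd_of_map_zero
      rw [Polynomial.map_sub, DD_map, hmz, Polynomial.map_mul, hh, he]
      simp only [hγ]
      rw [ref_eq, sub_self]
    · intro c
      simp only [zero_add, pow_one]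
      apply (ZMod.intCast_zmod_eq_zero_iff_dvd _ 31).1
      have := congrArg (fun p => p.coeff 0) (hγ c)
      simp only [coeff_map] at this
      push_cast
      rw [hy, ← this]; simp
    · simp only [zero_add, pow_one]
      apply (ZMod.intCast_zmod_eq_zero_iff_dvd _ 31).1
      have := congrArg (fun p => p.coeff 19) (hγ 0)
      simp only [coeff_map, gR_lead] at this
      push_cast
      rw [sub_eq_zero, ← this]; simp
  | succ n ih =>
    obtain ⟨S⟩ := ih
    choose r hr using S.eqn
    choose y' hy' using S.ini
    obtain ⟨c', hc'⟩ := S.lead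
    have hp : (31 ^ (n + 1) : ℤ) ≠ 0 := by positivity
    have hrd : ∀ i k, (r i k).degree < 20 := by
      intro i k
      have h1 : (C (31 ^ (n + 1)) * r i k : ℤ[X]).degree = (r i k).degree := by
        rw [degree_mul, degree_C hp, zero_add]
      rw [← h1, ← hr]
      refine lt_of_le_of_lt (degree_sub_le _ _) (max_lt (DD_degree _ _ 20 S.γd k) ?_)
      rw [degree_mul, degree_eq_natDegree (S.hm i).ne_zero, S.hd]
      rcases eq_or_ne (S.e i k) 0 with h0 | h0
      · rw [h0, degree_zero, WithBot.add_bot]; exact WithBot.bot_lt_coe 20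
      have a := S.ed i k
      rw [degree_eq_natDegree h0] at a ⊢
      norm_cast at a ⊢
      omega
    obtain ⟨δ, η, ε, d1, d2, d3, q1, q2, q3⟩ := tangent_surj (fun i k => - (r i k).map rd)
      (fun i k => by rw [degree_neg]; exact lt_of_le_of_lt degree_map_le (hrd i k))
      (fun c => - (y' c : ZMod 31)) (-(c' : ZMod 31))
    choose δ' hδ hδd using fun c => lift_poly (δ c)
    choose η' hη hηd using fun c => lift_poly (η c)
    choose ε' hε hεd using fun (i : Fin 6) (k : Fin 2) => lift_poly (ε i k)
    have hC : (C (31 ^ (n + 1)) : ℤ[X]).map rd = 0 := by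
      have : rd (31 ^ (n + 1)) = 0 := by rw [map_pow, show rd 31 = 0 by decide, zero_pow (by omega)]
      rw [map_C, this, C_0]
    have hdC : ∀ f : ℤ[X], (C (31 ^ (n + 1)) * f : ℤ[X]).degree = f.degree := fun f => by
      rw [degree_mul, degree_C hp, zero_add]
    have hlt : ∀ i, (C (31 ^ (n + 1)) * η' i).degree < (S.h i).degree := fun i => by
      rw [hdC, hηd, degree_eq_natDegree (S.hm i).ne_zero, S.hd]; exact d2 i
    refine ⟨⟨fun c => S.γ c + C (31 ^ (n + 1)) * δ' c, fun i => S.h i + C (31 ^ (n + 1)) * η' i,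
      fun i k => S.e i k + C (31 ^ (n + 1)) * ε' i k, ?_, ?_, ?_, ?_, ?_, ?_, ?_, ?_, ?_, ?_⟩⟩
    · intro c
      refine lt_of_le_of_lt (degree_add_le _ _) (max_lt (S.γd c) ?_)
      rw [hdC, hδd]; exact d1 c
    · intro i
      exact (S.hm i).add_of_left (hlt i)
    · intro i
      rw [natDegree_add_eq_left_of_degree_lt (hlt i), S.hd]
    · intro i k
      refine lt_of_le_of_lt (degree_add_le _ _) (max_lt (S.ed i k) ?_)
      rw [hdC, hεd]; exact d3 i k
    · intro c
      rw [Polynomial.map_add, Polynomial.map_mul, hC, S.γr]; simp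
    · intro c
      rw [Polynomial.map_add, Polynomial.map_mul, hC, S.hr]; simp
    · intro c k
      rw [Polynomial.map_add, Polynomial.map_mul, hC, S.er]; simp
    · intro i k
      have hb : C 31 ∣ r i k + DD (m i) δ' k - η' i * S.e i k - S.h i * ε' i k -
          C (31 ^ (n + 1)) * η' i * ε' i k := by
        apply dvd_of_map_zero
        simp only [Polynomial.map_sub, Polynomial.map_add, Polynomial.map_mul, hC, DD_map, hmz,
          hδ, hη, hε, S.er, S.hr]
        have := q1 i k
        linear_combination this
      obtain ⟨b, hb⟩ := hb
      refine ⟨b, ?_⟩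
      rw [DD_add, show (31 : ℤ) ^ (n + 1 + 1) = 31 ^ (n + 1) * 31 from pow_succ _ _, C_mul, mul_assoc, ← hb]
      linear_combination hr i k
    · intro c
      have : (31 : ℤ) ∣ y' c + (δ' c).coeff 0 := by
        apply (ZMod.intCast_zmod_eq_zero_iff_dvd _ 31).1
        have h := congrArg (fun p => p.coeff 0) (hδ c)
        simp only [coeff_map] at h
        have h' := q2 c
        rw [← h] at h'
        push_cast
        simp only [eq_intCast] at h'
        rw [h']; ring
      obtain ⟨b, hb⟩ := this
      refine ⟨b, ?_⟩
      rw [coeff_add, coeff_C_mul, show (31 : ℤ) ^ (n + 1 + 1) = 31 ^ (n + 1) * 31 from pow_succ _ _, mul_assoc, ← hb]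
      linear_combination hy' c
    · have : (31 : ℤ) ∣ c' + (δ' 0).coeff 19 := by
        apply (ZMod.intCast_zmod_eq_zero_iff_dvd _ 31).1
        have h := congrArg (fun p => p.coeff 19) (hδ 0)
        simp only [coeff_map] at h
        have h' := q3
        rw [← h] at h'
        push_cast
        simp only [eq_intCast] at h'
        rw [h']; ring
      obtain ⟨b, hb⟩ := this
      refine ⟨b, ?_⟩
      rw [coeff_add, coeff_C_mul, show (31 : ℤ) ^ (n + 1 + 1) = 31 ^ (n + 1) * 31 from pow_succ _ _, mul_assoc, ← hb]
      linear_combination hc'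
end newton

section gadget
open PrimeSpectrum TensorProduct

theorem common_ext {κ B0 : Type} [Field κ] [CommRing B0] [Nontrivial B0] [Algebra κ B0] (ψ : κ →+* ℂ) :
    ∃ (B : Type) (_ : CommRing B) (_ : Nontrivial B) (i1 : ℂ →+* B) (j2 : B0 →+* B),
      ∀ c, i1 (ψ c) = j2 (algebraMap κ B0 c) := by
  let _ : Algebra κ ℂ := ψ.toAlgebra
  refine ⟨ℂ ⊗[κ] B0, inferInstance, inferInstance, Algebra.TensorProduct.includeLeftRingHom,
    (Algebra.TensorProduct.includeRight : B0 →ₐ[κ] ℂ ⊗[κ] B0).toRingHom, fun c => ?_⟩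
  have e3 := (Algebra.TensorProduct.includeRight : B0 →ₐ[κ] ℂ ⊗[κ] B0).commutes c
  refine Eq.trans ?_ e3.symm
  rw [Algebra.TensorProduct.algebraMap_apply]
  rfl

theorem generic_range {R A : Type} [CommRing R] [IsDomain R] [IsNoetherianRing R] [CommRing A]
    [Algebra R A] [hft : Algebra.FiniteType R A] (hin : Function.Injective (algebraMap R A)) :
    ∃ f : R, f ≠ 0 ∧ ∀ p : PrimeSpectrum R, f ∉ p.asIdeal → p ∈ Set.range (comap (algebraMap R A)) := by
  have hfp : (algebraMap R A).FinitePresentation :=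
    RingHom.FinitePresentation.of_finiteType.1 (RingHom.finiteType_algebraMap.2 hft)
  obtain ⟨S, hS⟩ := exists_constructibleSetData_iff.2 (isConstructible_range_comap hfp)
  have hbot : (⊥ : PrimeSpectrum R) ∈ S.toSet := by
    rw [hS]
    obtain ⟨q, hq, hq'⟩ := Ideal.exists_comap_eq_of_mem_minimalPrimes_of_injective hin ⊥
      (by rw [IsDomain.minimalPrimes_eq_singleton_bot]; rfl)
    exact ⟨⟨q, hq⟩, PrimeSpectrum.ext hq'⟩
  simp only [ConstructibleSetData.toSet, Set.mem_iUnion] at hbot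
  obtain ⟨D, hD, hb1, hb2⟩ := hbot
  have hg : ∀ i, D.g i = 0 := fun i => by
    have := hb1 (Set.mem_range_self i)
    simpa using this
  refine ⟨D.f, fun h0 => hb2 (by rw [h0]; simp), ?_⟩
  intro p hp
  rw [← hS]
  simp only [ConstructibleSetData.toSet, Set.mem_iUnion]
  refine ⟨D, hD, ?_, ?_⟩
  · rintro _ ⟨i, rfl⟩
    rw [hg]; simp
  · intro h
    exact hp (h (Set.mem_singleton _))

theorem common_ext2 {R A : Type} [CommRing R] [CommRing A] [Algebra R A] (φ : R →+* ℂ)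
    (q : PrimeSpectrum A) (hq : (comap (algebraMap R A) q).asIdeal = RingHom.ker φ) :
    ∃ (B : Type) (_ : CommRing B) (_ : Nontrivial B) (i1 : ℂ →+* B) (j2 : A →+* B),
      ∀ r, i1 (φ r) = j2 (algebraMap R A r) := by
  let p0 : PrimeSpectrum R := comap (algebraMap R A) q
  have hnt : Nontrivial (p0.asIdeal.ResidueField ⊗[R] A) :=
    (nontrivial_iff_mem_rangeComap p0).2 ⟨q, rfl⟩
  let ψ : p0.asIdeal.ResidueField →+* ℂ := Ideal.ResidueField.lift p0.asIdeal φ hq.le (by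
    intro s hs
    rw [Submonoid.mem_comap, IsUnit.mem_submonoid_iff, isUnit_iff_ne_zero]
    intro h0
    apply hs
    change s ∈ p0.asIdeal
    rw [show p0.asIdeal = RingHom.ker φ from hq]
    exact h0)
  have hψ : ∀ r, ψ (algebraMap R _ r) = φ r := fun r => Ideal.ResidueField.lift_algebraMap _ _ _ _ _
  obtain ⟨B, hB1, hB2, i1, j2, hij⟩ := common_ext (B0 := p0.asIdeal.ResidueField ⊗[R] A) ψ
  refine ⟨B, hB1, hB2, i1, j2.comp (Algebra.TensorProduct.includeRight :
    A →ₐ[R] p0.asIdeal.ResidueField ⊗[R] A).toRingHom, fun r => ?_⟩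
  rw [RingHom.comp_apply]
  have e1 := (Algebra.TensorProduct.includeRight :
    A →ₐ[R] p0.asIdeal.ResidueField ⊗[R] A).commutes r
  have e2 : algebraMap R (p0.asIdeal.ResidueField ⊗[R] A) r =
      algebraMap p0.asIdeal.ResidueField _ (algebraMap R _ r) := by
    rw [← IsScalarTower.algebraMap_apply]
  change _ = j2 ((Algebra.TensorProduct.includeRight :
    A →ₐ[R] p0.asIdeal.ResidueField ⊗[R] A) _)
  rw [e1, e2, ← hij, hψ]

theorem point_lift {R τ : Type} [CommRing R] [Finite τ] (J : Ideal (MvPolynomial τ R)) (φ : R →+* ℂ)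
    (q : PrimeSpectrum (MvPolynomial τ R ⧸ J))
    (hq : (comap (algebraMap R (MvPolynomial τ R ⧸ J)) q).asIdeal = RingHom.ker φ) :
    ∃ x : τ → ℂ, ∀ p ∈ J, MvPolynomial.eval₂ φ x p = 0 := by
  obtain ⟨B, hB1, hB2, i1, j2, key⟩ := common_ext2 φ q hq
  by_contra hcon
  push Not at hcon
  set J' : Ideal (MvPolynomial τ ℂ) := J.map (MvPolynomial.map φ) with hJ'
  have hz : MvPolynomial.zeroLocus ℂ J' = ∅ := by
    rw [Set.eq_empty_iff_forall_notMem]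
    intro x hx
    obtain ⟨p, hp, hne⟩ := hcon x
    apply hne
    have := hx _ (Ideal.mem_map_of_mem (MvPolynomial.map φ) hp)
    rw [MvPolynomial.aeval_def, MvPolynomial.eval₂_map] at this
    exact this
  have ht : J' = ⊤ := by
    rw [← Ideal.radical_eq_top, ← MvPolynomial.vanishingIdeal_zeroLocus_eq_radical (K := ℂ), hz]
    exact MvPolynomial.vanishingIdeal_empty
  let g : MvPolynomial τ ℂ →+* _ := MvPolynomial.eval₂Hom i1
    (fun t => j2 (Ideal.Quotient.mk J (MvPolynomial.X t)))
  have hg : g.comp (MvPolynomial.map φ) = j2.comp (Ideal.Quotient.mk J) := by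
    apply MvPolynomial.ringHom_ext
    · intro r
      rw [RingHom.comp_apply, MvPolynomial.map_C, MvPolynomial.eval₂Hom_C, key]; rfl
    · intro t
      simp [g]
  have hle : J' ≤ RingHom.ker g := by
    rw [hJ', Ideal.map_le_iff_le_comap]
    intro p hp
    rw [Ideal.mem_comap, RingHom.mem_ker, ← RingHom.comp_apply, hg, RingHom.comp_apply,
      Ideal.Quotient.eq_zero_iff_mem.2 hp, map_zero]
  have h1 : g 1 = 0 := hle (by rw [ht]; trivial)
  rw [map_one] at h1
  exact one_ne_zero h1

theorem gadget0 {σ τ : Type} [Finite σ] [Finite τ] (J : Ideal (MvPolynomial τ (MvPolynomial σ ℤ)))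
    (hinj : ∀ f : MvPolynomial σ ℤ, MvPolynomial.C f ∈ J → f = 0) :
    ∃ P : MvPolynomial σ ℤ, P ≠ 0 ∧ ∀ a : σ → ℂ, MvPolynomial.aeval a P ≠ 0 →
      ∃ x : τ → ℂ, ∀ p ∈ J,
        MvPolynomial.eval₂ (MvPolynomial.aeval a : MvPolynomial σ ℤ →ₐ[ℤ] ℂ).toRingHom x p = 0 := by
  obtain ⟨f, hf0, hf⟩ := generic_range (R := MvPolynomial σ ℤ)
    (A := MvPolynomial τ (MvPolynomial σ ℤ) ⧸ J) (by
      rw [injective_iff_map_eq_zero]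
      intro f hf
      exact hinj f (Ideal.Quotient.eq_zero_iff_mem.1 hf))
  refine ⟨f, hf0, fun a ha => ?_⟩
  obtain ⟨q, hq⟩ := hf ⟨RingHom.ker (MvPolynomial.aeval a : MvPolynomial σ ℤ →ₐ[ℤ] ℂ).toRingHom,
    RingHom.ker_isPrime _⟩ ha
  exact point_lift J _ q (by rw [hq])

theorem gadget {σ τ ι : Type} [Finite σ] [Finite τ]
    (E : ι → Polynomial (MvPolynomial τ (MvPolynomial σ ℤ))) (a0 : σ → ℤ)
    (h : ∀ a : σ → ℤ, (∀ s, (31 : ℤ) ∣ a s - a0 s) → ∀ n : ℕ, ∃ x : τ → ZMod (31 ^ (n + 1)),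
      ∀ i, (E i).map (MvPolynomial.eval₂Hom
        (MvPolynomial.eval₂Hom (Int.castRingHom (ZMod (31 ^ (n + 1)))) (fun s => (a s : ZMod _))) x) = 0) :
    ∃ P : MvPolynomial σ ℤ, P ≠ 0 ∧ ∀ a : σ → ℂ, MvPolynomial.aeval a P ≠ 0 →
      ∃ x : τ → ℂ, ∀ i, (E i).map (MvPolynomial.eval₂Hom
        (MvPolynomial.aeval a : MvPolynomial σ ℤ →ₐ[ℤ] ℂ).toRingHom x) = 0 := by
  let J : Ideal (MvPolynomial τ (MvPolynomial σ ℤ)) :=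
    Ideal.span (Set.range fun q : ι × ℕ => (E q.1).coeff q.2)
  obtain ⟨P, hP, hP'⟩ := gadget0 J (by
    intro f hf
    apply MvPolynomial.funext_set (fun s => {b : ℤ | (31 : ℤ) ∣ b - a0 s})
    · intro s
      have : Function.Injective (fun k : ℕ => a0 s + 31 * (k : ℤ)) := by
        intro k l hkl; simpa using hkl
      refine (Set.infinite_range_of_injective this).mono ?_
      rintro _ ⟨k, rfl⟩
      exact ⟨k, by ring⟩
    · intro a ha
      rw [map_zero]
      have ha' : ∀ s, (31 : ℤ) ∣ a s - a0 s := fun s => ha s trivial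
      by_contra hne
      obtain ⟨n, hn⟩ : ∃ n : ℕ, ¬ (31 : ℤ) ^ (n + 1) ∣ MvPolynomial.eval a f := by
        obtain ⟨n, hn⟩ : FiniteMultiplicity (31 : ℤ) (MvPolynomial.eval a f) :=
          Int.finiteMultiplicity_iff.2 ⟨by norm_num, hne⟩
        exact ⟨n, hn⟩
      apply hn
      obtain ⟨x, hx⟩ := h a ha' n
      set Φ := MvPolynomial.eval₂Hom
        (MvPolynomial.eval₂Hom (Int.castRingHom (ZMod (31 ^ (n + 1)))) (fun s => (a s : ZMod _))) x
      have hle : J ≤ RingHom.ker Φ := by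
        rw [Ideal.span_le]
        rintro _ ⟨⟨i, k⟩, rfl⟩
        have := congrArg (fun p => p.coeff k) (hx i)
        simpa using this
      have h0 : Φ (MvPolynomial.C f) = 0 := hle hf
      simp only [Φ, MvPolynomial.eval₂Hom_C] at h0
      have h1 : ((MvPolynomial.eval a f : ℤ) : ZMod (31 ^ (n + 1))) = 0 := by
        rw [← h0]
        have : (MvPolynomial.eval₂Hom (Int.castRingHom (ZMod (31 ^ (n + 1))))
          (fun s => (a s : ZMod (31 ^ (n + 1))))) =
          (Int.castRingHom (ZMod (31 ^ (n + 1)))).comp (MvPolynomial.eval a) := by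
          apply MvPolynomial.ringHom_ext <;> simp
        rw [this]; rfl
      have := (ZMod.intCast_zmod_eq_zero_iff_dvd _ _).1 h1
      exact_mod_cast this)
  refine ⟨P, hP, fun a ha => ?_⟩
  obtain ⟨x, hx⟩ := hP' a ha
  refine ⟨x, fun i => ?_⟩
  ext k
  rw [Polynomial.coeff_map, Polynomial.coeff_zero]
  exact hx _ (Ideal.subset_span ⟨(i, k), rfl⟩)
end gadget

section lowerA
open Polynomial

abbrev SL : Type := (Fin 6 × Fin 2 × Fin 2) ⊕ Fin 4
abbrev IL : Type := Fin 4 ⊕ Fin 6 ⊕ (Fin 6 × Fin 2) ⊕ Fin 2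
abbrev TL : Type := IL × Fin 20
abbrev QL : Type := (Fin 6 × Fin 2) ⊕ Fin 6 ⊕ Fin 4 ⊕ Unit

noncomputable def Gp {A : Type} [CommRing A] (x : TL → A) (j : IL) : A[X] :=
  ∑ k : Fin 20, C (x (j, k)) * X ^ (k : ℕ)

noncomputable def EQ {A : Type} [CommRing A] (a : SL → A) (x : TL → A) : QL → A[X]
  | .inl (i, k) => DD (fun r c => a (.inl (i, r, c))) (fun c => Gp x (.inl c)) k -
      Gp x (.inr (.inl i)) * Gp x (.inr (.inr (.inl (i, k))))
  | .inr (.inl i) => C ((Gp x (.inr (.inl i))).coeff 12) - 1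
  | .inr (.inr (.inl c)) => C ((Gp x (.inl c)).coeff 0) - C (a (.inr c))
  | .inr (.inr (.inr ())) => Gp x (.inr (.inr (.inr 0))) * Gp x (.inl 0) +
      Gp x (.inr (.inr (.inr 1))) * Gp x (.inl 1) - 1

theorem Gp_map {A B : Type} [CommRing A] [CommRing B] (f : A →+* B) (x : TL → A) (j : IL) :
    (Gp x j).map f = Gp (fun t => f (x t)) j := by
  simp [Gp, Polynomial.map_sum]

theorem EQ_map {A B : Type} [CommRing A] [CommRing B] (f : A →+* B) (a : SL → A) (x : TL → A) (q : QL) :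
    (EQ a x q).map f = EQ (fun s => f (a s)) (fun t => f (x t)) q := by
  rcases q with ⟨i, k⟩ | i | c | _
  · simp only [EQ, Polynomial.map_sub, Polynomial.map_mul, DD_map, Gp_map]
  · simp only [EQ, Polynomial.map_sub, Polynomial.map_one, map_C, ← Gp_map, coeff_map]
  · simp only [EQ, Polynomial.map_sub, map_C, ← Gp_map, coeff_map]
  · simp only [EQ, Polynomial.map_sub, Polynomial.map_add, Polynomial.map_mul, Polynomial.map_one, Gp_map]

theorem Gp_coeff {A : Type} [CommRing A] (p : IL → A[X]) (j : IL) (h : (p j).degree < 20) :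
    Gp (fun t => (p t.1).coeff t.2) j = p j := by
  simp only [Gp]
  rw [Fin.sum_univ_eq_sum_range (fun k => C ((p j).coeff k) * X ^ k) 20]
  conv_rhs => rw [as_sum_range_C_mul_X_pow' (p j) (n := 20) (by
    rcases eq_or_ne (p j) 0 with h0 | h0
    · rw [h0]; simp
    · exact (natDegree_lt_iff_degree_lt h0).2 h)]

theorem bez_lift {B : Type} [CommRing B] [Nontrivial B] (f g u v : B[X]) (hf : f.Monic)
    (hfd : f.natDegree = 19) (hg : g.degree < 20) (h : u * f + v * g = 1) :
    ∃ u' v' : B[X], u'.degree < 20 ∧ v'.degree < 20 ∧ u' * f + v' * g = 1 := by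
  have hm := modByMonic_add_div v f
  have hv : (v %ₘ f).degree < 19 := by
    have := degree_modByMonic_lt v hf
    rwa [degree_eq_natDegree hf.ne_zero, hfd] at this
  have hv' : (v %ₘ f).natDegree ≤ 18 := by
    have : (v %ₘ f).natDegree < 19 := by
      rcases eq_or_ne (v %ₘ f) 0 with h0 | h0
      · rw [h0]; simp
      · exact (natDegree_lt_iff_degree_lt h0).2 hv
    omega
  have hg' : g.natDegree ≤ 19 := by
    have : g.natDegree < 20 := by
      rcases eq_or_ne g 0 with h0 | h0
      · rw [h0]; simp
      · exact (natDegree_lt_iff_degree_lt h0).2 hg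
    omega
  have he : f * (u + (v /ₘ f) * g) = 1 - (v %ₘ f) * g := by
    linear_combination h + g * hm
  refine ⟨u + (v /ₘ f) * g, v %ₘ f, ?_, lt_trans hv (by norm_num), by linear_combination he⟩
  rcases eq_or_ne (u + (v /ₘ f) * g) 0 with h0 | h0
  · rw [h0, degree_zero]; exact WithBot.bot_lt_coe 20
  · have h1 := hf.natDegree_mul' h0
    rw [he, hfd] at h1
    have h2 : (1 - (v %ₘ f) * g).natDegree ≤ 37 := by
      refine (natDegree_sub_le _ _).trans (max_le (by simp) ?_)
      exact natDegree_mul_le.trans (by omega)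
    have h3 : (u + (v /ₘ f) * g).natDegree < 20 := by omega
    exact (natDegree_lt_iff_degree_lt h0).1 h3

/-- Lifted reference point. -/
noncomputable def aRef : SL → ℤ
  | .inl (i, r, c) => (mR i r c : ℤ)
  | .inr c => (((gR c).coeff 0).val : ℤ)

theorem solve_approx (a : SL → ℤ) (ha : ∀ s, (31 : ℤ) ∣ a s - aRef s) (n : ℕ) :
    ∃ x : TL → ZMod (31 ^ (n + 1)), ∀ q, EQ (fun s => (a s : ZMod (31 ^ (n + 1)))) x q = 0 := by
  have h31 : ∀ s, ((a s : ℤ) : ZMod 31) = (aRef s : ZMod 31) := fun s => by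
    have := (ZMod.intCast_zmod_eq_zero_iff_dvd (a s - aRef s) 31).2 (ha s)
    push_cast at this
    exact sub_eq_zero.1 this
  obtain ⟨S⟩ := approx (fun i r c => a (.inl (i, r, c))) (fun c => a (.inr c))
    (fun i r c => by rw [h31]; simp [aRef, mZ]) (fun c => by rw [h31]; simp [aRef]) n
  haveI : Fact (1 < 31 ^ (n + 1)) := ⟨Nat.one_lt_pow (by omega) (by norm_num)⟩
  set f : ℤ →+* ZMod (31 ^ (n + 1)) := Int.castRingHom _ with hf
  have hf0 : ∀ z : ℤ, 31 ^ (n + 1) ∣ z → f z = 0 := fun z hz => by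
    rw [hf, eq_intCast, ZMod.intCast_zmod_eq_zero_iff_dvd]; exact_mod_cast hz
  have hγ : ∀ c, ((S.γ c).map f).degree < 20 := fun c => lt_of_le_of_lt degree_map_le (S.γd c)
  have hlead : ((S.γ 0).map f).coeff 19 = 1 := by
    have := hf0 _ S.lead
    rw [map_sub, map_one, sub_eq_zero] at this
    rw [coeff_map, this]
  have hnd : ((S.γ 0).map f).natDegree = 19 := by
    apply natDegree_eq_of_le_of_coeff_ne_zero
    · exact natDegree_le_iff_degree_le.2 (Order.le_of_lt_succ (by exact_mod_cast hγ 0))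
    · rw [hlead]; exact one_ne_zero
  have hmon : ((S.γ 0).map f).Monic := by rw [Monic, leadingCoeff, hnd, hlead]
  obtain ⟨u0, v0, huv⟩ := gR_coprime
  obtain ⟨U, hU, -⟩ := lift_poly u0
  obtain ⟨V, hV, -⟩ := lift_poly v0
  obtain ⟨s, hs⟩ := dvd_of_map_zero (U * S.γ 0 + V * S.γ 1 - 1) (by
    simp only [Polynomial.map_sub, Polynomial.map_add, Polynomial.map_mul, Polynomial.map_one,
      hU, hV, S.γr, huv, sub_self])
  have hunit : IsUnit (1 + C (f 31) * s.map f) := by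
    apply IsNilpotent.isUnit_one_add
    refine ⟨n + 1, ?_⟩
    rw [mul_pow, ← C_pow, ← map_pow, hf0 _ dvd_rfl, C_0, zero_mul]
  obtain ⟨w, hw⟩ := hunit.exists_right_inv
  have hs' := congrArg (Polynomial.map f) hs
  simp only [Polynomial.map_sub, Polynomial.map_add, Polynomial.map_mul, Polynomial.map_one, map_C] at hs'
  obtain ⟨u, v, hu, hv, hb⟩ := bez_lift _ ((S.γ 1).map f) (w * U.map f) (w * V.map f) hmon hnd (hγ 1) (by
    linear_combination w * hs' + hw)
  let p : IL → (ZMod (31 ^ (n + 1)))[X] := fun j => match j with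
    | .inl c => (S.γ c).map f
    | .inr (.inl i) => (S.h i).map f
    | .inr (.inr (.inl (i, k))) => (S.e i k).map f
    | .inr (.inr (.inr k)) => ![u, v] k
  have hp : ∀ j, (p j).degree < 20 := by
    rintro (c | i | ⟨i, k⟩ | k)
    · exact hγ c
    · refine lt_of_le_of_lt degree_map_le ?_
      rw [degree_eq_natDegree (S.hm i).ne_zero, S.hd]
      norm_num
    · exact lt_of_le_of_lt degree_map_le (lt_trans (S.ed i k) (by norm_num))
    · fin_cases k
      · exact hu
      · exact hv
  refine ⟨fun t => (p t.1).coeff t.2, ?_⟩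
  rintro (⟨i, k⟩ | i | c | _)
  · simp only [EQ, Gp_coeff p _ (hp _), p]
    obtain ⟨b, hb⟩ := S.eqn i k
    have := congrArg (Polynomial.map f) hb
    rw [Polynomial.map_mul, map_C, hf0 _ dvd_rfl, C_0, zero_mul, Polynomial.map_sub, DD_map,
      Polynomial.map_mul] at this
    exact this
  · simp only [EQ, Gp_coeff p _ (hp _), p]
    have : (S.h i).coeff 12 = 1 := by
      have := S.hm i
      rwa [Monic, leadingCoeff, S.hd] at this
    rw [coeff_map, this]; simp
  · simp only [EQ, Gp_coeff p _ (hp _), p]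
    have := hf0 _ (S.ini c)
    rw [map_sub] at this
    rw [coeff_map, ← C_sub]
    exact (by rw [← C_0]; exact congrArg C this)
  · simp only [EQ, Gp_coeff p _ (hp _), p]
    simp [hb]

theorem Gp_natDegree {A : Type} [CommRing A] (x : TL → A) (j : IL) : (Gp x j).natDegree ≤ 19 := by
  apply natDegree_sum_le_of_forall_le
  intro k _
  exact (natDegree_C_mul_X_pow_le _ _).trans (by omega)

theorem exact_curve : ∃ P : MvPolynomial SL ℤ, P ≠ 0 ∧ ∀ a : SL → ℂ, MvPolynomial.aeval a P ≠ 0 →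
    ∃ (γ : Fin 4 → ℂ[X]) (h : Fin 6 → ℂ[X]) (e : Fin 6 → Fin 2 → ℂ[X]),
      (∀ c, (γ c).natDegree ≤ 19) ∧ (∀ i, 12 ≤ (h i).natDegree) ∧
      (∀ i k, DD (fun r c => a (.inl (i, r, c))) γ k = h i * e i k) ∧
      (∀ c, (γ c).coeff 0 = a (.inr c)) ∧ IsCoprime (γ 0) (γ 1) := by
  obtain ⟨P, hP, hP'⟩ := gadget (σ := SL) (τ := TL) (ι := QL)
    (fun q => EQ (fun s => MvPolynomial.C (MvPolynomial.X s)) MvPolynomial.X q) aRef (by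
      intro a ha n
      obtain ⟨x, hx⟩ := solve_approx a ha n
      refine ⟨x, fun q => ?_⟩
      rw [EQ_map]
      simpa using hx q)
  refine ⟨P, hP, fun a ha => ?_⟩
  obtain ⟨x, hx⟩ := hP' a ha
  have hx : ∀ q, EQ a x q = 0 := fun q => by
    have := hx q
    rw [EQ_map] at this
    simpa using this
  refine ⟨fun c => Gp x (.inl c), fun i => Gp x (.inr (.inl i)),
    fun i k => Gp x (.inr (.inr (.inl (i, k)))), fun c => Gp_natDegree _ _, ?_, ?_, ?_, ?_⟩
  · intro i
    have := hx (.inr (.inl i))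
    simp only [EQ] at this
    rw [← C_1, ← C_sub, C_eq_zero, sub_eq_zero] at this
    exact le_natDegree_of_ne_zero (by rw [this]; exact one_ne_zero)
  · intro i k
    exact sub_eq_zero.1 (hx (.inl (i, k)))
  · intro c
    have := hx (.inr (.inr (.inl c)))
    simp only [EQ] at this
    rwa [← C_sub, C_eq_zero, sub_eq_zero] at this
  · exact ⟨_, _, sub_eq_zero.1 (hx (.inr (.inr (.inr ()))))⟩
end lowerA

section lowerB
open Polynomial

theorem curve_dvd (m : Fin 2 → Fin 2 → ℂ) (γ : Fin 4 → ℂ[X]) (h : ℂ[X]) (e : Fin 2 → ℂ[X])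
    (hd : ∀ k, DD m γ k = h * e k) (G : R3)
    (hG : ∀ x0 x1 : ℂ, MvPolynomial.eval ![x0, x1, x0 * m 0 0 + x1 * m 1 0, x0 * m 0 1 + x1 * m 1 1] G = 0) :
    h ∣ MvPolynomial.aeval γ G := by
  let γ' : Fin 4 → ℂ[X] := ![γ 0, γ 1, γ 0 * C (m 0 0) + γ 1 * C (m 1 0), γ 0 * C (m 0 1) + γ 1 * C (m 1 1)]
  have h0 : MvPolynomial.aeval γ' G = 0 := by
    apply Polynomial.funext
    intro t
    have : (Polynomial.evalRingHom t).comp (MvPolynomial.aeval γ' : R3 →ₐ[ℂ] ℂ[X]).toRingHom =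
        MvPolynomial.eval ![(γ 0).eval t, (γ 1).eval t, (γ 0).eval t * m 0 0 + (γ 1).eval t * m 1 0,
          (γ 0).eval t * m 0 1 + (γ 1).eval t * m 1 1] := by
      apply MvPolynomial.ringHom_ext
      · intro r; simp
      · intro i; fin_cases i <;> simp [γ']
    have h2 := congrArg (fun φ => φ G) this
    simp only [hG] at h2
    rw [eval_zero]
    exact h2
  have key : Ideal.Quotient.mk (Ideal.span {h}) (MvPolynomial.aeval γ G) =
      Ideal.Quotient.mk (Ideal.span {h}) (MvPolynomial.aeval γ' G) := by
    have : (Ideal.Quotient.mk (Ideal.span {h})).comp (MvPolynomial.aeval γ : R3 →ₐ[ℂ] ℂ[X]).toRingHom =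
      (Ideal.Quotient.mk (Ideal.span {h})).comp (MvPolynomial.aeval γ' : R3 →ₐ[ℂ] ℂ[X]).toRingHom := by
      apply MvPolynomial.ringHom_ext
      · intro r; simp
      · intro i
        simp only [AlgHom.toRingHom_eq_coe, RingHom.comp_apply, RingHom.coe_coe, MvPolynomial.aeval_X]
        rw [Ideal.Quotient.eq, Ideal.mem_span_singleton]
        have e0 := hd 0
        have e1 := hd 1
        simp only [DD, Matrix.cons_val_zero, Matrix.cons_val_one] at e0 e1
        fin_cases i
        · simp [γ']
        · simp [γ']
        · exact ⟨e 0, by simp [γ']; linear_combination e0⟩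
        · exact ⟨e 1, by simp [γ']; linear_combination e1⟩
    exact congrArg (fun φ => φ G) this
  rw [h0, map_zero, Ideal.Quotient.eq_zero_iff_mem, Ideal.mem_span_singleton] at key
  exact key

theorem homog_natDegree (γ : Fin 4 → ℂ[X]) (hγ : ∀ c, (γ c).natDegree ≤ 19) (F : R3) (d : ℕ)
    (hF : F.IsHomogeneous d) : (MvPolynomial.aeval γ F).natDegree ≤ 19 * d := by
  rw [MvPolynomial.aeval_def, MvPolynomial.eval₂_eq]
  apply natDegree_sum_le_of_forall_le
  intro s hs
  have hs' : s.degree = d := by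
    have := hF (MvPolynomial.mem_support_iff.1 hs)
    rw [Finsupp.degree_eq_weight_one]; exact this
  refine (natDegree_C_mul_le _ _).trans ((natDegree_prod_le _ _).trans ?_)
  rw [← hs', Finsupp.degree_apply, Finset.mul_sum]
  apply Finset.sum_le_sum
  intro i _
  refine natDegree_pow_le.trans ?_
  rw [mul_comm]
  exact Nat.mul_le_mul_right _ (hγ i)

theorem lower_vanish (M : Fin 6 → Fin 2 → Fin 2 → ℂ)
    (hdet : ∀ i j, i ≠ j → (M i 0 0 - M j 0 0) * (M i 1 1 - M j 1 1) -
      (M i 0 1 - M j 0 1) * (M i 1 0 - M j 1 0) ≠ 0)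
    (γ : Fin 4 → ℂ[X]) (h : Fin 6 → ℂ[X]) (e : Fin 6 → Fin 2 → ℂ[X])
    (hγ : ∀ c, (γ c).natDegree ≤ 19) (hh : ∀ i, 12 ≤ (h i).natDegree)
    (hd : ∀ i k, DD (M i) γ k = h i * e i k) (hco : IsCoprime (γ 0) (γ 1))
    (I : Fin 6 → Ideal R3)
    (hI : ∀ i, ∀ G ∈ I i, ∀ x0 x1 : ℂ, MvPolynomial.eval ![x0, x1, x0 * M i 0 0 + x1 * M i 1 0,
      x0 * M i 0 1 + x1 * M i 1 1] G = 0)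
    (m d : ℕ) (hmd : 19 * d < 72 * m) (F : R3) (hF : F.IsHomogeneous d) (hFI : ∀ i, F ∈ I i ^ m) :
    MvPolynomial.eval (fun c => (γ c).coeff 0) F = 0 := by
  have hdvd : ∀ i, h i ^ m ∣ MvPolynomial.aeval γ F := by
    intro i
    have h1 : I i ≤ (Ideal.span {h i}).comap (MvPolynomial.aeval γ : R3 →ₐ[ℂ] ℂ[X]) := by
      intro G hG
      rw [Ideal.mem_comap, Ideal.mem_span_singleton]
      exact curve_dvd (M i) γ (h i) (e i) (hd i) G (hI i G hG)
    have h2 := (Ideal.pow_right_mono h1 m).trans (Ideal.le_comap_pow _ m) (hFI i)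
    rwa [Ideal.mem_comap, Ideal.span_singleton_pow, Ideal.mem_span_singleton] at h2
  have hcop : Pairwise (Function.onFun IsCoprime fun i => h i ^ m) := by
    intro i j hij
    apply IsCoprime.pow
    apply (isCoprime_iff_aeval_ne_zero_of_isAlgClosed ℂ ℂ (h i) (h j)).2
    intro t
    by_contra hcon
    push Not at hcon
    obtain ⟨hi, hj⟩ := hcon
    simp only [coe_aeval_eq_eval] at hi hj
    have ei : ∀ k, (DD (M i) γ k).eval t = 0 := fun k => by rw [hd, eval_mul, hi, zero_mul]
    have ej : ∀ k, (DD (M j) γ k).eval t = 0 := fun k => by rw [hd, eval_mul, hj, zero_mul]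
    have i0 := ei 0
    have i1 := ei 1
    have j0 := ej 0
    have j1 := ej 1
    simp only [DD, Matrix.cons_val_zero, Matrix.cons_val_one, eval_sub, eval_mul, eval_C] at i0 i1 j0 j1
    obtain ⟨u, v, huv⟩ := hco
    have huv := congrArg (Polynomial.eval t) huv
    simp only [eval_add, eval_mul, eval_one] at huv
    have z0 : (γ 0).eval t = 0 := by
      apply (mul_eq_zero.1 _).resolve_left (hdet i j hij)
      linear_combination (M i 1 1 - M j 1 1) * (j0 - i0) - (M i 1 0 - M j 1 0) * (j1 - i1)
    have z1 : (γ 1).eval t = 0 := by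
      apply (mul_eq_zero.1 _).resolve_left (hdet i j hij)
      linear_combination -(M i 0 1 - M j 0 1) * (j0 - i0) + (M i 0 0 - M j 0 0) * (j1 - i1)
    rw [z0, z1] at huv
    simp at huv
  have hprod : ∏ i, h i ^ m ∣ MvPolynomial.aeval γ F :=
    Fintype.prod_dvd_of_coprime hcop hdvd
  have hz : MvPolynomial.aeval γ F = 0 := by
    by_contra hne
    have h1 := natDegree_le_of_dvd hprod hne
    have h2 := homog_natDegree γ hγ F d hF
    have hn : ∀ i, h i ≠ 0 := fun i h0 => by
      have := hh i
      rw [h0] at this; simp at this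
    rw [natDegree_prod _ _ (fun i _ => pow_ne_zero _ (hn i))] at h1
    have h3 : 6 * (m * 12) ≤ ∑ i, (h i ^ m).natDegree := by
      have : ∑ i : Fin 6, m * 12 ≤ ∑ i, (h i ^ m).natDegree := by
        apply Finset.sum_le_sum
        intro i _
        rw [natDegree_pow]
        exact Nat.mul_le_mul_left _ (hh i)
      simpa using this
    omega
  have : (Polynomial.evalRingHom 0).comp (MvPolynomial.aeval γ : R3 →ₐ[ℂ] ℂ[X]).toRingHom =
      MvPolynomial.eval (fun c => (γ c).coeff 0) := by
    apply MvPolynomial.ringHom_ext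
    · intro r; simp
    · intro i; simp [coeff_zero_eq_eval_zero]
  rw [← this]
  simp [hz]

theorem lower_bound : ∃ P : MvPolynomial (Fin 6 × Fin 2 × Fin 2) ℤ, P ≠ 0 ∧
    ∀ M : Fin 6 → Fin 2 → Fin 2 → ℂ,
    MvPolynomial.aeval (fun s : Fin 6 × Fin 2 × Fin 2 => M s.1 s.2.1 s.2.2) P ≠ 0 →
    (∀ i j, i ≠ j → (M i 0 0 - M j 0 0) * (M i 1 1 - M j 1 1) -
      (M i 0 1 - M j 0 1) * (M i 1 0 - M j 1 0) ≠ 0) →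
    ∀ I : Fin 6 → Ideal R3,
    (∀ i, ∀ G ∈ I i, ∀ x0 x1 : ℂ, MvPolynomial.eval ![x0, x1, x0 * M i 0 0 + x1 * M i 1 0,
      x0 * M i 0 1 + x1 * M i 1 1] G = 0) →
    ∀ (m d : ℕ) (F : R3), F.IsHomogeneous d → (∀ i, F ∈ I i ^ m) → F ≠ 0 → 72 * m ≤ 19 * d := by
  obtain ⟨P, hP, hP'⟩ := exact_curve
  obtain ⟨b, hb⟩ : ∃ b : SL → ℤ, MvPolynomial.eval b P ≠ 0 := by
    by_contra hcon
    push Not at hcon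
    exact hP (MvPolynomial.funext (fun x => by rw [hcon, map_zero]))
  let sub : SL → MvPolynomial (Fin 6 × Fin 2 × Fin 2) ℤ :=
    Sum.elim MvPolynomial.X (fun c => MvPolynomial.C (b (.inr c)))
  refine ⟨MvPolynomial.aeval sub P, ?_, ?_⟩
  · intro h0
    apply hb
    have := congrArg (MvPolynomial.eval (fun s => b (.inl s))) h0
    rw [map_zero] at this
    rw [← this]
    have h3 : MvPolynomial.eval b = (MvPolynomial.eval (fun s => b (.inl s))).comp
        (MvPolynomial.aeval sub : MvPolynomial SL ℤ →ₐ[ℤ] _).toRingHom := by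
      apply MvPolynomial.ringHom_ext
      · intro r; simp
      · rintro (i | i) <;> simp [sub]
    rw [h3]; rfl
  · intro M hM hdet I hI m d F hF hFI hne
    by_contra hlt
    push Not at hlt
    let PM : R3 := MvPolynomial.aeval (Sum.elim (fun s : Fin 6 × Fin 2 × Fin 2 =>
      (MvPolynomial.C (M s.1 s.2.1 s.2.2) : R3)) MvPolynomial.X) P
    have ePM : ∀ y : Fin 4 → ℂ, MvPolynomial.eval y PM =
        MvPolynomial.aeval (Sum.elim (fun s : Fin 6 × Fin 2 × Fin 2 => M s.1 s.2.1 s.2.2) y) P := by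
      intro y
      have h3 : (MvPolynomial.eval y).comp (MvPolynomial.aeval (Sum.elim (fun s : Fin 6 × Fin 2 × Fin 2 =>
          (MvPolynomial.C (M s.1 s.2.1 s.2.2) : R3)) MvPolynomial.X) : MvPolynomial SL ℤ →ₐ[ℤ] _).toRingHom =
          (MvPolynomial.aeval (Sum.elim (fun s : Fin 6 × Fin 2 × Fin 2 => M s.1 s.2.1 s.2.2) y) :
            MvPolynomial SL ℤ →ₐ[ℤ] _).toRingHom := by
        apply MvPolynomial.ringHom_ext
        · intro r; simp
        · rintro (i | i) <;> simp
      exact congrArg (fun φ => φ P) h3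
    have hPM : PM ≠ 0 := by
      intro h0
      apply hM
      have h4 := ePM (fun c => (b (.inr c) : ℂ))
      rw [h0, map_zero] at h4
      rw [h4]
      have h3 : (MvPolynomial.aeval (fun s : Fin 6 × Fin 2 × Fin 2 => M s.1 s.2.1 s.2.2) :
          MvPolynomial (Fin 6 × Fin 2 × Fin 2) ℤ →ₐ[ℤ] ℂ).toRingHom.comp
          (MvPolynomial.aeval sub : MvPolynomial SL ℤ →ₐ[ℤ] _).toRingHom =
          (MvPolynomial.aeval (Sum.elim (fun s : Fin 6 × Fin 2 × Fin 2 => M s.1 s.2.1 s.2.2)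
            (fun c => (b (.inr c) : ℂ))) : MvPolynomial SL ℤ →ₐ[ℤ] _).toRingHom := by
        apply MvPolynomial.ringHom_ext
        · intro r; simp
        · rintro (i | i) <;> simp [sub]
      exact congrArg (fun φ => φ P) h3
    apply (mul_ne_zero hPM hne)
    apply MvPolynomial.funext
    intro y
    rw [map_mul, map_zero]
    by_cases hy : MvPolynomial.eval y PM = 0
    · rw [hy, zero_mul]
    · rw [ePM] at hy
      obtain ⟨γ, h, e, h1, h2, h3, h4, h5⟩ := hP' _ hy
      have := lower_vanish M hdet γ h e h1 h2 h3 h5 I hI m d hlt F hF hFI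
      have e2 : (fun c => (γ c).coeff 0) = y := by
        funext c; exact h4 c
      rw [e2] at this
      rw [this, mul_zero]
end lowerB

section upperA

/-- The bracket of two plane vectors. -/
def brk {A : Type*} [CommRing A] (p q : Fin 2 → A) : A := p 0 * q 1 - p 1 * q 0

def Dm {A : Type*} [CommRing A] (M : Fin 6 → Fin 2 → Fin 2 → A) (k i : Fin 6) (r : Fin 2) : Fin 2 → A :=
  fun c => M k r c - M i r c

def bb {A : Type*} [CommRing A] (M : Fin 6 → Fin 2 → Fin 2 → A) (i j k : Fin 6) (p q : Fin 2 → A) : A :=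
  brk p (Dm M k i 0) * brk q (Dm M k j 1) - brk p (Dm M k i 1) * brk q (Dm M k j 0)

/-- The two linear forms cutting out the line `y = x M_i`. -/
def lamU {A : Type*} [CommRing A] (M : Fin 6 → Fin 2 → Fin 2 → A) (i : Fin 6) (z : Fin 4 → A) :
    Fin 2 → A :=
  fun k => z (![2, 3] k) - z 0 * M i 0 k - z 1 * M i 1 k

/-- The quadric through three lines. -/
def quadQ {A : Type*} [CommRing A] (M : Fin 6 → Fin 2 → Fin 2 → A) (i j k : Fin 6) (z : Fin 4 → A) : A :=
  bb M i j k (lamU M i z) (lamU M j z)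

def ia : Fin 5 → Fin 6 := ![2, 4, 2, 3, 2]
def ib : Fin 5 → Fin 6 := ![3, 5, 4, 5, 5]
def ic : Fin 5 → Fin 6 := ![4, 2, 3, 2, 3]
def idd : Fin 5 → Fin 6 := ![5, 3, 5, 4, 4]

/-- Quartics through the six lines. -/
def qt {A : Type*} [CommRing A] (M : Fin 6 → Fin 2 → Fin 2 → A) (z : Fin 4 → A) (k : Fin 5) : A :=
  quadQ M 0 (ia k) (ib k) z * quadQ M 1 (ic k) (idd k) z

def uv {A : Type*} [CommRing A] (e : Fin 2) : Fin 2 → A := fun k => if k = e then 1 else 0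

def cc2 {A : Type*} [CommRing A] (M : Fin 6 → Fin 2 → Fin 2 → A) (k : Fin 5) (e f : Fin 2) : A :=
  bb M 0 (ia k) (ib k) (uv e) (Dm M 0 (ia k) f)

def cc3 {A : Type*} [CommRing A] (M : Fin 6 → Fin 2 → Fin 2 → A) (k : Fin 5) (f g : Fin 2) : A :=
  bb M 1 (ic k) (idd k) (Dm M 0 1 f) (Dm M 0 (ic k) g)

/-- Coefficients of the linear part of the quartics along the line `0`. -/
def ac {A : Type*} [CommRing A] (M : Fin 6 → Fin 2 → Fin 2 → A) (k : Fin 5) (e : Fin 2) : ℕ → A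
  | 0 => cc2 M k e 0 * cc3 M k 0 0
  | 1 => cc2 M k e 0 * (cc3 M k 0 1 + cc3 M k 1 0) + cc2 M k e 1 * cc3 M k 0 0
  | 2 => cc2 M k e 0 * cc3 M k 1 1 + cc2 M k e 1 * (cc3 M k 0 1 + cc3 M k 1 0)
  | 3 => cc2 M k e 1 * cc3 M k 1 1
  | _ => 0

def re : Fin 4 → Fin 2 := ![0, 0, 1, 1]
def rs (p : Fin 4) (q : Fin 3) : ℕ := 3 * (p.val % 2) + q.val

def tm {A : Type*} [CommRing A] (M : Fin 6 → Fin 2 → Fin 2 → A) (p : Fin 4) (q : Fin 3) (k : Fin 5)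
    (l : Fin 3) : A :=
  if l.val ≤ rs p q then ac M k (re p) (rs p q - l.val) else 0

def T0 {A : Type*} [CommRing A] (M : Fin 6 → Fin 2 → Fin 2 → A) : Matrix (Fin 4 × Fin 3) (Fin 4 × Fin 3) A :=
  fun r c => tm M r.1 r.2 c.1.castSucc c.2

def Tc {A : Type*} [CommRing A] (M : Fin 6 → Fin 2 → Fin 2 → A) (i : Fin 3) : Fin 4 × Fin 3 → A :=
  fun r => tm M r.1 r.2 4 i

def Nm {A : Type*} [CommRing A] (M : Fin 6 → Fin 2 → Fin 2 → A) (q : Fin 5 → A) : Matrix (Fin 3) (Fin 3) A :=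
  fun i l => (if l = i then (T0 M).det else 0) * q 4 -
    ∑ k : Fin 4, ((T0 M).adjugate.mulVec (Tc M i)) (k, l) * q k.castSucc

/-- The form of degree 12. -/
def Vf {A : Type*} [CommRing A] (M : Fin 6 → Fin 2 → Fin 2 → A) (z : Fin 4 → A) : A :=
  (Nm M (qt M z)).det

section functorial
variable {A B : Type*} [CommRing A] [CommRing B] (f : A →+* B) (M : Fin 6 → Fin 2 → Fin 2 → A)

theorem Dm_map (k i r) (c : Fin 2) : f (Dm M k i r c) = Dm (fun i r c => f (M i r c)) k i r c := by
  simp [Dm]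

theorem bb_map (i j k) (p q : Fin 2 → A) :
    f (bb M i j k p q) = bb (fun i r c => f (M i r c)) i j k (fun c => f (p c)) (fun c => f (q c)) := by
  simp [bb, brk, Dm_map]

theorem qt_map (z : Fin 4 → A) (k : Fin 5) :
    f (qt M z k) = qt (fun i r c => f (M i r c)) (fun c => f (z c)) k := by
  simp only [qt, map_mul, quadQ, bb_map]
  congr 2 <;> funext c <;> simp [lamU]

theorem cc2_map (k e g) : f (cc2 M k e g) = cc2 (fun i r c => f (M i r c)) k e g := by
  simp only [cc2, bb_map, Dm_map]
  congr 1
  funext c; simp only [uv]; split_ifs <;> simp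

theorem cc3_map (k e g) : f (cc3 M k e g) = cc3 (fun i r c => f (M i r c)) k e g := by
  simp only [cc3, bb_map, Dm_map]

theorem ac_map (k e) (n : ℕ) : f (ac M k e n) = ac (fun i r c => f (M i r c)) k e n := by
  rcases n with _ | _ | _ | _ | n <;> simp [ac, cc2_map, cc3_map]

theorem tm_map (p q k l) : f (tm M p q k l) = tm (fun i r c => f (M i r c)) p q k l := by
  simp only [tm]; split_ifs
  · exact ac_map f M _ _ _
  · simp

theorem T0_map : (T0 M).map f = T0 (fun i r c => f (M i r c)) := by
  ext r c; simp [T0, tm_map]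

theorem detT0_map : f (T0 M).det = (T0 (fun i r c => f (M i r c))).det := by
  rw [← T0_map, RingHom.map_det]; rfl

theorem adj_map (i : Fin 3) (s) : f (((T0 M).adjugate.mulVec (Tc M i)) s) =
    ((T0 (fun i r c => f (M i r c))).adjugate.mulVec (Tc (fun i r c => f (M i r c)) i)) s := by
  have h : (T0 M).adjugate.map f = (T0 (fun i r c => f (M i r c))).adjugate := by
    rw [← T0_map]; exact RingHom.map_adjugate f (T0 M)
  rw [RingHom.map_mulVec, h]
  congr 2
  funext r; simp [Tc, tm_map]

theorem Vf_map (z : Fin 4 → A) : f (Vf M z) = Vf (fun i r c => f (M i r c)) (fun c => f (z c)) := by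
  rw [Vf, RingHom.map_det]
  congr 1
  ext i l
  simp only [RingHom.mapMatrix_apply, Matrix.map_apply, Nm, map_sub, map_mul, map_sum, adj_map, qt_map]
  congr 2
  split_ifs
  · exact detT0_map f M
  · simp
end functorial
def invTab : List (List ℤ) :=
   [[512, -96, -64, 176, -232, 272, -288, 136, -8, -16, 44, -14],
    [192, 0, -64, 128, -128, 192, -128, 64, 0, 0, 32, 16],
    [-256, 32, 64, -112, 168, -144, 160, -72, 8, 16, -12, 30],
    [192, -64, 0, 32, -48, 64, -96, 48, -16, 0, 8, -4],
    [256, -32, -64, 112, -136, 176, -160, 72, -8, -16, 28, -6],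
    [0, 0, 0, 0, 0, 32, 0, 0, 0, 0, 0, 16],
    [-192, 64, 0, -32, 48, -64, 112, -48, 16, 0, -8, 4],
    [-128, 0, 64, -96, 112, -144, 96, -32, 0, 16, -24, 4],
    [0, 0, 0, 0, 0, -16, 0, 0, 0, 0, 0, -16],
    [-544, 96, 64, -176, 232, -272, 256, -136, 8, 16, -44, 14],
    [-832, 144, 96, -280, 340, -456, 496, -260, 36, 8, -70, -1],
    [512, -96, -64, 144, -248, 176, -288, 152, -24, -16, 20, -50]]

def solTab : List (List ℤ) :=
   [[-192, 0, 64, -128, -64, 0, 128, 0, 0, 192, 288, -192],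
    [-128, -128, 128, 0, -128, 0, 0, 128, 0, 128, 192, -128],
    [352, 256, -224, 64, 224, 0, -64, -192, 0, -352, -560, 288]]

def M00 : Fin 6 → Fin 2 → Fin 2 → ℤ :=
  ![![![0, 0], ![0, 0]], ![![1, 0], ![0, 1]], ![![0, 1], ![2, -1]], ![![0, -1], ![-2, -2]],
    ![![1, 0], ![0, 2]], ![![0, 1], ![2, 0]]]

def z00 : Fin 4 → ℤ := ![1, 1, -1, -1]

def Sf (r c : Fin 4 × Fin 3) : ℤ := (invTab.getD (3 * r.1 + r.2) []).getD (3 * c.1 + c.2) 0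
def vf (i : Fin 3) (r : Fin 4 × Fin 3) : ℤ := (solTab.getD i []).getD (3 * r.1 + r.2) 0

theorem chk_S : ∀ r c : Fin 4 × Fin 3, (∑ s, Sf r s * T0 M00 s c) = if r = c then 128 else 0 := by
  decide +kernel

theorem chk_v : ∀ (i : Fin 3) (r : Fin 4 × Fin 3), (∑ s, T0 M00 r s * vf i s) = 128 * Tc M00 i r := by
  decide +kernel

def Ntil : Fin 3 → Fin 3 → ℤ := fun i l => (if l = i then 128 else 0) * qt M00 z00 4 -
    ∑ k : Fin 4, vf i (k, l) * qt M00 z00 k.castSucc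

theorem chk_N : Ntil 0 0 * Ntil 1 1 * Ntil 2 2 - Ntil 0 0 * Ntil 1 2 * Ntil 2 1 -
    Ntil 0 1 * Ntil 1 0 * Ntil 2 2 + Ntil 0 1 * Ntil 1 2 * Ntil 2 0 +
    Ntil 0 2 * Ntil 1 0 * Ntil 2 1 - Ntil 0 2 * Ntil 1 1 * Ntil 2 0 ≠ 0 := by
  decide +kernel

theorem Vf_ne : Vf M00 z00 ≠ 0 := by
  have h1 : (Matrix.of Sf) * T0 M00 = (128 : ℤ) • (1 : Matrix (Fin 4 × Fin 3) (Fin 4 × Fin 3) ℤ) := by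
    ext r c
    rw [Matrix.mul_apply, Matrix.smul_apply, Matrix.one_apply]
    exact (chk_S r c).trans (by split_ifs <;> simp)
  have hdet : (T0 M00).det ≠ 0 := by
    intro h0
    have := congrArg Matrix.det h1
    rw [Matrix.det_mul, h0, mul_zero, Matrix.det_smul, Matrix.det_one, mul_one] at this
    exact pow_ne_zero _ (by norm_num) this.symm
  have h2 : ∀ i, (T0 M00).mulVec (vf i) = (128 : ℤ) • Tc M00 i := fun i => by
    funext r
    simp only [Matrix.mulVec, dotProduct, Pi.smul_apply, smul_eq_mul]
    exact chk_v i r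
  have h3 : ∀ i s, 128 * ((T0 M00).adjugate.mulVec (Tc M00 i)) s = (T0 M00).det * vf i s := fun i s => by
    have := congrArg (fun w => (T0 M00).adjugate.mulVec w s) (h2 i)
    simp only [Matrix.mulVec_mulVec, Matrix.adjugate_mul, Matrix.mulVec_smul, Matrix.smul_mulVec,
      Matrix.one_mulVec, Pi.smul_apply, smul_eq_mul] at this
    exact this.symm
  have h4 : (128 : ℤ) • Nm M00 (qt M00 z00) = (T0 M00).det • Matrix.of Ntil := by
    ext i l
    simp only [Matrix.smul_apply, Nm, Ntil, smul_eq_mul, Matrix.of_apply, mul_sub, Finset.mul_sum]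
    refine congrArg₂ (fun a b : ℤ => a - b) ?_ ?_
    · split_ifs <;> ring
    · apply Finset.sum_congr rfl
      intro k _
      rw [← mul_assoc, h3, mul_assoc]
  intro h0
  have h5 := congrArg Matrix.det h4
  rw [Matrix.det_smul, Matrix.det_smul, show (Nm M00 (qt M00 z00)).det = 0 from h0, mul_zero,
    Matrix.det_fin_three] at h5
  exact mul_ne_zero (pow_ne_zero _ hdet) chk_N h5.symm
end upperA

section upperB

section generic
variable {A : Type*} [CommRing A] (M : Fin 6 → Fin 2 → Fin 2 → A)

theorem bb_mem_left (I : Ideal A) (i j k : Fin 6) (p q : Fin 2 → A) (hp : ∀ c, p c ∈ I) :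
    bb M i j k p q ∈ I := by
  have : bb M i j k p q = (Dm M k i 0 1 * brk q (Dm M k j 1) - Dm M k i 1 1 * brk q (Dm M k j 0)) * p 0
      + (Dm M k i 1 0 * brk q (Dm M k j 0) - Dm M k i 0 0 * brk q (Dm M k j 1)) * p 1 := by
    simp only [bb, brk]; ring
  rw [this]
  exact I.add_mem (I.mul_mem_left _ (hp 0)) (I.mul_mem_left _ (hp 1))

theorem bb_mem_right (I : Ideal A) (i j k : Fin 6) (p q : Fin 2 → A) (hq : ∀ c, q c ∈ I) :
    bb M i j k p q ∈ I := by
  have : bb M i j k p q = (Dm M k j 1 1 * brk p (Dm M k i 0) - Dm M k j 0 1 * brk p (Dm M k i 1)) * q 0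
      + (Dm M k j 0 0 * brk p (Dm M k i 1) - Dm M k j 1 0 * brk p (Dm M k i 0)) * q 1 := by
    simp only [bb, brk]; ring
  rw [this]
  exact I.add_mem (I.mul_mem_left _ (hq 0)) (I.mul_mem_left _ (hq 1))

theorem bb_mem_sq (I : Ideal A) (i j k : Fin 6) (p q : Fin 2 → A) (hp : ∀ c, p c ∈ I) (hq : ∀ c, q c ∈ I) :
    bb M i j k p q ∈ I ^ 2 := by
  have hb : ∀ (p d : Fin 2 → A), (∀ c, p c ∈ I) → brk p d ∈ I := fun p d h =>
    I.sub_mem (I.mul_mem_right _ (h 0)) (I.mul_mem_right _ (h 1))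
  rw [pow_two]
  exact Ideal.sub_mem _ (Ideal.mul_mem_mul (hb _ _ hp) (hb _ _ hq)) (Ideal.mul_mem_mul (hb _ _ hp) (hb _ _ hq))

/-- The combination `x (M_a - M_b)`. -/
def xD (M : Fin 6 → Fin 2 → Fin 2 → A) (z : Fin 4 → A) (a b : Fin 6) : Fin 2 → A :=
  fun c => z 0 * Dm M a b 0 c + z 1 * Dm M a b 1 c

theorem lamU_shift (z : Fin 4 → A) (a b : Fin 6) (c : Fin 2) :
    lamU M b z c = lamU M a z c + xD M z a b c := by
  simp only [lamU, xD, Dm]; ring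

theorem bb_add_left (i j k : Fin 6) (p p' q : Fin 2 → A) :
    bb M i j k (fun c => p c + p' c) q = bb M i j k p q + bb M i j k p' q := by
  simp only [bb, brk]; ring

theorem bb_add_right (i j k : Fin 6) (p q q' : Fin 2 → A) :
    bb M i j k p (fun c => q c + q' c) = bb M i j k p q + bb M i j k p q' := by
  simp only [bb, brk]; ring

theorem quadQ_mem1 (I : Ideal A) (z : Fin 4 → A) (i j k : Fin 6) (h : ∀ c, lamU M i z c ∈ I) :
    quadQ M i j k z ∈ I := bb_mem_left M I _ _ _ _ _ h

theorem quadQ_mem2 (I : Ideal A) (z : Fin 4 → A) (i j k : Fin 6) (h : ∀ c, lamU M j z c ∈ I) :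
    quadQ M i j k z ∈ I := bb_mem_right M I _ _ _ _ _ h

theorem quadQ_mem3 (I : Ideal A) (z : Fin 4 → A) (i j k : Fin 6) (h : ∀ c, lamU M k z c ∈ I) :
    quadQ M i j k z ∈ I := by
  have h1 : lamU M i z = fun c => lamU M k z c + xD M z k i c := funext (lamU_shift M z k i)
  have h2 : lamU M j z = fun c => lamU M k z c + xD M z k j c := funext (lamU_shift M z k j)
  have h0 : bb M i j k (xD M z k i) (xD M z k j) = 0 := by
    simp only [bb, brk, xD]; ring
  rw [quadQ, h1, bb_add_left, h2, bb_add_right M i j k (xD M z k i), h0, add_zero]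
  exact I.add_mem (bb_mem_left M I _ _ _ _ _ h) (bb_mem_right M I _ _ _ _ _ h)

theorem idx_cover : ∀ (j : Fin 6) (k : Fin 5), j = 0 ∨ j = ia k ∨ j = ib k ∨ j = 1 ∨ j = ic k ∨ j = idd k := by
  decide

theorem qt_mem (I : Ideal A) (z : Fin 4 → A) (j : Fin 6) (h : ∀ c, lamU M j z c ∈ I) (k : Fin 5) :
    qt M z k ∈ I := by
  unfold qt
  rcases idx_cover j k with e | e | e | e | e | e <;> rw [e] at h
  · exact I.mul_mem_right _ (quadQ_mem1 M I z _ _ _ h)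
  · exact I.mul_mem_right _ (quadQ_mem2 M I z _ _ _ h)
  · exact I.mul_mem_right _ (quadQ_mem3 M I z _ _ _ h)
  · exact I.mul_mem_left _ (quadQ_mem1 M I z _ _ _ h)
  · exact I.mul_mem_left _ (quadQ_mem2 M I z _ _ _ h)
  · exact I.mul_mem_left _ (quadQ_mem3 M I z _ _ _ h)

theorem Nm_mem (J : Ideal A) (q : Fin 5 → A) (h : ∀ k, q k ∈ J) (i l : Fin 3) : Nm M q i l ∈ J :=
  J.sub_mem (J.mul_mem_left _ (h _)) (J.sum_mem fun _ _ => J.mul_mem_left _ (h _))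

theorem Nm_sub (q q' : Fin 5 → A) (i l : Fin 3) :
    Nm M q i l - Nm M q' i l = Nm M (fun k => q k - q' k) i l := by
  simp only [Nm, mul_sub, Finset.sum_sub_distrib]; ring

theorem mul3_mem (I : Ideal A) {a b c : A} (ha : a ∈ I) (hb : b ∈ I) (hc : c ∈ I) : a * b * c ∈ I ^ 3 := by
  rw [pow_succ, pow_two]; exact Ideal.mul_mem_mul (Ideal.mul_mem_mul ha hb) hc

theorem det3_mem (I : Ideal A) (N : Matrix (Fin 3) (Fin 3) A) (h : ∀ i l, N i l ∈ I) : N.det ∈ I ^ 3 := by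
  rw [Matrix.det_fin_three]
  have m := fun i j k l r s => mul3_mem I (h i j) (h k l) (h r s)
  exact Ideal.sub_mem _ (Ideal.add_mem _ (Ideal.add_mem _ (Ideal.sub_mem _ (Ideal.sub_mem _
    (m _ _ _ _ _ _) (m _ _ _ _ _ _)) (m _ _ _ _ _ _)) (m _ _ _ _ _ _)) (m _ _ _ _ _ _)) (m _ _ _ _ _ _)

theorem mul3_sub_mem (I : Ideal A) {a b c a' b' c' : A} (hb : b ∈ I) (hc : c ∈ I)
    (ha' : a' ∈ I) (hb' : b' ∈ I)
    (da : a - a' ∈ I ^ 2) (db : b - b' ∈ I ^ 2) (dc : c - c' ∈ I ^ 2) :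
    a * b * c - a' * b' * c' ∈ I ^ 4 := by
  have e : a * b * c - a' * b' * c' = (a - a') * (b * c) + (b - b') * (a' * c) + (c - c') * (a' * b') := by ring
  have e4 : I ^ 4 = I ^ 2 * (I * I) := by rw [← pow_two, ← pow_add]
  rw [e, e4]
  exact Ideal.add_mem _ (Ideal.add_mem _ (Ideal.mul_mem_mul da (Ideal.mul_mem_mul hb hc))
    (Ideal.mul_mem_mul db (Ideal.mul_mem_mul ha' hc))) (Ideal.mul_mem_mul dc (Ideal.mul_mem_mul ha' hb'))

theorem det3_sub_mem (I : Ideal A) (N N' : Matrix (Fin 3) (Fin 3) A) (h : ∀ i l, N i l ∈ I)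
    (h' : ∀ i l, N' i l ∈ I) (d : ∀ i l, N i l - N' i l ∈ I ^ 2) : N.det - N'.det ∈ I ^ 4 := by
  rw [Matrix.det_fin_three, Matrix.det_fin_three]
  have m := fun i j k l r s => mul3_sub_mem I (h k l) (h r s) (h' i j) (h' k l) (d i j) (d k l) (d r s)
  have := Ideal.sub_mem _ (Ideal.add_mem _ (Ideal.add_mem _ (Ideal.sub_mem _ (Ideal.sub_mem _
    (m 0 0 1 1 2 2) (m 0 0 1 2 2 1)) (m 0 1 1 0 2 2)) (m 0 1 1 2 2 0)) (m 0 2 1 0 2 1)) (m 0 2 1 1 2 0)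
  convert this using 1
  ring

/-- Linear part of the quartics along line `0`. -/
def qtL (M : Fin 6 → Fin 2 → Fin 2 → A) (z : Fin 4 → A) (k : Fin 5) : A :=
  bb M 0 (ia k) (ib k) (lamU M 0 z) (xD M z 0 (ia k)) * bb M 1 (ic k) (idd k) (xD M z 0 1) (xD M z 0 (ic k))

theorem qt_sub_qtL (I : Ideal A) (z : Fin 4 → A) (h : ∀ c, lamU M 0 z c ∈ I) (k : Fin 5) :
    qt M z k - qtL M z k ∈ I ^ 2 := by
  have h1 : lamU M (ia k) z = fun c => lamU M 0 z c + xD M z 0 (ia k) c := funext (lamU_shift M z _ _)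
  have h2 : lamU M (ic k) z = fun c => lamU M 0 z c + xD M z 0 (ic k) c := funext (lamU_shift M z _ _)
  have h3 : lamU M 1 z = fun c => lamU M 0 z c + xD M z 0 1 c := funext (lamU_shift M z _ _)
  rw [qt, qtL, quadQ, quadQ, h1, h2, h3, bb_add_right, bb_add_left, bb_add_right M _ _ _ (xD M z 0 1)]
  have e : ∀ a b c d f : A, (a + b) * (c + (d + f)) - b * f = a * (c + (d + f)) + b * (c + d) := by
    intros; ring
  rw [e]
  refine Ideal.add_mem _ (Ideal.mul_mem_right _ _ (bb_mem_sq M I _ _ _ _ _ h h)) ?_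
  rw [pow_two]
  exact Ideal.mul_mem_mul (bb_mem_left M I _ _ _ _ _ h)
    (Ideal.add_mem _ (bb_mem_left M I _ _ _ _ _ h) (bb_mem_right M I _ _ _ _ _ h))

theorem qtL_mem (I : Ideal A) (z : Fin 4 → A) (h : ∀ c, lamU M 0 z c ∈ I) (k : Fin 5) :
    qtL M z k ∈ I := Ideal.mul_mem_right _ _ (bb_mem_left M I _ _ _ _ _ h)

theorem qtL_expand (z : Fin 4 → A) (k : Fin 5) :
    qtL M z k = ∑ e : Fin 2, lamU M 0 z e * (ac M k e 0 * z 0 ^ 3 + ac M k e 1 * z 0 ^ 2 * z 1 +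
      ac M k e 2 * z 0 * z 1 ^ 2 + ac M k e 3 * z 1 ^ 3) := by
  have h1 : bb M 0 (ia k) (ib k) (lamU M 0 z) (xD M z 0 (ia k)) =
      ∑ e : Fin 2, lamU M 0 z e * (cc2 M k e 0 * z 0 + cc2 M k e 1 * z 1) := by
    simp only [Fin.sum_univ_two, cc2, bb, brk, xD, uv]
    generalize lamU M 0 z = u
    simp
    ring
  have h2 : bb M 1 (ic k) (idd k) (xD M z 0 1) (xD M z 0 (ic k)) =
      cc3 M k 0 0 * z 0 ^ 2 + (cc3 M k 0 1 + cc3 M k 1 0) * z 0 * z 1 + cc3 M k 1 1 * z 1 ^ 2 := by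
    simp only [cc3, bb, brk, xD]
    ring
  rw [qtL, h1, h2]
  simp only [Fin.sum_univ_two, ac]
  ring

def monR (M : Fin 6 → Fin 2 → Fin 2 → A) (z : Fin 4 → A) (r : Fin 4 × Fin 3) : A :=
  lamU M 0 z (re r.1) * (z 0 ^ (5 - rs r.1 r.2) * z 1 ^ rs r.1 r.2)

def monL (z : Fin 4 → A) (l : Fin 3) : A := z 0 ^ (2 - l.val) * z 1 ^ l.val

theorem qtL_mul (z : Fin 4 → A) (k : Fin 5) (l : Fin 3) :
    qtL M z k * monL z l = ∑ r : Fin 4 × Fin 3, monR M z r * tm M r.1 r.2 k l := by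
  rw [qtL_expand, Fintype.sum_prod_type]
  simp only [monR, tm, Fin.sum_univ_two, Fin.sum_univ_four, Fin.sum_univ_three, rs, re, monL]
  generalize lamU M 0 z = u
  fin_cases l <;> simp [ac] <;> ring

theorem Nm_qtL_mulVec (z : Fin 4 → A) : (Nm M (qtL M z)).mulVec (monL z) = 0 := by
  funext i
  have hw : ∀ r, ∑ c, T0 M r c * ((T0 M).adjugate.mulVec (Tc M i)) c = (T0 M).det * Tc M i r := by
    intro r
    have : (T0 M).mulVec ((T0 M).adjugate.mulVec (Tc M i)) = (T0 M).det • Tc M i := by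
      rw [Matrix.mulVec_mulVec, Matrix.mul_adjugate, Matrix.smul_mulVec, Matrix.one_mulVec]
    exact congrFun this r
  have e1 : (Nm M (qtL M z)).mulVec (monL z) i = (T0 M).det * (qtL M z 4 * monL z i) -
      ∑ c : Fin 4 × Fin 3, ((T0 M).adjugate.mulVec (Tc M i)) c * (qtL M z c.1.castSucc * monL z c.2) := by
    simp only [Matrix.mulVec, dotProduct, Nm, sub_mul, Finset.sum_sub_distrib]
    refine congrArg₂ (fun a b => a - b) ?_ ?_
    · rw [Finset.sum_eq_single i]
      · simp; ring
      · intro l _ hl; simp [hl]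
      · simp
    · rw [Fintype.sum_prod_type, Finset.sum_comm]
      refine Finset.sum_congr rfl fun l _ => ?_
      rw [Finset.sum_mul]
      exact Finset.sum_congr rfl fun k _ => by ring
  generalize (T0 M).adjugate.mulVec (Tc M i) = w at hw e1
  rw [e1, qtL_mul, Finset.mul_sum]
  simp only [qtL_mul, Finset.mul_sum]
  rw [Finset.sum_comm, ← Finset.sum_sub_distrib]
  apply Finset.sum_eq_zero
  intro r _
  have := hw r
  calc _ = monR M z r * ((T0 M).det * Tc M i r - ∑ c, T0 M r c * w c) := by
        rw [mul_sub, Finset.mul_sum]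
        refine congrArg₂ (fun a b => a - b) ?_ ?_
        · simp only [Tc]; ring
        · refine Finset.sum_congr rfl fun c _ => ?_
          simp only [T0]; ring
    _ = 0 := by rw [this]; ring

theorem Vf_mem3 (I : Ideal A) (z : Fin 4 → A) (j : Fin 6) (h : ∀ c, lamU M j z c ∈ I) : Vf M z ∈ I ^ 3 :=
  det3_mem I _ (Nm_mem M I _ (qt_mem M I z j h))

theorem Vf_mem4 [IsDomain A] (I : Ideal A) (z : Fin 4 → A) (hz : z 0 ≠ 0) (h : ∀ c, lamU M 0 z c ∈ I) :
    Vf M z ∈ I ^ 4 := by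
  have h0 : (Nm M (qtL M z)).det = 0 := by
    apply Matrix.exists_mulVec_eq_zero_iff.mp
    refine ⟨monL z, fun h => ?_, Nm_qtL_mulVec M z⟩
    have := congrFun h 0
    simp [monL] at this
    exact hz this
  have := det3_sub_mem I (Nm M (qt M z)) (Nm M (qtL M z)) (Nm_mem M I _ (qt_mem M I z 0 h))
    (Nm_mem M I _ (qtL_mem M I z h)) (fun i l => by
      rw [Nm_sub]; exact Nm_mem M _ _ (qt_sub_qtL M I z h) i l)
  rwa [h0, sub_zero] at this
end generic

theorem lamU_hom (m : Fin 6 → Fin 2 → Fin 2 → ℂ) (i : Fin 6) (c : Fin 2) :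
    (lamU (fun i r c => (MvPolynomial.C (m i r c) : R3)) i MvPolynomial.X c).IsHomogeneous 1 := by
  unfold lamU
  refine MvPolynomial.IsHomogeneous.sub (MvPolynomial.IsHomogeneous.sub (MvPolynomial.isHomogeneous_X _ _) ?_) ?_ <;>
  exact (MvPolynomial.isHomogeneous_X _ _).mul (MvPolynomial.isHomogeneous_C _ _)

theorem brk_hom (m : Fin 6 → Fin 2 → Fin 2 → ℂ) (p : Fin 2 → R3) (k i r) (n : ℕ) (hp : ∀ c, (p c).IsHomogeneous n) :
    (brk p (Dm (fun i r c => (MvPolynomial.C (m i r c) : R3)) k i r)).IsHomogeneous n := by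
  have : ∀ c, (Dm (fun i r c => (MvPolynomial.C (m i r c) : R3)) k i r c).IsHomogeneous 0 := fun c =>
    (MvPolynomial.isHomogeneous_C _ _).sub (MvPolynomial.isHomogeneous_C _ _)
  exact ((hp _).mul (this _)).sub ((hp _).mul (this _))

theorem quadQ_hom (m : Fin 6 → Fin 2 → Fin 2 → ℂ) (i j k) :
    (quadQ (fun i r c => (MvPolynomial.C (m i r c) : R3)) i j k MvPolynomial.X).IsHomogeneous 2 :=
  ((brk_hom m _ _ _ _ 1 (lamU_hom m i)).mul (brk_hom m _ _ _ _ 1 (lamU_hom m j))).sub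
    ((brk_hom m _ _ _ _ 1 (lamU_hom m i)).mul (brk_hom m _ _ _ _ 1 (lamU_hom m j)))

theorem Vf_hom (m : Fin 6 → Fin 2 → Fin 2 → ℂ) :
    (Vf (fun i r c => (MvPolynomial.C (m i r c) : R3)) MvPolynomial.X).IsHomogeneous 12 := by
  have hq : ∀ k, (qt (fun i r c => (MvPolynomial.C (m i r c) : R3)) MvPolynomial.X k).IsHomogeneous 4 :=
    fun k => (quadQ_hom m _ _ _).mul (quadQ_hom m _ _ _)
  have hN : ∀ i l, (Nm (fun i r c => (MvPolynomial.C (m i r c) : R3))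
      (qt (fun i r c => (MvPolynomial.C (m i r c) : R3)) MvPolynomial.X) i l).IsHomogeneous 4 := by
    intro i l
    unfold Nm
    rw [← detT0_map MvPolynomial.C m]
    refine MvPolynomial.IsHomogeneous.sub ?_ ?_
    · have : (if l = i then (MvPolynomial.C (T0 m).det : R3) else 0).IsHomogeneous 0 := by
        split_ifs
        · exact MvPolynomial.isHomogeneous_C _ _
        · exact MvPolynomial.isHomogeneous_zero _ _ _
      simpa using this.mul (hq 4)
    · refine MvPolynomial.IsHomogeneous.sum _ _ _ fun k _ => ?_
      rw [← adj_map MvPolynomial.C m]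
      simpa using (MvPolynomial.isHomogeneous_C _ _).mul (hq k.castSucc)
  rw [Vf, Matrix.det_fin_three]
  have hm := fun i j k l r s => ((hN i j).mul (hN k l)).mul (hN r s)
  exact (((((hm _ _ _ _ _ _).sub (hm _ _ _ _ _ _)).sub (hm _ _ _ _ _ _)).add (hm _ _ _ _ _ _)).add
    (hm _ _ _ _ _ _)).sub (hm _ _ _ _ _ _)

/-- The test polynomial guaranteeing that the `s`-th form of degree 12 is nonzero. -/
noncomputable def Ptest (s : Fin 6) : MvPolynomial (Fin 6 × Fin 2 × Fin 2) ℤ :=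
  Vf (fun i r c => MvPolynomial.X (Equiv.swap 0 s i, r, c)) (fun c => MvPolynomial.C (z00 c))

theorem Ptest_ne (s : Fin 6) : Ptest s ≠ 0 := by
  intro h
  have := congrArg (MvPolynomial.eval (fun t => M00 (Equiv.swap 0 s t.1) t.2.1 t.2.2)) h
  rw [Ptest, Vf_map] at this
  simp at this
  exact Vf_ne this

/-- The form of degree 12 distinguished by line `s`. -/
noncomputable def Es (m : Fin 6 → Fin 2 → Fin 2 → ℂ) (s : Fin 6) : R3 :=
  Vf (fun i r c => (MvPolynomial.C (m (Equiv.swap 0 s i) r c) : R3)) MvPolynomial.X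

theorem Es_ne (m : Fin 6 → Fin 2 → Fin 2 → ℂ) (s : Fin 6)
    (h : MvPolynomial.aeval (fun t => m t.1 t.2.1 t.2.2) (Ptest s) ≠ 0) : Es m s ≠ 0 := by
  intro h0
  apply h
  have := congrArg (MvPolynomial.eval (fun c => (z00 c : ℂ))) h0
  rw [Es, Vf_map] at this
  rw [← AlgHom.coe_toRingHom, Ptest, Vf_map]
  simp at this ⊢
  exact this

theorem upper_bound (m : Fin 6 → Fin 2 → Fin 2 → ℂ)
    (h : ∀ s, MvPolynomial.aeval (fun t => m t.1 t.2.1 t.2.2) (Ptest s) ≠ 0)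
    (I : Fin 6 → Ideal R3)
    (hI : ∀ i c, lamU (fun i r c => (MvPolynomial.C (m i r c) : R3)) i MvPolynomial.X c ∈ I i) :
    ∃ F : R3, F ≠ 0 ∧ F.IsHomogeneous 72 ∧ ∀ i, F ∈ I i ^ 19 := by
  refine ⟨∏ s, Es m s, Finset.prod_ne_zero_iff.mpr fun s _ => Es_ne m s (h s), ?_, fun i => ?_⟩
  · have := MvPolynomial.IsHomogeneous.prod Finset.univ (fun s => Es m s) (fun _ => 12)
      (fun s _ => Vf_hom (fun i => m (Equiv.swap 0 s i)))
    simpa using this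
  · have h4 : ∀ s, Es m s ∈ I i ^ (if s = i then 4 else 3) := by
      intro s
      split_ifs with e
      · subst e
        refine Vf_mem4 _ _ _ (MvPolynomial.X_ne_zero _) fun c => ?_
        have := hI s c
        simpa [lamU] using this
      · refine Vf_mem3 _ _ _ (Equiv.swap 0 s i) fun c => ?_
        have := hI i c
        simpa [lamU] using this
    have : ∏ s, Es m s ∈ ∏ s, I i ^ (if s = i then 4 else 3) := Ideal.prod_mem_prod fun s _ => h4 s
    rw [Finset.prod_pow_eq_pow_sum] at this
    convert this using 2
    clear this h4; revert i; decide
end upperB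

section assembly

theorem transfer {σ S : Type*} [CommRing S] (d : S) (n : σ → S) (P : MvPolynomial σ ℤ) :
    ∃ (Q : S) (N : ℕ), ∀ f : S →+* ℂ, f d ≠ 0 →
      f Q = f d ^ N * MvPolynomial.aeval (fun t => f (n t) / f d) P := by
  induction P using MvPolynomial.induction_on with
  | C a => exact ⟨(a : S), 0, fun f _ => by simp⟩
  | add p q hp hq =>
    obtain ⟨Q1, N1, h1⟩ := hp
    obtain ⟨Q2, N2, h2⟩ := hq
    refine ⟨Q1 * d ^ N2 + Q2 * d ^ N1, N1 + N2, fun f hf => ?_⟩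
    rw [map_add, map_mul, map_mul, map_pow, map_pow, h1 f hf, h2 f hf, map_add]
    ring
  | mul_X p t hp =>
    obtain ⟨Q1, N1, h1⟩ := hp
    refine ⟨Q1 * n t, N1 + 1, fun f hf => ?_⟩
    rw [map_mul, h1 f hf, map_mul, MvPolynomial.aeval_X]
    field_simp
    ring

theorem exists_aeval_ne {σ : Type*} (P : MvPolynomial σ ℤ) (hP : P ≠ 0) :
    ∃ x : σ → ℂ, MvPolynomial.aeval x P ≠ 0 := by
  by_contra! h
  apply hP
  apply MvPolynomial.map_injective (Int.castRingHom ℂ) Int.cast_injective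
  rw [map_zero]
  apply MvPolynomial.funext
  intro x
  rw [MvPolynomial.eval_map, map_zero]
  exact h x

/-- Determinant of the left block of the coordinate matrix of a line. -/
def dA {A : Type*} [CommRing A] (a b : Fin 4 → A) : A := a 0 * b 1 - a 1 * b 0

/-- Numerators of the matrix of the line in graph form. -/
def nA {A : Type*} [CommRing A] (a b : Fin 4 → A) (r c : Fin 2) : A :=
  if r = 0 then b 1 * a (![2, 3] c) - a 1 * b (![2, 3] c) else a 0 * b (![2, 3] c) - b 0 * a (![2, 3] c)

theorem mem_span_iff (a b : C4) (h : dA a b ≠ 0) (w : C4) :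
    w ∈ Submodule.span ℂ {a, b} ↔ ∀ c : Fin 2, w (![2, 3] c) =
      w 0 * (nA a b 0 c / dA a b) + w 1 * (nA a b 1 c / dA a b) := by
  have hd : a 0 * b 1 - a 1 * b 0 ≠ 0 := h
  have e1 : ∀ c, w 0 * (nA a b 0 c / dA a b) + w 1 * (nA a b 1 c / dA a b) =
      (w 0 * nA a b 0 c + w 1 * nA a b 1 c) / dA a b := fun c => by ring
  simp only [e1, eq_div_iff h]
  rw [Submodule.mem_span_pair]
  constructor
  · rintro ⟨s, t, rfl⟩ c
    simp only [nA, dA, Pi.add_apply, Pi.smul_apply, smul_eq_mul, if_true, one_ne_zero, if_false]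
    ring
  · intro hw
    refine ⟨(w 0 * b 1 - w 1 * b 0) / dA a b, (w 1 * a 0 - w 0 * a 1) / dA a b, ?_⟩
    have h2 := hw 0
    have h3 := hw 1
    simp [nA, dA] at h2 h3
    have e2 : ∀ x y p q : ℂ, x / dA a b * p + y / dA a b * q = (x * p + y * q) / dA a b := by
      intros; ring
    funext k
    simp only [Pi.add_apply, Pi.smul_apply, smul_eq_mul]
    rw [e2, div_eq_iff h]
    fin_cases k <;> simp [dA]
    · ring
    · ring
    · rw [h2]; ring
    · rw [h3]; ring

theorem indep_of_dA (a b : C4) (h : dA a b ≠ 0) : LinearIndependent ℂ ![a, b] := by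
  have hd : a 0 * b 1 - a 1 * b 0 ≠ 0 := h
  rw [LinearIndependent.pair_iff]
  intro s t hst
  have h0 := congrFun hst 0
  have h1 := congrFun hst 1
  simp at h0 h1
  constructor
  · have : s * (a 0 * b 1 - a 1 * b 0) = 0 := by linear_combination b 1 * h0 - b 0 * h1
    exact (mul_eq_zero.mp this).resolve_right hd
  · have : t * (a 0 * b 1 - a 1 * b 0) = 0 := by linear_combination a 0 * h1 - a 1 * h0
    exact (mul_eq_zero.mp this).resolve_right hd

/-- The determinant of the difference of two of the generic matrices. -/
noncomputable def detP (i j : Fin 6) : MvPolynomial (Fin 6 × Fin 2 × Fin 2) ℤ :=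
  (MvPolynomial.X (i, 0, 0) - MvPolynomial.X (j, 0, 0)) * (MvPolynomial.X (i, 1, 1) - MvPolynomial.X (j, 1, 1)) -
  (MvPolynomial.X (i, 0, 1) - MvPolynomial.X (j, 0, 1)) * (MvPolynomial.X (i, 1, 0) - MvPolynomial.X (j, 1, 0))

theorem detP_ne (i j : Fin 6) (h : i ≠ j) : detP i j ≠ 0 := by
  intro h0
  have := congrArg (MvPolynomial.eval (fun t : Fin 6 × Fin 2 × Fin 2 =>
    if t.1 = i ∧ t.2.1 = t.2.2 then (1 : ℤ) else 0)) h0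
  simp [detP, h.symm] at this

/-- All the genericity conditions on the matrices, in one polynomial. -/
theorem exists_generic : ∃ P : MvPolynomial (Fin 6 × Fin 2 × Fin 2) ℤ, P ≠ 0 ∧
    ∀ M : Fin 6 → Fin 2 → Fin 2 → ℂ, MvPolynomial.aeval (fun s => M s.1 s.2.1 s.2.2) P ≠ 0 →
    (∀ i j, i ≠ j → (M i 0 0 - M j 0 0) * (M i 1 1 - M j 1 1) - (M i 0 1 - M j 0 1) * (M i 1 0 - M j 1 0) ≠ 0) ∧
    ∀ I : Fin 6 → Ideal R3,
    (∀ i, ∀ G ∈ I i, ∀ x0 x1 : ℂ,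
      MvPolynomial.eval ![x0, x1, x0 * M i 0 0 + x1 * M i 1 0, x0 * M i 0 1 + x1 * M i 1 1] G = 0) →
    (∀ i c, lamU (fun i r c => (MvPolynomial.C (M i r c) : R3)) i MvPolynomial.X c ∈ I i) →
    (⨅ m : ℕ+, (alphaDeg (⨅ i, (I i) ^ (m : ℕ)) : ℝ) / (m : ℝ)) = 72 / 19 := by
  obtain ⟨PL, hPL, HL⟩ := lower_bound
  refine ⟨PL * (∏ s, Ptest s) * ∏ i, ∏ j, (if i = j then 1 else detP i j), ?_, ?_⟩
  · refine mul_ne_zero (mul_ne_zero hPL (Finset.prod_ne_zero_iff.mpr fun s _ => Ptest_ne s)) ?_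
    refine Finset.prod_ne_zero_iff.mpr fun i _ => Finset.prod_ne_zero_iff.mpr fun j _ => ?_
    split_ifs with e
    · exact one_ne_zero
    · exact detP_ne i j e
  intro M hM
  rw [map_mul, map_mul, map_prod, map_prod] at hM
  have hM3 := right_ne_zero_of_mul hM
  have hM2 := right_ne_zero_of_mul (left_ne_zero_of_mul hM)
  have hM1 := left_ne_zero_of_mul (left_ne_zero_of_mul hM)
  have hD : ∀ i j, i ≠ j → (M i 0 0 - M j 0 0) * (M i 1 1 - M j 1 1) -
      (M i 0 1 - M j 0 1) * (M i 1 0 - M j 1 0) ≠ 0 := by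
    intro i j e
    have h1 := Finset.prod_ne_zero_iff.mp hM3 i (Finset.mem_univ _)
    rw [map_prod] at h1
    have h2 := Finset.prod_ne_zero_iff.mp h1 j (Finset.mem_univ _)
    rw [if_neg e] at h2
    simpa [detP] using h2
  refine ⟨hD, fun I hI1 hI2 => ?_⟩
  obtain ⟨F, hF0, hFh, hFI⟩ := upper_bound M
    (fun s => Finset.prod_ne_zero_iff.mp hM2 s (Finset.mem_univ _)) I hI2
  apply le_antisymm
  · refine (ciInf_le ⟨0, ?_⟩ (19 : ℕ+)).trans ?_
    · rintro _ ⟨m, rfl⟩; positivity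
    · have : alphaDeg (⨅ i, (I i) ^ ((19 : ℕ+) : ℕ)) ≤ 72 :=
        Nat.sInf_le ⟨F, by rw [Submodule.mem_iInf]; exact hFI, hF0, hFh⟩
      have h72 : (alphaDeg (⨅ i, (I i) ^ ((19 : ℕ+) : ℕ)) : ℝ) ≤ 72 := by exact_mod_cast this
      have h19 : (((19 : ℕ+) : ℕ) : ℝ) = 19 := by norm_num
      rw [h19]
      gcongr
  · refine le_ciInf fun m => ?_
    have hne : {d | ∃ G ∈ (⨅ i, (I i) ^ (m : ℕ)), G ≠ 0 ∧ MvPolynomial.IsHomogeneous G d}.Nonempty := by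
      refine ⟨72 * m, F ^ (m : ℕ), ?_, pow_ne_zero _ hF0, hFh.pow _⟩
      rw [Submodule.mem_iInf]
      intro i
      have h1 : F ∈ I i := Ideal.pow_le_self (by norm_num) (hFI i)
      exact Ideal.pow_mem_pow h1 _
    obtain ⟨G, hG, hG0, hGh⟩ := Nat.sInf_mem hne
    rw [Submodule.mem_iInf] at hG
    have key := HL M hM1 hD I hI1 m _ G hGh hG hG0
    have key2 : (72 : ℝ) * (m : ℕ) ≤ 19 * (alphaDeg (⨅ i, (I i) ^ (m : ℕ)) : ℝ) := by exact_mod_cast key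
    have hm : (0 : ℝ) < ((m : ℕ) : ℝ) := by exact_mod_cast m.pos
    rw [div_le_div_iff₀ (by norm_num) hm]
    linarith

theorem main_general : GeneralLines 6 (fun L =>
      (⨅ m : ℕ+, (alphaDeg (⨅ i, (lineIdeal (L i)) ^ (m : ℕ)) : ℝ) / (m : ℝ)) = 72 / 19) := by
  obtain ⟨P, hP, HP⟩ := exists_generic
  -- generic coordinates
  let V : Fin 6 → Fin 2 → Fin 4 → MvPolynomial (Fin 6 × Fin 2 × Fin 4) ℂ :=
    fun i r c => MvPolynomial.X (i, r, c)
  let D : MvPolynomial (Fin 6 × Fin 2 × Fin 4) ℂ := ∏ i, dA (V i 0) (V i 1)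
  let n : Fin 6 × Fin 2 × Fin 2 → MvPolynomial (Fin 6 × Fin 2 × Fin 4) ℂ := fun t =>
    nA (V t.1 0) (V t.1 1) t.2.1 t.2.2 * ∏ j ∈ Finset.univ.erase t.1, dA (V j 0) (V j 1)
  obtain ⟨Q, N, hQ⟩ := transfer D n P
  have hdA : ∀ (v : Fin 6 → Fin 2 → C4) i, MvPolynomial.eval (fun p => v p.1 p.2.1 p.2.2) (dA (V i 0) (V i 1)) =
      dA (v i 0) (v i 1) := fun v i => by simp [dA, V]
  have hnA : ∀ (v : Fin 6 → Fin 2 → C4) i r c, MvPolynomial.eval (fun p => v p.1 p.2.1 p.2.2)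
      (nA (V i 0) (V i 1) r c) = nA (v i 0) (v i 1) r c := fun v i r c => by
    simp only [nA, V]; split_ifs <;> simp
  have hDv : ∀ (v : Fin 6 → Fin 2 → C4), MvPolynomial.eval (fun p => v p.1 p.2.1 p.2.2) D =
      ∏ i, dA (v i 0) (v i 1) := fun v => by simp only [D, map_prod, hdA]
  have hnv : ∀ (v : Fin 6 → Fin 2 → C4), (∏ i, dA (v i 0) (v i 1)) ≠ 0 → ∀ t : Fin 6 × Fin 2 × Fin 2,
      MvPolynomial.eval (fun p => v p.1 p.2.1 p.2.2) (n t) / MvPolynomial.eval (fun p => v p.1 p.2.1 p.2.2) D =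
      nA (v t.1 0) (v t.1 1) t.2.1 t.2.2 / dA (v t.1 0) (v t.1 1) := by
    intro v hv t
    rw [hDv]
    simp only [n, map_mul, map_prod, hdA, hnA]
    rw [← Finset.mul_prod_erase Finset.univ (fun i => dA (v i 0) (v i 1)) (Finset.mem_univ t.1)] at hv ⊢
    have h1 := left_ne_zero_of_mul hv
    have h2 := right_ne_zero_of_mul hv
    field_simp
  refine ⟨Q * D, ?_, ?_⟩
  · obtain ⟨x, hx⟩ := exists_aeval_ne P hP
    let v : Fin 6 → Fin 2 → C4 := fun i r =>
      ![if r = 0 then 1 else 0, if r = 0 then 0 else 1, x (i, r, 0), x (i, r, 1)]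
    have hd : ∀ i, dA (v i 0) (v i 1) = 1 := fun i => by simp [dA, v]
    have hDD : (∏ i, dA (v i 0) (v i 1)) = 1 := by simp [hd]
    intro h0
    have := congrArg (MvPolynomial.eval (fun p => v p.1 p.2.1 p.2.2)) h0
    rw [map_mul, hQ _ (by rw [hDv, hDD]; exact one_ne_zero), map_zero] at this
    simp only [hnv v (by rw [hDD]; exact one_ne_zero)] at this
    rw [hDv, hDD] at this
    simp only [hd, one_pow, one_mul, mul_one, div_one] at this
    apply hx
    rw [← this]
    congr 2
    funext ⟨i, r, c⟩
    fin_cases r <;> fin_cases c <;> simp [nA, v]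
  · intro v hv
    rw [map_mul] at hv
    have hD0 := right_ne_zero_of_mul hv
    have hQ0 := left_ne_zero_of_mul hv
    rw [hQ _ hD0] at hQ0
    have hP0 := right_ne_zero_of_mul hQ0
    rw [hDv] at hD0
    simp only [hnv v hD0] at hP0
    have hd : ∀ i, dA (v i 0) (v i 1) ≠ 0 := fun i => Finset.prod_ne_zero_iff.mp hD0 i (Finset.mem_univ _)
    obtain ⟨hdet, hmain⟩ := HP (fun i r c => nA (v i 0) (v i 1) r c / dA (v i 0) (v i 1)) hP0
    refine ⟨fun i => indep_of_dA _ _ (hd i), ?_, ?_⟩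
    · intro i j hij
      rw [Submodule.eq_bot_iff]
      rintro w ⟨hw1, hw2⟩
      have h1 := (mem_span_iff _ _ (hd i) w).mp hw1
      have h2 := (mem_span_iff _ _ (hd j) w).mp hw2
      have hdd := hdet i j hij
      have a0 := h1 0
      have a1 := h1 1
      have b0 := h2 0
      have b1 := h2 1
      rw [b0] at a0
      rw [b1] at a1
      have w0 : w 0 = 0 := by
        refine (mul_eq_zero.mp ?_).resolve_right hdd
        linear_combination -(nA (v i 0) (v i 1) 1 1 / dA (v i 0) (v i 1) - nA (v j 0) (v j 1) 1 1 / dA (v j 0) (v j 1)) * a0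
          + (nA (v i 0) (v i 1) 1 0 / dA (v i 0) (v i 1) - nA (v j 0) (v j 1) 1 0 / dA (v j 0) (v j 1)) * a1
      have w1 : w 1 = 0 := by
        refine (mul_eq_zero.mp ?_).resolve_right hdd
        linear_combination -(nA (v i 0) (v i 1) 0 0 / dA (v i 0) (v i 1) - nA (v j 0) (v j 1) 0 0 / dA (v j 0) (v j 1)) * a1
          + (nA (v i 0) (v i 1) 0 1 / dA (v i 0) (v i 1) - nA (v j 0) (v j 1) 0 1 / dA (v j 0) (v j 1)) * a0
      rw [w0, w1] at b0 b1
      simp at b0 b1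
      funext k
      fin_cases k
      · exact w0
      · exact w1
      · exact b0
      · exact b1
    · refine hmain (fun i => lineIdeal (Submodule.span ℂ {v i 0, v i 1})) ?_ ?_
      · intro i G hG x0 x1
        refine hG _ ((mem_span_iff _ _ (hd i) _).mpr fun c => ?_)
        fin_cases c <;> simp
      · intro i c w hw
        have := (mem_span_iff _ _ (hd i) w).mp hw c
        simp only [lamU, map_sub, map_mul, MvPolynomial.eval_X, MvPolynomial.eval_C]
        rw [this]; ring
end assembly

/-- For six general lines in `P^3`, the Waldschmidt constant of the ideal of
their union is `72/19`: writing `I^{(m)} = ⋂ᵢ I(Lᵢ)^m`,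
`inf_{m ≥ 1} α(I^{(m)})/m = 72/19`. -/
theorem stmt_15 :
    GeneralLines 6 (fun L =>
      (⨅ m : ℕ+, (alphaDeg (⨅ i, (lineIdeal (L i)) ^ (m : ℕ)) : ℝ) / (m : ℝ)) =
        72 / 19) := by
  exact main_general
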